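/- arXiv:1210.4489 — 2 statements merged into one kernel-verified Lean document; each statement's English description precedes it below -/
import Mathlib

section
/- Let r be a positive integer, p an odd prime, and λ ∈ ℤ_p such that F_r(λ)_{(p−1)/2} is a p-adic unit. Then there exists a p-adic unit α ∈ ℤ_p such that: for every odd positive integer m, every natural number d satisfying v_p(F_r(λ)_{(mp^t−1)/2}) ≤ d for all integers t ≥ 0, and every integer s ≥ 1, the quotient F_r(λ)_{(mp^s−1)/2} / F_r(λ)_{(mp^{s−1}−1)/2}, taken in ℚ_p, differs from α by an element of p-adic valuation at least s − d. -/
open Finset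

/-- Truncated hypergeometric sum `F_r(λ)_n = ∑_{k=0}^n ((1/2)_k/k!)^r λ^k`,
with `(1/2)_k/k! = C(2k,k)/4^k`, viewed in `ℚ_p`. -/
noncomputable def truncF (p : ℕ) [Fact p.Prime] (r : ℕ) (lam : ℤ_[p]) (n : ℕ) : ℚ_[p] :=
  ∑ k ∈ range (n + 1), ((Nat.choose (2 * k) k : ℚ_[p]) / 4 ^ k) ^ r * (lam : ℚ_[p]) ^ k

namespace PadicInt

variable {p : ℕ} [Fact p.Prime]

theorem pow_dvd_iff_toZModPow_eq_zero (n : ℕ) (x : ℤ_[p]) :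
    (p : ℤ_[p]) ^ n ∣ x ↔ toZModPow n x = 0 := by
  rw [← RingHom.mem_ker, ker_toZModPow, Ideal.mem_span_singleton]

theorem pow_dvd_iff_norm_le (n : ℕ) (x : ℤ_[p]) :
    (p : ℤ_[p]) ^ n ∣ x ↔ ‖x‖ ≤ (p : ℝ) ^ (-(n : ℤ)) := by
  rw [norm_le_pow_iff_mem_span_pow, Ideal.mem_span_singleton]

theorem eq_of_forall_pow_dvd_sub {x y : ℤ_[p]} (h : ∀ n : ℕ, (p : ℤ_[p]) ^ n ∣ x - y) : x = y := by
  refine ext_of_toZModPow.1 fun n => ?_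
  rw [← sub_eq_zero, ← map_sub, ← pow_dvd_iff_toZModPow_eq_zero]
  exact h n

theorem isUnit_iff_not_dvd {x : ℤ_[p]} : IsUnit x ↔ ¬ (p : ℤ_[p]) ∣ x := by
  rw [← norm_lt_one_iff_dvd, ← not_isUnit_iff, not_not]

theorem natCast_dvd_natCast {n : ℕ} : (p : ℤ_[p]) ∣ n ↔ p ∣ n := by
  rw [← norm_lt_one_iff_dvd]
  simp

theorem isUnit_congr {x y : ℤ_[p]} (h : (p : ℤ_[p]) ∣ x - y) : IsUnit x ↔ IsUnit y := by
  rw [isUnit_iff_not_dvd, isUnit_iff_not_dvd, not_iff_not]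
  exact ⟨fun hx => by simpa using dvd_sub hx h, fun hy => by simpa using dvd_add h hy⟩

/-- A sequence of `p`-adic integers whose consecutive differences are divisible by `p ^ n`
converges. -/
theorem exists_forall_pow_dvd_sub {f : ℕ → ℤ_[p]}
    (hf : ∀ n, (p : ℤ_[p]) ^ n ∣ f (n + 1) - f n) :
    ∃ L, ∀ n, (p : ℤ_[p]) ^ n ∣ L - f n := by
  have hmono : ∀ m k, (p : ℤ_[p]) ^ m ∣ f (m + k) - f m := by
    intro m k
    induction k with
    | zero => simp
    | succ k ih =>
      have h := (pow_dvd_pow (p : ℤ_[p]) (Nat.le_add_right m k)).trans (hf (m + k))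
      simpa [add_assoc] using dvd_add h ih
  obtain ⟨L, hL⟩ := IsPrecomplete.prec
    (inferInstance : IsPrecomplete (IsLocalRing.maximalIdeal ℤ_[p]) ℤ_[p]) (f := f) (by
      intro m n hmn
      obtain ⟨k, rfl⟩ := Nat.exists_eq_add_of_le hmn
      rw [SModEq.sub_mem, maximalIdeal_eq_span_p, Ideal.span_singleton_pow, smul_eq_mul,
        Ideal.mul_top, Ideal.mem_span_singleton, dvd_sub_comm]
      exact hmono m k)
  refine ⟨L, fun n => ?_⟩
  have h := hL n
  rwa [SModEq.sub_mem, maximalIdeal_eq_span_p, Ideal.span_singleton_pow, smul_eq_mul,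
    Ideal.mul_top, Ideal.mem_span_singleton, dvd_sub_comm] at h

/-- An operator that has rank one modulo `p`, with unit eigenvalue there, has a linear
eigenfunctional whose eigenvalue is a `p`-adic unit. -/
theorem exists_eigenfunctional {W : Type*} [AddCommGroup W] [Module ℤ_[p] W]
    (T : W →ₗ[ℤ_[p]] W) (e : W) (c : W →ₗ[ℤ_[p]] ℤ_[p]) (hce : c e = 1)
    (hT : ∀ q, ∃ w, T q = c (T q) • e + (p : ℤ_[p]) • w) (hu : IsUnit (c (T e))) :
    ∃ (l : W →ₗ[ℤ_[p]] ℤ_[p]) (α : ℤ_[p]), IsUnit α ∧ l e = 1 ∧ ∀ q, l (T q) = α * l q := by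
  have hcongr : ∀ l : W →ₗ[ℤ_[p]] ℤ_[p], l e = 1 → IsUnit (l (T e)) := by
    intro l hl
    obtain ⟨w, hw⟩ := hT e
    refine (isUnit_congr ⟨l w, ?_⟩).2 hu
    rw [hw, map_add, map_smul, map_smul, hl, map_add, map_smul, map_smul, hce]
    have h := congrArg c hw
    rw [map_add, map_smul, map_smul, hce] at h
    simp only [smul_eq_mul] at h ⊢
    linear_combination h
  let L : ℕ → W →ₗ[ℤ_[p]] ℤ_[p] := fun n =>
    Nat.rec c (fun _ l => Ring.inverse (l (T e)) • l ∘ₗ T) n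
  have hL0 : L 0 = c := rfl
  have hLs : ∀ n q, L (n + 1) q = Ring.inverse (L n (T e)) * L n (T q) := fun _ _ => rfl
  have hLe : ∀ n, L n e = 1 := by
    intro n
    induction n with
    | zero => exact hce
    | succ n ih => rw [hLs, Ring.inverse_mul_cancel _ (hcongr _ ih)]
  have hLT : ∀ n q, L n (T e) * L (n + 1) q = L n (T q) := by
    intro n q
    rw [hLs, ← mul_assoc, Ring.mul_inverse_cancel _ (hcongr _ (hLe n)), one_mul]
  have hLd : ∀ n q, (p : ℤ_[p]) ^ n ∣ L (n + 1) q - L n q := by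
    intro n
    induction n with
    | zero => simp
    | succ n ih =>
      have hd : ∀ q, (p : ℤ_[p]) ^ (n + 1) ∣ L (n + 1) (T q) - L n (T q) := by
        intro q
        obtain ⟨w, hw⟩ := hT q
        obtain ⟨z, hz⟩ := ih w
        refine ⟨z, ?_⟩
        rw [hw]
        simp only [map_add, map_smul, hLe, smul_eq_mul]
        linear_combination (p : ℤ_[p]) * hz
      intro q
      rw [← (hcongr _ (hLe n)).dvd_mul_left]
      have h : L n (T e) * (L (n + 1 + 1) q - L (n + 1) q) =
          (L (n + 1) (T q) - L n (T q)) - (L (n + 1) (T e) - L n (T e)) * L (n + 1 + 1) q := by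
        rw [← hLT n q, ← hLT (n + 1) q]
        ring
      rw [h]
      exact dvd_sub (hd q) ((hd e).mul_right _)
  choose l hl using fun q => exists_forall_pow_dvd_sub (fun n => hLd n q)
  refine ⟨{ toFun := l, map_add' := fun x y => ?_, map_smul' := fun a x => ?_ },
    l (T e), ?_, ?_, fun q => ?_⟩
  · refine eq_of_forall_pow_dvd_sub fun n => ?_
    have h := dvd_sub (hl (x + y) n) (dvd_add (hl x n) (hl y n))
    rw [map_add] at h
    convert h using 1
    ring
  · refine eq_of_forall_pow_dvd_sub fun n => ?_
    have h := dvd_sub (hl (a • x) n) ((hl x n).mul_left a)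
    rw [map_smul] at h
    convert h using 1
    simp only [smul_eq_mul, RingHom.id_apply]
    ring
  · exact (isUnit_congr (by simpa using hl (T e) 1)).2 (hcongr _ (hLe 1))
  · refine eq_of_forall_pow_dvd_sub fun n => ?_
    have h := hl e n
    rwa [hLe] at h
  · refine eq_of_forall_pow_dvd_sub fun n => ?_
    have h1 := hl (T q) n
    have h2 := (hl (T e) n).mul_right (L (n + 1) q)
    have h3 := ((pow_dvd_pow (p : ℤ_[p]) n.le_succ).trans (hl q (n + 1))).mul_left (l (T e))
    have h := dvd_sub (dvd_sub h1 h2) h3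
    rw [← hLT n q] at h
    convert h using 1
    simp only [LinearMap.coe_mk, AddHom.coe_mk]
    ring

end PadicInt

namespace ZMod

theorem prod_range_natCast {M : Type*} [CommMonoid M] (n : ℕ) [NeZero n] (f : ZMod n → M) :
    ∏ i ∈ range n, f (i : ZMod n) = ∏ x, f x := by
  refine prod_bij' (fun i _ => (i : ZMod n)) (fun x _ => x.val) ?_ ?_ ?_ ?_ ?_
  · simp
  · exact fun x _ => mem_range.2 x.val_lt
  · exact fun i hi => val_cast_of_lt (mem_range.1 hi)
  · simp
  · simp

theorem prod_range_natCast_two_mul_add {M : Type*} [CommMonoid M] (n : ℕ) [NeZero n] (hn : Odd n)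
    (f : ZMod n → M) (c : ℕ) :
    ∏ i ∈ range n, f ((2 * i + c : ℕ) : ZMod n) = ∏ x, f x := by
  have h2 : IsUnit (2 : ZMod n) := by
    simpa using (isUnit_iff_coprime 2 n).2 (Nat.coprime_two_left.2 hn)
  have h := prod_range_natCast n fun x => f (2 * x + c)
  push_cast
  rw [h]
  exact Equiv.prod_comp ((Units.mulLeft h2.unit).trans (Equiv.addRight (c : ZMod n))) f

end ZMod

namespace PadicInt

variable {p : ℕ} [Fact p.Prime]

variable (p) in
/-- The natural number `x` if it is prime to `p`, and `1` otherwise. -/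
noncomputable def coprimeOrOne (x : ℕ) : ℤ_[p] :=
  if p ∣ x then 1 else x

theorem isUnit_coprimeOrOne (x : ℕ) : IsUnit (coprimeOrOne p x) := by
  unfold coprimeOrOne
  split_ifs with h
  · exact isUnit_one
  · rwa [isUnit_iff_not_dvd, natCast_dvd_natCast]

theorem pow_dvd_prod_coprimeOrOne_sub (hp : Odd p) (t a b : ℕ) :
    (p : ℤ_[p]) ^ t ∣ ∏ i ∈ range (p ^ t), coprimeOrOne p (2 * i + a) -
      ∏ i ∈ range (p ^ t), coprimeOrOne p (2 * i + b) := by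
  classical
  rcases Nat.eq_zero_or_pos t with rfl | ht
  · simp
  have hx : ∀ x : ℕ, toZModPow t (coprimeOrOne p x) =
      if IsUnit (x : ZMod (p ^ t)) then (x : ZMod (p ^ t)) else 1 := by
    intro x
    have h : IsUnit (x : ZMod (p ^ t)) ↔ ¬ p ∣ x := by
      rw [ZMod.isUnit_iff_coprime, Nat.coprime_pow_right_iff ht, Nat.coprime_comm,
        (Fact.out : p.Prime).coprime_iff_not_dvd]
    simp only [h, coprimeOrOne]
    split_ifs <;> simp_all
  have hc : ∀ c, ∏ i ∈ range (p ^ t), toZModPow t (coprimeOrOne p (2 * i + c)) =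
      ∏ x : ZMod (p ^ t), if IsUnit x then x else 1 := by
    intro c
    simp only [hx]
    exact ZMod.prod_range_natCast_two_mul_add (p ^ t) hp.pow
      (fun x => if IsUnit x then x else 1) c
  rw [pow_dvd_iff_toZModPow_eq_zero, map_sub, map_prod, map_prod, hc, hc, sub_self]

variable (p) in
/-- The part of `(1/2)_n / n!` prime to `p`: the product of `(2 * i + 1) / (2 * i + 2)` over
`i < n`, with the factors divisible by `p` left out of the numerator and the denominator. -/
noncomputable def coprimeRatio (n : ℕ) : ℤ_[p] :=
  (∏ i ∈ range n, coprimeOrOne p (2 * i + 1)) *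
    Ring.inverse (∏ i ∈ range n, coprimeOrOne p (2 * i + 2))

theorem isUnit_prod_coprimeOrOne (s : Finset ℕ) (f : ℕ → ℕ) :
    IsUnit (∏ i ∈ s, coprimeOrOne p (f i)) := by
  simp [isUnit_coprimeOrOne]

theorem coprimeRatio_mul_prod (n : ℕ) :
    coprimeRatio p n * ∏ i ∈ range n, coprimeOrOne p (2 * i + 2) =
      ∏ i ∈ range n, coprimeOrOne p (2 * i + 1) := by
  rw [coprimeRatio, mul_assoc, Ring.inverse_mul_cancel _ (isUnit_prod_coprimeOrOne _ _), mul_one]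

theorem coprimeRatio_zero : coprimeRatio p 0 = 1 := by
  simp [coprimeRatio]

theorem coprimeOrOne_mul_coprimeRatio_succ (n : ℕ) :
    coprimeOrOne p (2 * n + 2) * coprimeRatio p (n + 1) =
      coprimeOrOne p (2 * n + 1) * coprimeRatio p n := by
  have h := coprimeRatio_mul_prod (p := p) (n + 1)
  rw [prod_range_succ, prod_range_succ, ← coprimeRatio_mul_prod n] at h
  refine (isUnit_prod_coprimeOrOne (p := p) (range n) fun i => 2 * i + 2).mul_right_cancel ?_
  linear_combination h

theorem pow_dvd_coprimeRatio_add_sub (hp : Odd p) (t n : ℕ) :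
    (p : ℤ_[p]) ^ t ∣ coprimeRatio p (n + p ^ t) - coprimeRatio p n := by
  have h := coprimeRatio_mul_prod (p := p) (n + p ^ t)
  rw [prod_range_add, prod_range_add, ← coprimeRatio_mul_prod n] at h
  have hd := pow_dvd_prod_coprimeOrOne_sub (p := p) hp t (2 * n + 1) (2 * n + 2)
  have e : ∀ i c, 2 * (n + i) + c = 2 * i + (2 * n + c) := fun i c => by ring
  simp only [e] at h
  rw [← (isUnit_prod_coprimeOrOne (p := p) (range n) fun i => 2 * i + 2).dvd_mul_left,
    ← (isUnit_prod_coprimeOrOne (p := p) (range (p ^ t)) fun i => 2 * i + (2 * n + 2)).dvd_mul_left]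
  refine (hd.mul_left
    (coprimeRatio p n * ∏ i ∈ range n, coprimeOrOne p (2 * i + 2))).trans (dvd_of_eq ?_)
  linear_combination -h

variable (p) in
/-- The algebra of sequences of `p`-adic integers that preserve congruences modulo all powers
of `p`, that is, that are `1`-Lipschitz for the `p`-adic metric. -/
noncomputable def congrSubalgebra : Subalgebra ℤ_[p] (ℕ → ℤ_[p]) where
  carrier := {q | ∀ t m n, m ≡ n [MOD p ^ t] → (p : ℤ_[p]) ^ t ∣ q m - q n}
  mul_mem' := by
    intro a b ha hb t m n h
    have := dvd_add ((ha t m n h).mul_right (b m)) ((hb t m n h).mul_left (a n))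
    convert this using 1
    simp only [Pi.mul_apply]
    ring
  add_mem' := by
    intro a b ha hb t m n h
    have := dvd_add (ha t m n h) (hb t m n h)
    convert this using 1
    simp only [Pi.add_apply]
    ring
  algebraMap_mem' := by
    intro a t m n _
    simp

/-- It is enough to compare terms whose indices have the same remainder modulo `p`. -/
theorem mem_congrSubalgebra_of_forall {q : ℕ → ℤ_[p]}
    (h : ∀ t, ∀ j < p, ∀ m n, m ≡ n [MOD p ^ t] →
      (p : ℤ_[p]) ^ (t + 1) ∣ q (p * m + j) - q (p * n + j)) : q ∈ congrSubalgebra p := by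
  rintro (_ | t) m n hmn
  · simp
  have hp : 0 < p := (Fact.out : p.Prime).pos
  have hmod : m % p = n % p := Nat.ModEq.of_dvd (dvd_pow_self p t.succ_ne_zero) hmn
  rw [← Nat.div_add_mod m p, ← Nat.div_add_mod n p, hmod]
  refine h t _ (Nat.mod_lt _ hp) _ _ ?_
  rw [← Nat.div_add_mod m p, ← Nat.div_add_mod n p, hmod, pow_succ'] at hmn
  exact Nat.ModEq.mul_left_cancel' hp.ne' (Nat.ModEq.add_right_cancel' _ hmn)

theorem coprimeRatio_mem (hp : Odd p) : coprimeRatio p ∈ congrSubalgebra p := by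
  have hadd : ∀ t n k, (p : ℤ_[p]) ^ t ∣ coprimeRatio p (n + p ^ t * k) - coprimeRatio p n := by
    intro t n k
    induction k with
    | zero => simp
    | succ k ih =>
      have h := dvd_add (pow_dvd_coprimeRatio_add_sub hp t (n + p ^ t * k)) ih
      simpa [mul_add, add_assoc] using h
  have hle : ∀ t m n, m ≤ n → m ≡ n [MOD p ^ t] →
      (p : ℤ_[p]) ^ t ∣ coprimeRatio p n - coprimeRatio p m := by
    intro t m n hmn h
    obtain ⟨k, hk⟩ := (Nat.modEq_iff_dvd' hmn).1 h
    obtain rfl : n = m + p ^ t * k := by omega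
    exact hadd t m k
  intro t m n h
  rcases le_total m n with hmn | hmn
  · rw [dvd_sub_comm]
    exact hle t m n hmn h
  · exact hle t n m hmn h.symm

variable (p) in
/-- The factor `p * (2 * k + 1)` contributed by the multiples of `p` to `(1/2)_n / n!`, where
`n = p * k + j`, if `(p - 1) / 2 < j < p`; and `1` if `j ≤ (p - 1) / 2`. -/
noncomputable def multipleFactor (n : ℕ) : ℤ_[p] :=
  if p / 2 < n % p then p * (2 * (n / p : ℕ) + 1) else 1

theorem multipleFactor_mul_add {j : ℕ} (hj : j < p) (k : ℕ) :
    multipleFactor p (p * k + j) = if p / 2 < j then (p : ℤ_[p]) * (2 * k + 1) else 1 := by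
  have hp : 0 < p := (Fact.out : p.Prime).pos
  rw [multipleFactor, Nat.mul_add_mod, Nat.mod_eq_of_lt hj, Nat.mul_add_div hp,
    Nat.div_eq_of_lt hj, add_zero]

theorem pow_dvd_natCast_sub {t m n : ℕ} (h : m ≡ n [MOD p ^ t]) :
    (p : ℤ_[p]) ^ t ∣ (m : ℤ_[p]) - n := by
  have h1 := (Nat.modEq_iff_dvd.1 h.symm)
  have h2 := (Int.castRingHom ℤ_[p]).map_dvd h1
  simpa using h2

theorem multipleFactor_mem : multipleFactor p ∈ congrSubalgebra p := by
  refine mem_congrSubalgebra_of_forall fun t j hj m n hmn => ?_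
  rw [multipleFactor_mul_add hj, multipleFactor_mul_add hj]
  split_ifs
  · obtain ⟨z, hz⟩ := pow_dvd_natCast_sub hmn
    exact ⟨2 * z, by linear_combination 2 * (p : ℤ_[p]) * hz⟩
  · simp

theorem dvd_pow_pred_sub_one {x : ℤ_[p]} (hx : IsUnit x) : (p : ℤ_[p]) ∣ x ^ (p - 1) - 1 := by
  have h : toZMod (x ^ (p - 1) - 1) = 0 := by
    rw [map_sub, map_pow, map_one, ZMod.pow_card_sub_one_eq_one (hx.map toZMod).ne_zero, sub_self]
  rwa [← RingHom.mem_ker, ker_toZMod, maximalIdeal_eq_span_p, Ideal.mem_span_singleton] at h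

theorem pow_sub_div_mem {x : ℤ_[p]} (hx : IsUnit x) :
    (fun n => x ^ (n - n / p)) ∈ congrSubalgebra p := by
  have hp : 0 < p := (Fact.out : p.Prime).pos
  have hle : ∀ t m n, m ≤ n → m ≡ n [MOD p ^ t] →
      (p : ℤ_[p]) ^ (t + 1) ∣ (x ^ (p - 1)) ^ n - (x ^ (p - 1)) ^ m := by
    intro t m n hmn h
    obtain ⟨k, hk⟩ := (Nat.modEq_iff_dvd' hmn).1 h
    obtain rfl : n = m + p ^ t * k := by omega
    have h1 := dvd_sub_pow_of_dvd_sub (dvd_pow_pred_sub_one hx) t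
    have h2 := sub_dvd_pow_sub_pow ((x ^ (p - 1)) ^ p ^ t) 1 k
    rw [one_pow] at h1 h2
    rw [pow_add (x ^ (p - 1)), pow_mul _ (p ^ t), ← mul_sub_one]
    exact (h1.trans h2).mul_left _
  refine mem_congrSubalgebra_of_forall fun t j hj m n hmn => ?_
  have e : ∀ k, x ^ (p * k + j - (p * k + j) / p) = (x ^ (p - 1)) ^ k * x ^ j := by
    intro k
    rw [Nat.mul_add_div hp, Nat.div_eq_of_lt hj, add_zero, ← pow_mul, ← pow_add]
    congr 1
    obtain ⟨s, rfl⟩ : ∃ s, p = s + 1 := ⟨p - 1, by omega⟩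
    rw [Nat.add_sub_cancel, add_mul, one_mul]
    omega
  simp only [e, ← sub_mul]
  refine Dvd.dvd.mul_right ?_ _
  rcases le_total m n with h | h
  · rw [dvd_sub_comm]
    exact hle t m n h hmn
  · exact hle t n m h hmn.symm

end PadicInt

namespace PadicInt

variable {p : ℕ} [Fact p.Prime]

variable (p) in
/-- `(1/2)_n / n!`, as a `p`-adic integer. -/
noncomputable def halfRatio (n : ℕ) : ℤ_[p] :=
  n.centralBinom * Ring.inverse 4 ^ n

theorem isUnit_two (hp : Odd p) : IsUnit (2 : ℤ_[p]) := by
  have h : ¬ p ∣ 2 := fun h => by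
    have := (Nat.prime_dvd_prime_iff_eq Fact.out Nat.prime_two).1 h
    subst this
    exact absurd hp (by decide)
  have h2 := mt (natCast_dvd_natCast (p := p) (n := 2)).1 h
  rw [← isUnit_iff_not_dvd] at h2
  exact_mod_cast h2

theorem isUnit_four (hp : Odd p) : IsUnit (4 : ℤ_[p]) := by
  have h := (isUnit_two hp).pow 2
  norm_num at h
  exact h

theorem halfRatio_zero : halfRatio p 0 = 1 := by
  simp [halfRatio]

theorem coe_halfRatio (hp : Odd p) (n : ℕ) :
    (halfRatio p n : ℚ_[p]) = (Nat.choose (2 * n) n : ℚ_[p]) / 4 ^ n := by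
  have h : ((Ring.inverse 4 : ℤ_[p]) : ℚ_[p]) * 4 = 1 := by
    have := congrArg (fun x : ℤ_[p] => (x : ℚ_[p])) (Ring.inverse_mul_cancel _ (isUnit_four hp))
    push_cast at this
    exact this
  rw [halfRatio, Nat.centralBinom]
  push_cast
  rw [eq_div_iff (pow_ne_zero _ (right_ne_zero_of_mul_eq_one h)), mul_assoc, ← mul_pow, h, one_pow, mul_one]

theorem halfRatio_succ (hp : Odd p) (n : ℕ) :
    (2 * n + 2) * halfRatio p (n + 1) = (2 * n + 1) * halfRatio p n := by
  have h := congrArg (Nat.cast : ℕ → ℤ_[p]) (Nat.succ_mul_centralBinom_succ n)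
  push_cast at h
  have h4 := Ring.inverse_mul_cancel _ (isUnit_four hp)
  refine (isUnit_two hp).mul_left_cancel ?_
  rw [halfRatio, halfRatio, pow_succ]
  linear_combination (4 * (Ring.inverse 4 : ℤ_[p]) ^ n * Ring.inverse 4) * h +
    (2 * (2 * (n : ℤ_[p]) + 1) * n.centralBinom * Ring.inverse 4 ^ n) * h4

theorem halfRatio_eq_mul (hp : Odd p) (n : ℕ) :
    halfRatio p n = halfRatio p (n / p) * (coprimeRatio p n * multipleFactor p n) := by
  obtain ⟨h, hph⟩ := hp
  have hp : Odd p := ⟨h, hph⟩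
  have h2p := (Fact.out : p.Prime).two_le
  induction n with
  | zero => simp [halfRatio_zero, coprimeRatio_zero, multipleFactor]
  | succ n ih =>
    have hn : ((2 * n + 2 : ℕ) : ℤ_[p]) ≠ 0 := Nat.cast_ne_zero.2 (by omega)
    push_cast at hn
    refine mul_left_cancel₀ hn ?_
    rw [halfRatio_succ hp, ih]
    have hs := coprimeOrOne_mul_coprimeRatio_succ (p := p) n
    obtain ⟨k, j, hj, rfl⟩ : ∃ k j, j < p ∧ n = p * k + j :=
      ⟨n / p, n % p, Nat.mod_lt _ (by omega), (Nat.div_add_mod n p).symm⟩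
    have hdvd : ∀ i, p ∣ 2 * (p * k + j) + i ↔ p ∣ 2 * j + i := by
      intro i
      rw [show 2 * (p * k + j) + i = p * (2 * k) + (2 * j + i) by ring]
      exact Nat.dvd_add_right (dvd_mul_right _ _)
    have hdvd' : ∀ i, i < 2 * p → 0 < i → (p ∣ i ↔ i = p) := by
      intro i hi hi0
      refine ⟨?_, fun h => h ▸ dvd_rfl⟩
      rintro ⟨c, rfl⟩
      have : c < 2 := by nlinarith
      interval_cases c <;> omega
    have hdiv : ∀ i < p, (p * k + i) / p = k := fun i hi => by
      rw [Nat.mul_add_div (by omega), Nat.div_eq_of_lt hi, add_zero]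
    rw [hdiv j hj, multipleFactor_mul_add hj]
    rcases Nat.lt_or_ge (j + 1) p with hj1 | hj1
    · have hodd : p ∣ 2 * (p * k + j) + 1 ↔ j = h := by
        rw [hdvd, hdvd' _ (by omega) (by omega)]
        omega
      have heven : ¬ p ∣ 2 * (p * k + j) + 2 := by
        rw [hdvd, hdvd' _ (by omega) (by omega)]
        omega
      rw [add_assoc, hdiv _ hj1, multipleFactor_mul_add hj1]
      rw [coprimeOrOne, coprimeOrOne, if_neg heven] at hs
      rw [add_assoc] at hs
      push_cast at hs ⊢
      by_cases hjh : j = h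
      · rw [if_pos (hodd.2 hjh)] at hs
        rw [if_neg (by omega), if_pos (by omega)]
        have e : (p : ℤ_[p]) = 2 * j + 1 := by exact_mod_cast hjh ▸ hph
        rw [show (2 * ((p : ℤ_[p]) * k + j) + 1) = p * (2 * k + 1) by linear_combination -e]
        linear_combination (-(p : ℤ_[p]) * (2 * k + 1) * halfRatio p k) * hs
      · rw [if_neg (hodd.not.2 hjh)] at hs
        have : p / 2 < j ↔ p / 2 < j + 1 := by omega
        simp only [← this]
        linear_combination (-(halfRatio p k) *
          if p / 2 < j then (p : ℤ_[p]) * (2 * k + 1) else 1) * hs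
    · have hodd : ¬ p ∣ 2 * (p * k + j) + 1 := by
        rw [hdvd, hdvd' _ (by omega) (by omega)]
        omega
      have heven : p ∣ 2 * (p * k + j) + 2 := by
        rw [hdvd]
        exact ⟨2, by omega⟩
      rw [coprimeOrOne, coprimeOrOne, if_pos heven, if_neg hodd] at hs
      have hk1 : p * k + j + 1 = p * (k + 1) + 0 := by
        rw [mul_add]
        omega
      have hdiv1 : (p * k + j + 1) / p = k + 1 := by
        rw [hk1, add_zero, Nat.mul_div_cancel_left _ (by omega)]
      have hf : multipleFactor p (p * k + j + 1) = 1 := by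
        rw [hk1, multipleFactor_mul_add (by omega), if_neg (by omega)]
      rw [hdiv1, hf, if_pos (by omega)]
      push_cast at hs ⊢
      have e : (p : ℤ_[p]) = j + 1 := by
        have : p = j + 1 := by omega
        exact_mod_cast this
      have hr := halfRatio_succ hp k
      linear_combination (-(p : ℤ_[p]) * (2 * k + 2) * halfRatio p (k + 1)) * hs
        - (p : ℤ_[p]) * (2 * (p * k + j) + 1) * coprimeRatio p (p * k + j) * hr
        + (2 * halfRatio p (k + 1) * coprimeRatio p (p * k + j + 1)) * e

end PadicInt

theorem Finset.sum_range_mul_eq_sum_sum {M : Type*} [AddCommMonoid M] (p n : ℕ) (f : ℕ → M) :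
    ∑ i ∈ range (p * n), f i = ∑ k ∈ range n, ∑ j ∈ range p, f (p * k + j) := by
  induction n with
  | zero => simp
  | succ n ih => rw [mul_add, mul_one, sum_range_add, ih, sum_range_succ]

namespace PadicInt

variable {p : ℕ} [Fact p.Prime]

theorem exists_mem_congrSubalgebra_eq_add {f : ℕ → ℤ_[p]}
    (hf : ∀ t m n, m ≡ n [MOD p ^ t] → (p : ℤ_[p]) ^ (t + 1) ∣ f m - f n) :
    ∃ w ∈ congrSubalgebra p, ∀ k, f k = f 0 + p * w k := by
  have hf0 : ∀ k, ∃ w, f k - f 0 = p * w := fun k => by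
    have h : (p : ℤ_[p]) ^ 1 ∣ f k - f 0 := hf 0 k 0 (by simp [Nat.modEq_one])
    rwa [pow_one] at h
  choose w hw using hf0
  have hp : (p : ℤ_[p]) ≠ 0 := Nat.cast_ne_zero.2 (Fact.out : p.Prime).ne_zero
  refine ⟨w, fun t m n hmn => ?_, fun k => by rw [← hw]; ring⟩
  obtain ⟨z, hz⟩ := hf t m n hmn
  refine ⟨z, mul_left_cancel₀ hp ?_⟩
  linear_combination hz - hw m + hw n

/-- The operator `q ↦ (k ↦ ∑ j < p, b (p * k + j) * q (p * k + j))`. -/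
noncomputable def cartier (b : congrSubalgebra p) :
    congrSubalgebra p →ₗ[ℤ_[p]] congrSubalgebra p where
  toFun q := ⟨fun k => ∑ j ∈ range p, (b * q : congrSubalgebra p).1 (p * k + j), by
    intro t m n hmn
    rw [← sum_sub_distrib]
    refine dvd_sum fun j _ => (b * q).2 t _ _ ?_
    exact (hmn.mul_left p).add_right j⟩
  map_add' x y := by
    ext k
    simp [mul_add, sum_add_distrib]
  map_smul' a x := by
    ext k
    simp [mul_sum]

theorem cartier_apply (b q : congrSubalgebra p) (k : ℕ) :
    (cartier b q).1 k = ∑ j ∈ range p, b.1 (p * k + j) * q.1 (p * k + j) :=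
  rfl

theorem exists_cartier_eq (b q : congrSubalgebra p) :
    ∃ w, cartier b q = (cartier b q).1 0 • (1 : congrSubalgebra p) + (p : ℤ_[p]) • w := by
  obtain ⟨w, hw, h⟩ := exists_mem_congrSubalgebra_eq_add (f := (cartier b q).1) (by
    intro t m n hmn
    rw [cartier_apply, cartier_apply, ← sum_sub_distrib]
    refine dvd_sum fun j _ => (b * q).2 (t + 1) _ _ ?_
    rw [pow_succ']
    exact (hmn.mul_left' p).add_right j)
  refine ⟨⟨w, hw⟩, Subtype.ext (funext fun k => ?_)⟩
  rw [h k]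
  simp

/-- If `B n = B (n / p) * b n`, where `b` preserves congruences and `b (p * k + j)` is divisible
by `p * (2 * k + 1)` for `(p - 1) / 2 < j < p`, then the truncated sums of `B` satisfy
congruences of Atkin and Swinnerton-Dyer type. -/
theorem exists_isUnit_forall_pow_dvd_sum_sub (hp : Odd p) {B b : ℕ → ℤ_[p]}
    (hb : b ∈ congrSubalgebra p) (hB : ∀ n, B n = B (n / p) * b n) (hB0 : B 0 = 1)
    (hd : ∀ k : ℕ, ∀ j < p, p / 2 < j → (p : ℤ_[p]) * (2 * k + 1) ∣ b (p * k + j))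
    (hu : IsUnit (∑ k ∈ range (p / 2 + 1), B k)) :
    ∃ α : ℤ_[p], IsUnit α ∧ ∀ s n : ℕ, p ^ s ∣ 2 * n + 1 →
      (p : ℤ_[p]) ^ (s + 1) ∣
        ∑ k ∈ range (p * n + p / 2 + 1), B k - α * ∑ k ∈ range (n + 1), B k := by
  have hp0 : 0 < p := (Fact.out : p.Prime).pos
  let T := cartier ⟨b, hb⟩
  let S : ℕ → congrSubalgebra p →ₗ[ℤ_[p]] ℤ_[p] := fun n =>
    { toFun := fun q => ∑ k ∈ range (n + 1), B k * q.1 k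
      map_add' := fun x y => by simp [mul_add, sum_add_distrib]
      map_smul' := fun a x => by simp [mul_sum, mul_left_comm] }
  have hS : ∀ n q, S n q = ∑ k ∈ range (n + 1), B k * q.1 k := fun _ _ => rfl
  have hS1 : ∀ n, S n 1 = ∑ k ∈ range (n + 1), B k := fun n => by simp [hS]
  have hST : ∀ s n q, p ^ s ∣ 2 * n + 1 →
      (p : ℤ_[p]) ^ (s + 1) ∣ S (p * n + p / 2) q - S n (T q) := by
    intro s n q hs
    have h1 : S n (T q) = ∑ i ∈ range (p * (n + 1)), B i * q.1 i := by
      rw [hS, sum_range_mul_eq_sum_sum]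
      refine sum_congr rfl fun k _ => ?_
      rw [cartier_apply, mul_sum]
      refine sum_congr rfl fun j hj => ?_
      rw [hB (p * k + j), Nat.mul_add_div hp0, Nat.div_eq_of_lt (mem_range.1 hj), add_zero,
        mul_assoc]
    have hle : p * n + p / 2 + 1 ≤ p * (n + 1) := by
      rw [mul_add, mul_one]
      omega
    rw [h1, hS, ← sum_range_add_sum_Ico _ hle, sub_add_cancel_left, dvd_neg]
    refine dvd_sum fun i hi => Dvd.dvd.mul_right ?_ _
    rw [hB]
    refine Dvd.dvd.mul_left ?_ _
    rw [mem_Ico, mul_add, mul_one] at hi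
    obtain ⟨j, rfl⟩ := Nat.exists_eq_add_of_le (show p * n ≤ i by omega)
    refine dvd_trans ?_ (hd n j (by omega) (by omega))
    have h2 := (Nat.castRingHom ℤ_[p]).map_dvd hs
    rw [pow_succ']
    exact mul_dvd_mul_left _ (by simpa using h2)
  let c : congrSubalgebra p →ₗ[ℤ_[p]] ℤ_[p] :=
    { toFun := fun q => q.1 0
      map_add' := fun _ _ => rfl
      map_smul' := fun _ _ => rfl }
  have hT : ∀ q, ∃ w, T q = c (T q) • (1 : congrSubalgebra p) + (p : ℤ_[p]) • w :=
    exists_cartier_eq ⟨b, hb⟩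
  obtain ⟨l, α, hα, hl1, hlT⟩ := exists_eigenfunctional T 1 c rfl hT (by
    have h := hST 0 0 1 (by simp)
    rw [hS1, hS] at h
    refine (isUnit_congr ?_).1 hu
    have hc : c (T 1) = (T 1).1 0 := rfl
    simpa [hB0, hc] using h)
  have hker : ∀ (a : ℤ_[p]) q, l (T q - a • 1) = 0 → ∃ w, l w = 0 ∧ T q - a • 1 = (p : ℤ_[p]) • w := by
    intro a q h0
    obtain ⟨w, hw⟩ := hT q
    refine ⟨w - l w • 1, by simp [hl1], ?_⟩
    have h : c (T q) - a = -(p * l w) := by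
      rw [hw, map_sub, map_add, map_smul, map_smul, map_smul, hl1] at h0
      simp only [smul_eq_mul] at h0
      linear_combination h0
    have h' : c (T q) = a - p * l w := by linear_combination h
    rw [hw, h', smul_sub, sub_smul, smul_smul]
    abel
  have hS0 : ∀ s n w, l w = 0 → p ^ s ∣ 2 * n + 1 → (p : ℤ_[p]) ^ s ∣ S n w := by
    intro s
    induction s with
    | zero => simp
    | succ s ih =>
      rintro n w hw ⟨m, hm⟩
      obtain ⟨n, rfl, hn⟩ : ∃ k, n = p * k + p / 2 ∧ p ^ s ∣ 2 * k + 1 := by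
        have hodd : Odd (p ^ s * m) := by
          have : Odd (p * (p ^ s * m)) := ⟨n, by rw [hm]; ring⟩
          exact (Nat.odd_mul.1 this).2
        obtain ⟨k, hk⟩ := hodd
        refine ⟨k, ?_, m, hk.symm⟩
        have h1 : 2 * n + 1 = 2 * (p * k) + p := by
          rw [hm, pow_succ', mul_assoc, hk]
          ring
        obtain ⟨h, hh⟩ := hp
        omega
      obtain ⟨w', hw', hTw⟩ := hker 0 w (by simp [hlT, hw])
      rw [zero_smul, sub_zero] at hTw
      have hw1 := mul_dvd_mul_left (p : ℤ_[p]) (ih n w' hw' hn)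
      rw [← pow_succ'] at hw1
      have h := dvd_add (hST s n w hn) hw1
      rwa [hTw, map_smul, smul_eq_mul, sub_add_cancel] at h
  refine ⟨α, hα, fun s n hs => ?_⟩
  obtain ⟨w, hw, hTw⟩ := hker α 1 (by simp [hlT, hl1])
  have hw1 := mul_dvd_mul_left (p : ℤ_[p]) (hS0 s n w hw hs)
  rw [← pow_succ', ← smul_eq_mul (p : ℤ_[p]) (S n w), ← map_smul, ← hTw, map_sub, map_smul,
    smul_eq_mul] at hw1
  have h := dvd_add (hST s n 1 hs) hw1
  rw [← hS1, ← hS1]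
  convert h using 1
  ring

theorem exists_isUnit_forall_pow_dvd_of_dvd (hp : Odd p) (a : ℕ → ℤ_[p]) {x : ℤ_[p]}
    (hx : (p : ℤ_[p]) ∣ x) (s n : ℕ) (hs : p ^ s ∣ 2 * n + 1) :
    (p : ℤ_[p]) ^ (s + 1) ∣
      ∑ k ∈ range (p * n + p / 2 + 1), a k * x ^ k - ∑ k ∈ range (n + 1), a k * x ^ k := by
  have hp3 : 3 ≤ p := by
    have h2 := (Fact.out : p.Prime).two_le
    obtain ⟨h, rfl⟩ := hp
    omega
  have hpow : 2 * s + 1 ≤ p ^ s := by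
    have h := one_add_mul_le_pow (show (-2 : ℤ) ≤ 2 by norm_num) s
    have h3 := Nat.pow_le_pow_left hp3 s
    zify at h3 ⊢
    norm_num at h h3
    linarith
  have hle := Nat.le_of_dvd (by omega) hs
  have hn : n ≤ p * n := Nat.le_mul_of_pos_left n (by omega)
  rw [← sum_range_add_sum_Ico _ (show n + 1 ≤ p * n + p / 2 + 1 by omega), add_sub_cancel_left]
  refine dvd_sum fun i hi => Dvd.dvd.mul_left ?_ _
  rw [mem_Ico] at hi
  exact (pow_dvd_pow _ (by omega)).trans (pow_dvd_pow_of_dvd hx i)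

/-- Congruences of Atkin and Swinnerton-Dyer type for the truncated hypergeometric sums. -/
theorem exists_isUnit_forall_pow_dvd_sum_halfRatio_sub (hp : Odd p) {r : ℕ} (hr : 0 < r)
    (x : ℤ_[p]) (hu : IsUnit (∑ k ∈ range (p / 2 + 1), halfRatio p k ^ r * x ^ k)) :
    ∃ α : ℤ_[p], IsUnit α ∧ ∀ s n : ℕ, p ^ s ∣ 2 * n + 1 →
      (p : ℤ_[p]) ^ (s + 1) ∣ ∑ k ∈ range (p * n + p / 2 + 1), halfRatio p k ^ r * x ^ k -
        α * ∑ k ∈ range (n + 1), halfRatio p k ^ r * x ^ k := by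
  by_cases hx : IsUnit x
  · refine exists_isUnit_forall_pow_dvd_sum_sub hp
      (b := (coprimeRatio p * multipleFactor p) ^ r * fun n => x ^ (n - n / p))
      (mul_mem (pow_mem (mul_mem (coprimeRatio_mem hp) multipleFactor_mem) r) (pow_sub_div_mem hx))
      (fun n => ?_) (by simp [halfRatio_zero]) (fun k j hj hkj => ?_) hu
    · have h : x ^ n = x ^ (n / p) * x ^ (n - n / p) := by
        rw [← pow_add, Nat.add_sub_cancel' (Nat.div_le_self n p)]
      rw [halfRatio_eq_mul hp n, h, mul_pow]
      simp only [Pi.mul_apply, Pi.pow_apply]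
      ring
    · simp only [Pi.mul_apply, Pi.pow_apply]
      refine Dvd.dvd.mul_right (dvd_pow (Dvd.dvd.mul_left ?_ _) hr.ne') _
      rw [multipleFactor_mul_add hj, if_pos hkj]
  · rw [isUnit_iff_not_dvd, not_not] at hx
    refine ⟨1, isUnit_one, fun s n hs => ?_⟩
    rw [one_mul]
    exact exists_isUnit_forall_pow_dvd_of_dvd hp (fun k => halfRatio p k ^ r) hx s n hs

theorem coe_sum_halfRatio (hp : Odd p) (r : ℕ) (x : ℤ_[p]) (n : ℕ) :
    ((∑ k ∈ range (n + 1), halfRatio p k ^ r * x ^ k : ℤ_[p]) : ℚ_[p]) = truncF p r x n := by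
  simp only [coe_sum, truncF, coe_mul, coe_pow, coe_halfRatio hp]

end PadicInt

theorem stmt1 (r p : ℕ) (hr : 0 < r) [Fact p.Prime] (hp : Odd p) (lam : ℤ_[p])
    (hunit : ‖truncF p r lam ((p - 1) / 2)‖ = 1) :
    ∃ α : ℤ_[p], ‖α‖ = 1 ∧
      ∀ m : ℕ, Odd m →
        ∀ d : ℕ, (∀ t : ℕ, (p : ℝ) ^ (-(d : ℤ)) ≤ ‖truncF p r lam ((m * p ^ t - 1) / 2)‖) →
          ∀ s : ℕ, 1 ≤ s →
            ‖truncF p r lam ((m * p ^ s - 1) / 2) / truncF p r lam ((m * p ^ (s - 1) - 1) / 2)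
                - (α : ℚ_[p])‖ ≤ (p : ℝ) ^ ((d : ℤ) - (s : ℤ)) := by
  have hp0 : (0 : ℝ) < p := Nat.cast_pos.2 (Fact.out : p.Prime).pos
  have hhalf : (p - 1) / 2 = p / 2 := by
    obtain ⟨h, rfl⟩ := hp
    omega
  rw [hhalf, ← PadicInt.coe_sum_halfRatio hp, ← PadicInt.norm_def, ← PadicInt.isUnit_iff] at hunit
  obtain ⟨α, hα, h⟩ := PadicInt.exists_isUnit_forall_pow_dvd_sum_halfRatio_sub hp hr lam hunit
  refine ⟨α, PadicInt.isUnit_iff.1 hα, fun m hm d hd s hs => ?_⟩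
  obtain ⟨s, rfl⟩ := Nat.exists_eq_add_of_le' hs
  rw [Nat.add_sub_cancel]
  have hF := hd s
  obtain ⟨n, hn⟩ := hm.mul (hp.pow (n := s))
  have hn1 : (m * p ^ s - 1) / 2 = n := by omega
  have hn2 : (m * p ^ (s + 1) - 1) / 2 = p * n + p / 2 := by
    have e : m * p ^ (s + 1) = 2 * (p * n) + p := by
      rw [pow_succ, ← mul_assoc, hn]
      ring
    obtain ⟨h, hh⟩ := hp
    omega
  have hdvd := h s n ⟨m, by rw [← hn, mul_comm]⟩
  rw [PadicInt.pow_dvd_iff_norm_le, PadicInt.norm_def, PadicInt.coe_sub, PadicInt.coe_mul,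
    PadicInt.coe_sum_halfRatio hp, PadicInt.coe_sum_halfRatio hp] at hdvd
  rw [hn1] at hF
  rw [hn1, hn2]
  have hpos := (zpow_pos hp0 (-(d : ℤ))).trans_le hF
  rw [div_sub' (norm_pos_iff.1 hpos), norm_div, div_le_iff₀ hpos, mul_comm _ (α : ℚ_[p])]
  calc _ ≤ (p : ℝ) ^ (-((s + 1 : ℕ) : ℤ)) := hdvd
    _ = (p : ℝ) ^ ((d : ℤ) - ((s + 1 : ℕ) : ℤ)) * (p : ℝ) ^ (-(d : ℤ)) := by
      rw [← zpow_add₀ hp0.ne']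
      congr 1
      ring
    _ ≤ _ := by gcongr
end

section
/- Let p be a prime with p ∉ {2, 3, 7}. Then Σ_{k=0}^{(p−1)/2} C(2k,k)³ ≡ a_p (mod p²), where a_p = 0 if p ≡ 3, 5, or 6 (mod 7), and a_p = 4x² − 2p if p ≡ 1, 2, or 4 (mod 7), where x, y are integers with p = x² + 7y². -/
open Finset

/-- Coefficient of `X ^ k` in the `n`-th Legendre polynomial evaluated at `1 + 2 X`. -/
def legendreCoeff (n k : ℕ) : ℤ := (n + k).choose (2 * k) * (2 * k).choose k

theorem cast_descFactorial_succ (n k : ℕ) :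
    ((n.descFactorial (k + 1) : ℕ) : ℤ) = (n - k) * n.descFactorial k := by
  rw [Nat.descFactorial_succ]
  rcases le_or_gt k n with h | h
  · push_cast [Nat.cast_sub h]; ring
  · simp [Nat.descFactorial_eq_zero_iff_lt.2 h]

theorem factorial_sq_mul_legendreCoeff (n k : ℕ) :
    (k.factorial : ℤ) ^ 2 * legendreCoeff n k = (n + k).descFactorial (2 * k) := by
  have h1 := Nat.descFactorial_eq_factorial_mul_choose (n + k) (2 * k)
  have h2 := Nat.choose_mul_factorial_mul_factorial (show k ≤ 2 * k by omega)
  rw [show 2 * k - k = k by omega] at h2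
  rw [h1, ← h2, legendreCoeff]
  push_cast
  ring

theorem legendreCoeff_succ_right (n k : ℕ) :
    ((k : ℤ) + 1) ^ 2 * legendreCoeff n (k + 1)
      = (n * (n + 1) - k * (k + 1)) * legendreCoeff n k := by
  have hf : ((k.factorial : ℤ)) ^ 2 ≠ 0 := by positivity
  apply mul_left_cancel₀ hf
  have h1 := factorial_sq_mul_legendreCoeff n k
  have h2 := factorial_sq_mul_legendreCoeff n (k + 1)
  have h3 : (((n + (k + 1)).descFactorial (2 * (k + 1)) : ℕ) : ℤ)
      = (n + k + 1) * ((n - k) * (n + k).descFactorial (2 * k)) := by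
    rw [show n + (k + 1) = (n + k) + 1 by ring, show 2 * (k + 1) = (2 * k + 1) + 1 by ring,
      Nat.succ_descFactorial_succ]
    push_cast [cast_descFactorial_succ]
    ring
  rw [h3, ← h1, Nat.factorial_succ] at h2
  push_cast at h2
  linear_combination h2

theorem legendreCoeff_zero_right (n : ℕ) : legendreCoeff n 0 = 1 := by simp [legendreCoeff]

theorem legendreCoeff_eq_zero {n k : ℕ} (h : n < k) : legendreCoeff n k = 0 := by
  rw [legendreCoeff, Nat.choose_eq_zero_of_lt (by omega)]; simp

theorem legendreCoeff_three_term (n k : ℕ) :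
    ((n : ℤ) + 2) * legendreCoeff (n + 2) (k + 1) + (n + 1) * legendreCoeff n (k + 1)
      = (2 * n + 3) * (legendreCoeff (n + 1) (k + 1) + 2 * legendreCoeff (n + 1) k) := by
  have hf : (((k + 1).factorial : ℤ)) ^ 2 ≠ 0 := by positivity
  apply mul_left_cancel₀ hf
  have h0 := factorial_sq_mul_legendreCoeff (n + 1) k
  have h1 := factorial_sq_mul_legendreCoeff n (k + 1)
  have h2 := factorial_sq_mul_legendreCoeff (n + 1) (k + 1)
  have h3 := factorial_sq_mul_legendreCoeff (n + 2) (k + 1)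
  rw [show n + 2 + (k + 1) = (n + 1 + k) + 1 + 1 by ring, show 2 * (k + 1) = 2 * k + 1 + 1 by ring,
    Nat.succ_descFactorial_succ, Nat.succ_descFactorial_succ] at h3
  rw [show n + 1 + (k + 1) = (n + 1 + k) + 1 by ring, show 2 * (k + 1) = 2 * k + 1 + 1 by ring,
    Nat.succ_descFactorial_succ] at h2
  rw [show n + (k + 1) = n + 1 + k by ring, show 2 * (k + 1) = 2 * k + 1 + 1 by ring] at h1
  push_cast [cast_descFactorial_succ] at h1 h2 h3
  have h4 : ((k + 1).factorial : ℤ) = (k + 1) * k.factorial := by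
    rw [Nat.factorial_succ]; push_cast; ring
  linear_combination ((n : ℤ) + 2) * h3 + (n + 1) * h1 - (2 * n + 3) * h2
    - 2 * (2 * n + 3) * (k + 1) ^ 2 * h0 - 2 * (2 * n + 3) * legendreCoeff (n + 1) k *
      (((k + 1).factorial : ℤ) + (k + 1) * k.factorial) * h4

open Polynomial in
/-- The Legendre polynomial `P_n (1 + 2 X)`. -/
noncomputable def shiftedLegendrePoly (n : ℕ) : ℤ[X] :=
  ∑ k ∈ range (n + 1), monomial k (legendreCoeff n k)

namespace shiftedLegendrePoly
open Polynomial

theorem coeff_eq (n k : ℕ) : (shiftedLegendrePoly n).coeff k = legendreCoeff n k := by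
  simp only [shiftedLegendrePoly, finsetSum_coeff, coeff_monomial, Finset.sum_ite_eq', mem_range]
  split_ifs with h
  · rfl
  · rw [legendreCoeff_eq_zero (by omega)]

theorem three_term (n : ℕ) :
    ((n : ℤ[X]) + 2) * shiftedLegendrePoly (n + 2) + ((n : ℤ[X]) + 1) * shiftedLegendrePoly n
      = (2 * (n : ℤ[X]) + 3) * ((1 + 2 * X) * shiftedLegendrePoly (n + 1)) := by
  have key : C ((n : ℤ) + 2) * shiftedLegendrePoly (n + 2) + C ((n : ℤ) + 1) * shiftedLegendrePoly n
      = C (2 * (n : ℤ) + 3) * (shiftedLegendrePoly (n + 1) +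
        X * (C 2 * shiftedLegendrePoly (n + 1))) := by
    ext k
    rcases k with _ | k
    · simp [coeff_eq, legendreCoeff_zero_right]; ring
    · simp only [coeff_add, coeff_C_mul, coeff_X_mul, coeff_eq]
      linear_combination legendreCoeff_three_term n k
  simp only [map_add, map_mul, map_natCast, map_ofNat, map_one] at key
  linear_combination key

theorem differential_eq (n : ℕ) :
    derivative ((X + X ^ 2) * derivative (shiftedLegendrePoly n))
      = C ((n : ℤ) * (n + 1)) * shiftedLegendrePoly n := by
  rw [show (X + X ^ 2) * derivative (shiftedLegendrePoly n) =
    X * (derivative (shiftedLegendrePoly n) + X * derivative (shiftedLegendrePoly n)) by ring]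
  ext k
  rw [coeff_derivative, coeff_X_mul, coeff_add, coeff_C_mul, coeff_derivative, coeff_eq, coeff_eq]
  rcases k with _ | k
  · have := legendreCoeff_succ_right n 0
    simp at this ⊢
    linear_combination this
  · rw [coeff_X_mul, coeff_derivative, coeff_eq]
    have := legendreCoeff_succ_right n (k + 1)
    push_cast at this ⊢
    linear_combination this

end shiftedLegendrePoly

namespace shiftedLegendrePoly
section
open PowerSeries

theorem zero_eq : shiftedLegendrePoly 0 = 1 := by
  simp [shiftedLegendrePoly, legendreCoeff]

theorem one_eq : shiftedLegendrePoly 1 = 1 + 2 * Polynomial.X := by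
  ext k
  rw [coeff_eq, show (2 : Polynomial ℤ) = Polynomial.C 2 by simp]
  rcases k with _ | _ | k
  · simp [legendreCoeff]
  · simp [legendreCoeff, Polynomial.coeff_one]
  · rw [legendreCoeff_eq_zero (by omega)]
    simp [Polynomial.coeff_X, Polynomial.coeff_one]

theorem three_term' (n : ℕ) :
    ((n : Polynomial ℤ) + 1) * shiftedLegendrePoly (n + 1) + (n : Polynomial ℤ) * shiftedLegendrePoly (n - 1)
      = (2 * (n : Polynomial ℤ) + 1) * ((1 + 2 * Polynomial.X) * shiftedLegendrePoly n) := by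
  rcases n with _ | n
  · simp [zero_eq, one_eq]
  · have := three_term n
    push_cast
    linear_combination this

theorem generating_function :
    (mk shiftedLegendrePoly) ^ 2 *
      (1 - 2 * C (1 + 2 * Polynomial.X) * X + X ^ 2) = 1 := by
  set G : PowerSeries (Polynomial ℤ) := mk shiftedLegendrePoly with hG
  set τ : Polynomial ℤ := 1 + 2 * Polynomial.X with hτ
  have hD : (1 - 2 * C τ * X + X ^ 2) * d⁄dX _ G = (C τ - X) * G := by
    rw [show (1 - 2 * C τ * X + X ^ 2) * d⁄dX _ G = d⁄dX _ G - C (2 * τ) * (X * d⁄dX _ G)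
      + X * (X * d⁄dX _ G) by simp only [map_mul, map_ofNat]; ring, sub_mul]
    ext n : 1
    rcases n with _ | _ | n
    · have e : coeff 0 (d⁄dX _ G) = τ := by
        rw [coeff_derivative]; simp [hG, one_eq, hτ]
      rw [map_add, map_sub, coeff_C_mul, coeff_zero_X_mul, coeff_zero_X_mul, e, map_sub,
        coeff_C_mul, coeff_zero_X_mul]
      simp [hG, zero_eq]
    · have := three_term' 1
      simp only [map_add, map_sub, coeff_C_mul, coeff_succ_X_mul, coeff_derivative, hG, coeff_mk,
        coeff_zero_X_mul]
      push_cast at this ⊢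
      simp only [zero_add, one_eq, zero_eq, ← hτ] at this ⊢
      linear_combination this
    · have := three_term' (n + 2)
      simp only [map_add, map_sub, coeff_C_mul, coeff_succ_X_mul, coeff_derivative, hG, coeff_mk]
      push_cast at this ⊢
      rw [← hτ] at this
      linear_combination this
  apply derivative.ext
  · have h2 : d⁄dX (Polynomial ℤ) (2 : PowerSeries (Polynomial ℤ)) = 0 := by
      rw [show (2 : PowerSeries (Polynomial ℤ)) = C 2 from (map_ofNat C 2).symm]; exact derivative_C
    simp only [Derivation.leibniz, Derivation.leibniz_pow, map_add, map_sub, derivative_one,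
      derivative_C, derivative_X, h2, smul_eq_mul, nsmul_eq_mul]
    push_cast
    linear_combination 2 * G * hD
  · simp [hG, zero_eq]

theorem generating_function_aeval {R : Type*} [CommRing R] (x : R) :
    (mk fun n => Polynomial.aeval x (shiftedLegendrePoly n)) ^ 2 *
      (1 - 2 * C (1 + 2 * x) * X + X ^ 2) = 1 := by
  have h := congrArg (PowerSeries.map (Polynomial.aeval x : Polynomial ℤ →ₐ[ℤ] R).toRingHom)
    generating_function
  simp only [map_mul, map_pow, map_add, map_sub, map_one, PowerSeries.map_X, PowerSeries.map_C,
    map_ofNat] at h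
  convert h using 2
  · congr 1
  · have h2 : (C 2 : PowerSeries R) = 2 := map_ofNat C 2
    simp [h2]

end

section
open Polynomial

/-- Coefficients of the square of the Legendre polynomial in powers of `X + X ^ 2`. -/
def clausenCoeff (n k : ℕ) : ℤ := (2 * k).choose k ^ 2 * (n + k).choose (2 * k)

theorem clausenCoeff_eq (n k : ℕ) : clausenCoeff n k = (k.centralBinom : ℤ) * legendreCoeff n k := by
  rw [clausenCoeff, legendreCoeff, Nat.centralBinom]; ring

theorem clausenCoeff_succ (n k : ℕ) : ((k : ℤ) + 1) ^ 3 * clausenCoeff n (k + 1)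
    = 2 * (2 * k + 1) * (n * (n + 1) - k * (k + 1)) * clausenCoeff n k := by
  rw [clausenCoeff_eq, clausenCoeff_eq]
  have h1 := legendreCoeff_succ_right n k
  have h2 : ((k : ℤ) + 1) * ((k + 1).centralBinom : ℤ) = 2 * (2 * k + 1) * k.centralBinom := by
    exact_mod_cast Nat.succ_mul_centralBinom_succ k
  linear_combination ((k + 1).centralBinom : ℤ) * (k + 1) * h1 +
    (n * (n + 1) - k * (k + 1)) * legendreCoeff n k * h2

/-- Uniqueness for the differential equation satisfied by squares of Legendre polynomials. -/
theorem eq_zero_of_differential_eq (l : ℤ) (Y : ℤ[X]) (h0 : Y.coeff 0 = 0)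
    (h : derivative ((X + X ^ 2) * derivative ((X + X ^ 2) * derivative Y))
      = C (2 * l) * ((1 + 2 * X) * Y + 2 * ((X + X ^ 2) * derivative Y))) : Y = 0 := by
  have hU : ∀ k, (derivative ((X + X ^ 2) * derivative Y)).coeff k
      = (k + 1) * ((k + 1) * Y.coeff (k + 1) + k * Y.coeff k) := by
    intro k
    rw [coeff_derivative, show (X + X ^ 2) * derivative Y
      = X * (derivative Y + X * derivative Y) by ring, coeff_X_mul, coeff_add, coeff_derivative]
    rcases k with _ | k
    · simp
    · rw [coeff_X_mul, coeff_derivative]; push_cast; ring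
  have key : ∀ k, Y.coeff k = 0 ∧ Y.coeff (k + 1) = 0 := by
    intro k
    induction k with
    | zero =>
      refine ⟨h0, ?_⟩
      have h' := congrArg (fun q => coeff q 0) h
      simp only [coeff_C_mul] at h'
      rw [coeff_derivative, show ∀ Z : ℤ[X], (X + X ^ 2) * Z = X * (Z + X * Z) by intro Z; ring,
        coeff_X_mul, coeff_add, hU] at h'
      simpa [h0, mul_coeff_zero] using h'
    | succ k ih =>
      refine ⟨ih.2, ?_⟩
      have h' := congrArg (fun q => coeff q (k + 1)) h
      simp only [coeff_C_mul] at h'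
      rw [coeff_derivative, show ∀ Z : ℤ[X], (X + X ^ 2) * Z = X * (Z + X * Z) by intro Z; ring,
        coeff_X_mul, coeff_add, hU, coeff_X_mul, hU,
        show (1 + 2 * X) * Y + 2 * ((X + X ^ 2) * derivative Y)
          = Y + C 2 * (X * Y) + C 2 * (X * (derivative Y + X * derivative Y)) by
            simp only [map_ofNat]; ring] at h'
      simp only [coeff_add, coeff_C_mul, coeff_X_mul, coeff_derivative] at h'
      rcases k with _ | k
      · simp [ih.1, ih.2] at h'
        exact h'
      · rw [coeff_X_mul, coeff_derivative] at h'
        rw [ih.1, ih.2] at h'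
        push_cast at h'
        have h3 : ((k : ℤ) + 1 + 1 + 1) ≠ 0 := by positivity
        simpa [h3] using h'
  ext k
  simpa using (key k).1

theorem sq_eq (n : ℕ) : (shiftedLegendrePoly n) ^ 2
    = ∑ k ∈ range (n + 1), C (clausenCoeff n k) * (X + X ^ 2) ^ k := by
  set P := shiftedLegendrePoly n with hP
  set g : ℤ[X] := ∑ k ∈ range (n + 1), monomial k (clausenCoeff n k) with hg
  have hgc : ∀ k, g.coeff k = clausenCoeff n k := by
    intro k
    simp only [hg, finsetSum_coeff, coeff_monomial, Finset.sum_ite_eq', mem_range]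
    split_ifs with h
    · rfl
    · rw [clausenCoeff_eq, legendreCoeff_eq_zero (by omega), mul_zero]
  have hsum : ∑ k ∈ range (n + 1), C (clausenCoeff n k) * (X + X ^ 2) ^ k = g.comp (X + X ^ 2) := by
    simp [hg, Polynomial.sum_comp, monomial_comp]
  have hd : derivative (X + X ^ 2 : ℤ[X]) = 1 + 2 * X := by simp
  rw [hsum, ← sub_eq_zero]
  set l : ℤ := n * (n + 1) with hl
  have e2 : derivative (X * (derivative (X * (1 + 4 * X) * derivative g) - 2 * X * derivative g))
      = C (2 * l) * (g + 2 * (X * derivative g)) := by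
    rw [show derivative (X * (1 + 4 * X) * derivative g) - 2 * X * derivative g
      = derivative g + X * derivative (derivative g)
        + X * (C 6 * derivative g + C 4 * (X * derivative (derivative g))) by
        simp [derivative_mul]; ring]
    ext k
    rw [coeff_derivative, coeff_X_mul, coeff_C_mul]
    have h := clausenCoeff_succ n k
    rcases k with _ | k
    · simp [coeff_derivative, hgc, mul_coeff_zero] at h ⊢
      linear_combination h
    · rw [show (2 : ℤ[X]) = C 2 by simp]
      simp only [coeff_add, coeff_C_mul, coeff_X_mul, coeff_derivative, hgc]
      rcases k with _ | k
      · simp [coeff_derivative, hgc, mul_coeff_zero] at h ⊢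
        linear_combination h
      · simp only [coeff_X_mul, coeff_derivative, hgc]
        push_cast at h ⊢
        linear_combination h
  apply eq_zero_of_differential_eq l
  · have : (g.comp (X + X ^ 2)).coeff 0 = 1 := by
      rw [coeff_zero_eq_eval_zero, eval_comp]
      simp [← coeff_zero_eq_eval_zero, hgc, clausenCoeff]
    rw [coeff_sub, this, sq, mul_coeff_zero, hP, coeff_eq, legendreCoeff_zero_right]
    norm_num
  · have e1 := differential_eq n
    rw [← hP, ← hl] at e1
    have e1' : derivative ((X + X ^ 2) * derivative (P ^ 2)) =
        2 * ((X + X ^ 2) * derivative P ^ 2 + C l * P ^ 2) := by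
      rw [show (X + X ^ 2) * derivative (P ^ 2) = 2 * (P * ((X + X ^ 2) * derivative P)) by
        simp [derivative_pow]; ring]
      simp only [derivative_mul, derivative_ofNat] at e1 ⊢
      linear_combination 2 * P * e1
    set H := derivative (X * (1 + 4 * X) * derivative g) - 2 * X * derivative g with hH
    have e4 : derivative ((X + X ^ 2) * derivative (g.comp (X + X ^ 2))) = H.comp (X + X ^ 2) := by
      simp [hH, derivative_comp, derivative_mul]
      ring
    have e5 : derivative ((X + X ^ 2) * H.comp (X + X ^ 2))
        = (1 + 2 * X) * (derivative (X * H)).comp (X + X ^ 2) := by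
      rw [← hd, ← derivative_comp, mul_comp, X_comp]
    have e6 : derivative ((X + X ^ 2) * (2 * ((X + X ^ 2) * derivative P ^ 2 + C l * P ^ 2)))
        = C (2 * l) * ((1 + 2 * X) * P ^ 2 + 2 * ((X + X ^ 2) * derivative (P ^ 2))) := by
      rw [derivative_mul, hd] at e1
      simp only [derivative_mul, derivative_add, derivative_pow, derivative_C, derivative_ofNat,
        derivative_X, map_mul, map_ofNat, Nat.cast_ofNat]
      linear_combination 4 * (X + X ^ 2) * derivative P * e1
    rw [derivative_sub, mul_sub, derivative_sub, e4, e1', mul_sub, derivative_sub, e5, e6]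
    rw [show (derivative (X * H)).comp (X + X ^ 2) = _ from congrArg (fun q => q.comp (X + X ^ 2)) e2]
    simp only [mul_comp, add_comp, C_comp, X_comp, ofNat_comp, derivative_comp, hd]
    ring

end
end shiftedLegendrePoly

namespace shiftedLegendrePoly

/-- Clausen's formula evaluated where `z + z ^ 2 = w`. -/
theorem aeval_sq {R : Type*} [CommRing R] {z : R} {w : ℤ} (hz : z + z ^ 2 = w) (n : ℕ) :
    Polynomial.aeval z (shiftedLegendrePoly n) ^ 2
      = ((∑ k ∈ range (n + 1), clausenCoeff n k * w ^ k : ℤ) : R) := by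
  rw [← map_pow, sq_eq]
  simp [hz]

theorem choose_succ (n k : ℕ) :
    (2 * (k : ℤ) + 1) * (2 * k + 2) * (n + (k + 1)).choose (2 * (k + 1))
      = (n + k + 1) * (n - k) * (n + k).choose (2 * k) := by
  have h1 := legendreCoeff_succ_right n k
  have h2 : ((k : ℤ) + 1) * ((2 * (k + 1)).choose (k + 1) : ℤ)
      = 2 * (2 * k + 1) * (2 * k).choose k := by
    exact_mod_cast Nat.succ_mul_centralBinom_succ k
  have h3 : (((2 * k).choose k : ℕ) : ℤ) ≠ 0 := by
    exact_mod_cast (Nat.centralBinom_pos k).ne'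
  apply mul_right_cancel₀ h3
  rw [legendreCoeff, legendreCoeff] at h1
  linear_combination h1 - ((k : ℤ) + 1) * (n + (k + 1)).choose (2 * (k + 1)) * h2

theorem sq_dvd_choose_sub {p h : ℕ} (hp : p.Prime) (hh : p = 2 * h + 1) (k : ℕ) (hk : k ≤ h) :
    (p : ℤ) ^ 2 ∣ (h + k).choose (2 * k) * (-16) ^ k - (2 * k).choose k := by
  induction k with
  | zero => simp
  | succ k ih =>
    have hcop : IsCoprime ((p : ℤ) ^ 2) ((2 * (k : ℤ) + 1) * (2 * k + 2)) := by
      have : Nat.Coprime (p ^ 2) ((2 * k + 1) * (2 * k + 2)) := by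
        apply Nat.Coprime.pow_left
        exact Nat.Coprime.mul_right (Nat.coprime_of_lt_prime (by omega) (by omega) hp)
          (Nat.coprime_of_lt_prime (by omega) (by omega) hp)
      exact_mod_cast this.isCoprime
    apply hcop.dvd_of_dvd_mul_left
    obtain ⟨c, hc⟩ := ih (by omega)
    have h1 := choose_succ h k
    have h2 : ((k : ℤ) + 1) * ((2 * (k + 1)).choose (k + 1) : ℤ)
        = 2 * (2 * k + 1) * (2 * k).choose k := by
      exact_mod_cast Nat.succ_mul_centralBinom_succ k
    have h3 : (p : ℤ) = 2 * h + 1 := by exact_mod_cast hh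
    refine ⟨4 * (2 * k + 1) ^ 2 * c - 4 * (h + k).choose (2 * k) * (-16) ^ k, ?_⟩
    rw [pow_succ]
    generalize (((h + (k + 1)).choose (2 * (k + 1)) : ℕ) : ℤ) = c1 at *
    generalize (((h + k).choose (2 * k) : ℕ) : ℤ) = c0 at *
    linear_combination (-16) ^ k * (-16) * h1 - 2 * (2 * (k : ℤ) + 1) * h2
      + 4 * (2 * (k : ℤ) + 1) ^ 2 * hc + 4 * c0 * (-16) ^ k * (p + 2 * h + 1) * h3

theorem sq_dvd_sum_clausenCoeff_sub {p h : ℕ} (hp : p.Prime) (hh : p = 2 * h + 1) :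
    (p : ℤ) ^ 2 ∣ ∑ k ∈ range (h + 1), clausenCoeff h k * (-16) ^ k
      - ∑ k ∈ range (h + 1), ((2 * k).choose k : ℤ) ^ 3 := by
  rw [← Finset.sum_sub_distrib]
  apply Finset.dvd_sum
  intro k hk
  have := sq_dvd_choose_sub hp hh k (by simpa [Nat.lt_succ_iff] using hk)
  rw [clausenCoeff, show ((2 * k).choose k : ℤ) ^ 2 * (h + k).choose (2 * k) * (-16) ^ k
    - ((2 * k).choose k : ℤ) ^ 3 = ((2 * k).choose k : ℤ) ^ 2 *
      ((h + k).choose (2 * k) * (-16) ^ k - (2 * k).choose k) by ring]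
  exact this.mul_left _

end shiftedLegendrePoly

namespace shiftedLegendrePoly
section
open PowerSeries

/-- Coefficients of `ρ ^ (2 k) * (ρ + 2 X ρ')`. -/
theorem coeff_pow_mul_add_derivative {F : Type*} [CommRing F] (ρ : F⟦X⟧) (k j : ℕ) :
    (2 * k + 1 : F) * coeff j (ρ ^ (2 * k) * (ρ + 2 * (X * d⁄dX F ρ)))
      = (2 * k + 1 + 2 * j) * coeff j (ρ ^ (2 * k + 1)) := by
  rw [← coeff_C_mul]
  have : (C (2 * k + 1 : F)) * (ρ ^ (2 * k) * (ρ + 2 * (X * d⁄dX F ρ)))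
      = C (2 * k + 1 : F) * ρ ^ (2 * k + 1) + C 2 * (X * d⁄dX F (ρ ^ (2 * k + 1))) := by
    rw [derivative_pow]
    simp only [map_add, map_mul, map_ofNat, map_natCast, map_one, Nat.add_sub_cancel]
    push_cast
    ring
  rw [this, map_add, coeff_C_mul, coeff_C_mul]
  rcases j with _ | j
  · simp
  · rw [coeff_succ_X_mul, coeff_derivative]; push_cast; ring

theorem delta_multiplication_identity {R : Type*} [CommRing R] {d X N D M : R} (hd : d ^ 2 = -7)
    (hN : N = d - 21 * X - 5 * d * X ^ 2 + X ^ 3) (hD : D = 1 - 5 * d * X - 21 * X ^ 2 + d * X ^ 3)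
    (hM : M = N * D + 2 * X * ((-21 - 10 * d * X + 3 * X ^ 2) * D
      - N * (-5 * d - 42 * X + 3 * d * X ^ 2))) :
    M ^ 2 * (1 - 6 * d * X + X ^ 2)
      = d ^ 2 * (D ^ 4 - 6 * d * X * N ^ 2 * D ^ 2 + X ^ 2 * N ^ 4) := by
  have hN2 : N ^ 2 = -7 - 42 * d * X + 511 * X ^ 2 + 212 * d * X ^ 3 - 217 * X ^ 4
      - 10 * d * X ^ 5 + X ^ 6 := by
    rw [hN]; linear_combination (1 - 10 * X ^ 2 + 25 * X ^ 4) * hd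
  have hD2 : D ^ 2 = 1 - 10 * d * X - 217 * X ^ 2 + 212 * d * X ^ 3 + 511 * X ^ 4
      - 42 * d * X ^ 5 - 7 * X ^ 6 := by
    rw [hD]; linear_combination (25 * X ^ 2 - 10 * X ^ 4 + X ^ 6) * hd
  have hM' : M = d - 98 * X + 143 * d * X ^ 2 - 924 * X ^ 3 + 143 * d * X ^ 4 - 98 * X ^ 5
      + d * X ^ 6 := by
    rw [hM, hN, hD]; linear_combination (5 * X + 70 * X ^ 3 + 5 * X ^ 5) * hd
  rw [show D ^ 4 = (D ^ 2) ^ 2 by ring, show N ^ 4 = (N ^ 2) ^ 2 by ring, hN2, hD2, hM']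
  linear_combination (-28 * d * X + (1372 + 68 * d ^ 2) * X ^ 2
    + (-12528 * d + 2520 * d ^ 3) * X ^ 3 + (27244 + 18868 * d ^ 2) * X ^ 4
    + (-201284 * d - 66144 * d ^ 3) * X ^ 5 + (150584 + 231944 * d ^ 2) * X ^ 6
    + (-831840 * d + 280848 * d ^ 3) * X ^ 7 + (150584 + 231944 * d ^ 2) * X ^ 8
    + (-201284 * d - 66144 * d ^ 3) * X ^ 9 + (27244 + 18868 * d ^ 2) * X ^ 10
    + (-12528 * d + 2520 * d ^ 3) * X ^ 11 + (1372 + 68 * d ^ 2) * X ^ 12 - 28 * d * X ^ 13) * hd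

theorem coeff_eq_of_multiplication {F : Type*} [Field F] {p h : ℕ} [CharP F p]
    (hh : p = 2 * h + 1) (hh0 : h ≠ 0) {δ : F} (hδ : δ ^ 2 = -7) (hδ0 : δ ≠ 0)
    (G : F⟦X⟧) (hG : G ^ 2 * (1 - 2 * C (3 * δ) * X + X ^ 2) = 1) (hG0 : coeff 0 G = 1) :
    δ ^ p * coeff h G = δ * coeff h G := by
  set d : F⟦X⟧ := C δ with hd
  have hd2 : d ^ 2 = -7 := by
    rw [hd, ← map_pow, hδ, map_neg]; simp [map_ofNat]
  set f : F⟦X⟧ := 1 - 2 * C (3 * δ) * X + X ^ 2 with hf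
  have hf' : f = 1 - 6 * d * X + X ^ 2 := by
    rw [hf, map_mul, map_ofNat, ← hd]; ring
  set N : F⟦X⟧ := d - 21 * X - 5 * d * X ^ 2 + X ^ 3 with hN
  set D : F⟦X⟧ := 1 - 5 * d * X - 21 * X ^ 2 + d * X ^ 3 with hD
  have hD0 : constantCoeff D ≠ 0 := by simp [hD]
  set e := D⁻¹ with he
  have hDe : D * e = 1 := PowerSeries.mul_inv_cancel D hD0
  have hnat : ∀ m : ℕ, d⁄dX F (m : F⟦X⟧) = 0 := fun m => by
    rw [show (m : F⟦X⟧) = C (m : F) from (map_natCast C m).symm, derivative_C]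
  have h21 : d⁄dX F (21 : F⟦X⟧) = 0 := by exact_mod_cast hnat 21
  have h5 : d⁄dX F (5 : F⟦X⟧) = 0 := by exact_mod_cast hnat 5
  have hdN : d⁄dX F N = - 21 - 10 * d * X + 3 * X ^ 2 := by
    rw [hN]
    simp only [Derivation.leibniz, Derivation.leibniz_pow, map_add, map_sub, hd,
      derivative_C, derivative_X, h21, h5, smul_eq_mul, nsmul_eq_mul]
    push_cast; ring
  have hdD : d⁄dX F D = - 5 * d - 42 * X + 3 * d * X ^ 2 := by
    rw [hD]
    simp only [Derivation.leibniz, Derivation.leibniz_pow, map_add, map_sub, hd, derivative_one,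
      derivative_C, derivative_X, h21, h5, smul_eq_mul, nsmul_eq_mul]
    push_cast; ring
  set ρ := N * e with hρ
  have hdρ : d⁄dX F ρ = (- 21 - 10 * d * X + 3 * X ^ 2) * e -
      N * e ^ 2 * (- 5 * d - 42 * X + 3 * d * X ^ 2) := by
    rw [hρ, Derivation.leibniz, he, derivative_inv', ← he, hdN, hdD]
    simp only [smul_eq_mul]; ring
  set Ψ := ρ + 2 * (X * d⁄dX F ρ) with hΨ
  set y := X * ρ ^ 2 with hy
  have key : Ψ ^ 2 * f = d ^ 2 * (1 - 6 * d * y + y ^ 2) := by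
    set M := N * D + 2 * X * ((-21 - 10 * d * X + 3 * X ^ 2) * D
      - N * (-5 * d - 42 * X + 3 * d * X ^ 2)) with hM
    have h1 := delta_multiplication_identity hd2 hN hD hM
    have hΨe : Ψ = e ^ 2 * M := by
      rw [hΨ, hdρ, hρ, hM]
      linear_combination (-N * e - 2 * X * (-21 - 10 * d * X + 3 * X ^ 2) * e) * hDe
    have hDe4 : D ^ 4 * e ^ 4 = 1 := by rw [← mul_pow, hDe, one_pow]
    have hDe2 : D ^ 2 * e ^ 2 = 1 := by rw [← mul_pow, hDe, one_pow]
    rw [hΨe, hy, hρ, hf']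
    linear_combination e ^ 4 * h1 + d ^ 2 * hDe4 - d ^ 2 * 6 * d * X * N ^ 2 * e ^ 2 * hDe2
  set T := trunc (h + 1) G with hT
  set A := Polynomial.aeval y T with hA
  have hTf : (X : F⟦X⟧) ^ (h + 1) ∣ ((T ^ 2 * (1 - 6 * Polynomial.C δ * Polynomial.X +
      Polynomial.X ^ 2) - 1 : Polynomial F) : F⟦X⟧) := by
    have h1 : (X : F⟦X⟧) ^ (h + 1) ∣ (T : F⟦X⟧) - G := by
      rw [X_pow_dvd_iff]
      intro m hm
      simp [hT, coeff_trunc, hm]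
    have h6 : ((6 : Polynomial F) : F⟦X⟧) = 6 := map_ofNat (Polynomial.coeToPowerSeries.ringHom) 6
    have h2 : ((T ^ 2 * (1 - 6 * Polynomial.C δ * Polynomial.X +
      Polynomial.X ^ 2) - 1 : Polynomial F) : F⟦X⟧) = (T - G) * ((T + G) * f) := by
      push_cast
      rw [h6, hf', ← hd]
      rw [hf'] at hG
      linear_combination hG
    rw [h2]
    exact h1.mul_right _
  obtain ⟨q, hq⟩ : (Polynomial.X : Polynomial F) ^ (h + 1) ∣ T ^ 2 * (1 - 6 * Polynomial.C δ *
      Polynomial.X + Polynomial.X ^ 2) - 1 := by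
    rw [Polynomial.X_pow_dvd_iff]
    rw [X_pow_dvd_iff] at hTf
    intro m hm
    rw [← Polynomial.coeff_coe]
    exact hTf m hm
  have hAf : (X : F⟦X⟧) ^ (h + 1) ∣ A ^ 2 * (1 - 6 * d * y + y ^ 2) - 1 := by
    have := congrArg (Polynomial.aeval y) hq
    simp only [map_sub, map_mul, map_add, map_pow, map_one, Polynomial.aeval_X,
      Polynomial.aeval_C, map_ofNat, ← hA] at this
    rw [show (algebraMap F F⟦X⟧) δ = d from rfl] at this
    rw [this, hy, mul_pow, mul_assoc]
    exact dvd_mul_right _ _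
  have hprod : (X : F⟦X⟧) ^ (h + 1) ∣ (A * Ψ - d * G) * (A * Ψ + d * G) := by
    have : (A * Ψ - d * G) * (A * Ψ + d * G)
        = (A ^ 2 * (1 - 6 * d * y + y ^ 2) - 1) * (d ^ 2 * G ^ 2) := by
      linear_combination A ^ 2 * G ^ 2 * key - A ^ 2 * Ψ ^ 2 * hG
    rw [this]
    exact hAf.mul_right _
  have hρ0 : constantCoeff ρ = δ := by
    have := congrArg constantCoeff hDe
    simp [hD] at this
    simp [hρ, hN, this, hd]
  have hΨ0 : constantCoeff Ψ = δ := by simp [hΨ, hρ0]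
  have hy0 : constantCoeff y = 0 := by simp [hy]
  have hAsum : A = ∑ k ∈ range (h + 1), C (coeff k G) * y ^ k := by
    rw [hA, hT, Polynomial.aeval_eq_sum_range' (n := h + 1) (natDegree_trunc_lt G h)]
    refine Finset.sum_congr rfl fun k hk => ?_
    rw [coeff_trunc, if_pos (mem_range.1 hk), smul_eq_C_mul]
  have hA0 : constantCoeff A = 1 := by
    rw [hAsum, Finset.sum_range_succ', map_add, map_sum, Finset.sum_eq_zero, zero_add]
    · simpa using hG0
    · intro k _
      simp [hy0]
  have h20 : (2 : F) ≠ 0 := by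
    have : ((2 : ℕ) : F) ≠ 0 := by
      rw [Ne, CharP.cast_eq_zero_iff F p]
      exact fun hdv => absurd (Nat.le_of_dvd (by omega) hdv) (by omega)
    exact_mod_cast this
  have hunit : IsUnit (A * Ψ + d * G) := by
    rw [PowerSeries.isUnit_iff_constantCoeff]
    have : constantCoeff (A * Ψ + d * G) = 2 * δ := by
      rw [coeff_zero_eq_constantCoeff_apply] at hG0
      rw [map_add, map_mul, map_mul, hA0, hΨ0, hG0, hd, constantCoeff_C]; ring
    rw [this]
    exact (mul_ne_zero h20 hδ0).isUnit
  have hdvd : (X : F⟦X⟧) ^ (h + 1) ∣ A * Ψ - d * G := (hunit.dvd_mul_right).1 hprod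
  have hc := (X_pow_dvd_iff.1 hdvd) h (Nat.lt_succ_self h)
  rw [map_sub, hd, coeff_C_mul, sub_eq_zero] at hc
  rw [← hc]
  rw [hAsum, Finset.sum_mul, map_sum, Finset.sum_range_succ, Finset.sum_eq_zero, zero_add]
  · rw [hy, show C (coeff h G) * (X * ρ ^ 2) ^ h * Ψ = C (coeff h G) * (X ^ h * (ρ ^ (2 * h) * Ψ)) by
      rw [mul_pow, ← pow_mul]; ring, coeff_C_mul]
    have := coeff_X_pow_mul (ρ ^ (2 * h) * Ψ) h 0
    rw [zero_add] at this
    rw [this, coeff_zero_eq_constantCoeff_apply, map_mul, map_pow, hρ0, hΨ0, hh]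
    ring
  · intro k hk
    rw [mem_range] at hk
    rw [hy, show C (coeff k G) * (X * ρ ^ 2) ^ k * Ψ = C (coeff k G) * (X ^ k * (ρ ^ (2 * k) * Ψ)) by
      rw [mul_pow, ← pow_mul]; ring, coeff_C_mul]
    have := coeff_X_pow_mul (ρ ^ (2 * k) * Ψ) k (h - k)
    rw [Nat.sub_add_cancel hk.le] at this
    rw [this]
    have h1 := coeff_pow_mul_add_derivative ρ k (h - k)
    have h2 : (2 * (k : F) + 1 + 2 * ((h - k : ℕ) : F)) = 0 := by
      have : ((2 * k + 1 + 2 * (h - k) : ℕ) : F) = 0 := by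
        rw [show 2 * k + 1 + 2 * (h - k) = p by omega, CharP.cast_eq_zero]
      exact_mod_cast this
    have h3 : (2 * (k : F) + 1) ≠ 0 := by
      have : ((2 * k + 1 : ℕ) : F) ≠ 0 := by
        rw [Ne, CharP.cast_eq_zero_iff F p]
        exact fun hdv => absurd (Nat.le_of_dvd (by omega) hdv) (by omega)
      exact_mod_cast this
    rw [h2, zero_mul] at h1
    rw [(mul_eq_zero.1 h1).resolve_left h3, mul_zero]

end
end shiftedLegendrePoly

theorem legendreSym_neg_seven {p : ℕ} [Fact p.Prime] (h2 : p ≠ 2)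
    (h : p % 7 = 3 ∨ p % 7 = 5 ∨ p % 7 = 6) : legendreSym p (-7) = -1 := by
  have : Fact (Nat.Prime 7) := ⟨by norm_num⟩
  have h1 : legendreSym p (-1) = (-1) ^ (p / 2) := by
    rw [legendreSym.at_neg_one h2]
    exact ZMod.χ₄_eq_neg_one_pow ((Fact.out : p.Prime).eq_two_or_odd.resolve_left h2)
  have h3 := legendreSym.quadratic_reciprocity' (p := 7) (q := p) (by norm_num) h2
  have h4 : legendreSym 7 p = -1 := by
    rw [legendreSym.mod]
    have : ((p : ℤ) % (7 : ℕ)) = ((p % 7 : ℕ) : ℤ) := by push_cast; rfl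
    rw [this]
    have d3 : @legendreSym 7 ⟨by norm_num⟩ (3 : ℕ) = -1 := by decide
    have d5 : @legendreSym 7 ⟨by norm_num⟩ (5 : ℕ) = -1 := by decide
    have d6 : @legendreSym 7 ⟨by norm_num⟩ (6 : ℕ) = -1 := by decide
    rcases h with h | h | h <;> rw [h]
    exacts [d3, d5, d6]
  rw [show (-7 : ℤ) = (-1) * (7 : ℕ) by norm_num, legendreSym.mul, h1, h3, h4, ← mul_assoc,
    ← pow_add, show p / 2 + 7 / 2 * (p / 2) = 2 * (2 * (p / 2)) by omega, pow_mul]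
  norm_num

namespace shiftedLegendrePoly

theorem sq_dvd_of_inert_aux (F : Type*) [Field F] [IsAlgClosed F] {p h : ℕ} [CharP F p] (hp : p.Prime)
    (hh : p = 2 * h + 1) (h3 : p ≠ 3)
    (h7 : p % 7 = 3 ∨ p % 7 = 5 ∨ p % 7 = 6) :
    (p : ℤ) ^ 2 ∣ ∑ k ∈ range (h + 1), clausenCoeff h k * (-16) ^ k := by
  have : Fact p.Prime := ⟨hp⟩
  have h2 : p ≠ 2 := by omega
  have hh1 : h ≠ 0 := by rintro rfl; exact hp.one_lt.ne' (by omega)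
  have hne : ∀ m : ℤ, ¬ (p : ℤ) ∣ m → (m : F) ≠ 0 := fun m hm h0 =>
    hm ((CharP.intCast_eq_zero_iff F p m).1 h0)
  have hp3 : (3 : F) ≠ 0 := by
    have := hne 3 (by
      intro hd
      have : p ∣ 3 := by exact_mod_cast hd
      exact h3 ((Nat.prime_dvd_prime_iff_eq hp Nat.prime_three).1 this))
    exact_mod_cast this
  have hp2 : (2 : F) ≠ 0 := by
    have := hne 2 (by
      intro hd
      have : p ∣ 2 := by exact_mod_cast hd
      exact h2 ((Nat.prime_dvd_prime_iff_eq hp Nat.prime_two).1 this))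
    exact_mod_cast this
  have hp7 : (7 : F) ≠ 0 := by
    have := hne 7 (by
      intro hd
      have : p ∣ 7 := by exact_mod_cast hd
      have := (Nat.prime_dvd_prime_iff_eq hp (by norm_num)).1 this
      omega)
    exact_mod_cast this
  obtain ⟨δ, hδ⟩ : ∃ δ : F, δ ^ 2 = -7 := IsAlgClosed.exists_pow_nat_eq _ (by norm_num)
  have hδ0 : δ ≠ 0 := by rintro rfl; simp at hδ; exact hp7 hδ
  have hδp : δ ^ p = -δ := by
    have h1 := legendreSym.eq_pow p (-7)
    rw [legendreSym_neg_seven h2 h7, show p / 2 = h by omega] at h1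
    have h4 := congrArg (ZMod.castHom (dvd_refl p) F) h1
    push_cast at h4
    simp only [map_neg, map_one, map_pow, map_ofNat] at h4
    have h5 : δ ^ p = δ * (δ ^ 2) ^ h := by
      rw [← pow_mul, ← pow_succ', ← hh]
    rw [h5, hδ, ← h4]; ring
  set z : F := (3 * δ - 1) / 2 with hz
  have hz2 : 2 * z = 3 * δ - 1 := by rw [hz]; field_simp
  have hz4 : z + z ^ 2 = -16 := by
    have h4 : (4 : F) ≠ 0 := by
      rw [show (4 : F) = 2 * 2 by norm_num]; exact mul_ne_zero hp2 hp2
    apply mul_left_cancel₀ h4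
    linear_combination (2 * z + 1 + 3 * δ) * hz2 + 9 * hδ
  have hP0 : Polynomial.aeval z (shiftedLegendrePoly h) = 0 := by
    have hG := generating_function_aeval z
    rw [show 1 + 2 * z = 3 * δ by rw [hz2]; ring] at hG
    have := coeff_eq_of_multiplication hh hh1 hδ hδ0 _ hG (by simp [zero_eq])
    rw [PowerSeries.coeff_mk, hδp] at this
    have h5 : (2 * δ) * Polynomial.aeval z (shiftedLegendrePoly h) = 0 := by
      linear_combination - this
    exact (mul_eq_zero.1 h5).resolve_left (mul_ne_zero hp2 hδ0)
  let φ : QuadraticAlgebra ℤ (-16) (-1) →ₐ[ℤ] F :=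
    QuadraticAlgebra.lift ⟨z, by simp; linear_combination hz4⟩
  set w : QuadraticAlgebra ℤ (-16) (-1) := ⟨0, 1⟩ with hw
  have hφw : φ w = z := by
    simp [φ, hw, QuadraticAlgebra.lift]
  set q := Polynomial.aeval w (shiftedLegendrePoly h) with hq
  have hφ : φ q = (q.re : F) + q.im * z := by
    simp [φ, QuadraticAlgebra.lift]
  have hφ0 : φ q = 0 := by
    rw [hq, ← Polynomial.aeval_algHom_apply, hφw, hP0]
  rw [hφ] at hφ0
  have hfrob := congrArg (frobenius F p) hφ0
  rw [map_add, map_mul, map_intCast, map_intCast, map_zero, frobenius_def] at hfrob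
  have hzp : z ^ p ≠ z := by
    intro hc
    have h1 := congrArg (frobenius F p) hz2
    simp only [map_mul, map_sub, map_ofNat, map_one, frobenius_def, hc, hδp] at h1
    have h6 : (2 * (3 * δ) : F) = 0 := by linear_combination h1 - hz2
    exact mul_ne_zero hp2 (mul_ne_zero hp3 hδ0) h6
  have him : (q.im : F) = 0 := by
    have : (q.im : F) * (z ^ p - z) = 0 := by linear_combination hfrob - hφ0
    exact (mul_eq_zero.1 this).resolve_right (sub_ne_zero.2 hzp)
  have hre : (q.re : F) = 0 := by simpa [him] using hφ0
  rw [CharP.intCast_eq_zero_iff F p] at him hre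
  obtain ⟨a, ha⟩ := hre
  obtain ⟨b, hb⟩ := him
  have hw16 : w + w ^ 2 = ((-16 : ℤ) : QuadraticAlgebra ℤ (-16) (-1)) := by
    rw [sq, hw]
    ext
    · rw [QuadraticAlgebra.re_intCast]; simp
    · rw [QuadraticAlgebra.im_intCast]; simp
  have hsq := aeval_sq (z := w) (w := -16) hw16 h
  rw [← hq] at hsq
  have hre := congrArg QuadraticAlgebra.re hsq
  rw [sq, QuadraticAlgebra.re_mul, ha, hb, QuadraticAlgebra.re_intCast, Int.cast_id] at hre
  rw [← hre]
  exact ⟨a ^ 2 - 16 * b ^ 2, by ring⟩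

theorem sq_dvd_of_inert {p h : ℕ} (hp : p.Prime) (hh : p = 2 * h + 1) (h3 : p ≠ 3)
    (h7 : p % 7 = 3 ∨ p % 7 = 5 ∨ p % 7 = 6) :
    (p : ℤ) ^ 2 ∣ ∑ k ∈ range (h + 1), clausenCoeff h k * (-16) ^ k := by
  have : Fact p.Prime := ⟨hp⟩
  have : CharP (AlgebraicClosure (ZMod p)) p :=
    charP_of_injective_algebraMap (algebraMap (ZMod p) (AlgebraicClosure (ZMod p))).injective p
  exact sq_dvd_of_inert_aux (AlgebraicClosure (ZMod p)) hp hh h3 h7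

end shiftedLegendrePoly

section
open PowerSeries
variable {k : Type*} [Field k] [CharZero k]

namespace PowerSeries

/-- The formal antiderivative with vanishing constant term. -/
noncomputable def antideriv (f : k⟦X⟧) : k⟦X⟧ := mk fun n => coeff (n - 1) f / n

theorem derivative_antideriv (f : k⟦X⟧) : d⁄dX k (antideriv f) = f := by
  ext n
  have : ((n : k) + 1) ≠ 0 := Nat.cast_add_one_ne_zero n
  rw [coeff_derivative, antideriv, coeff_mk]
  push_cast
  field_simp

theorem constantCoeff_antideriv (f : k⟦X⟧) : constantCoeff (antideriv f) = 0 := by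
  rw [← coeff_zero_eq_constantCoeff_apply, antideriv, coeff_mk]; simp

theorem X_pow_succ_dvd_of_derivative {f : k⟦X⟧} {n : ℕ} (h0 : constantCoeff f = 0)
    (h : (X : k⟦X⟧) ^ n ∣ d⁄dX k f) : (X : k⟦X⟧) ^ (n + 1) ∣ f := by
  rw [X_pow_dvd_iff] at h ⊢
  rintro (_ | m) hm
  · simpa using h0
  · have := h m (by omega)
    rw [coeff_derivative] at this
    exact (mul_eq_zero.1 this).resolve_right (Nat.cast_add_one_ne_zero m)

theorem eq_of_forall_X_pow_dvd_sub {R : Type*} [CommRing R] {f g : R⟦X⟧}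
    (h : ∀ n, (X : R⟦X⟧) ^ n ∣ f - g) : f = g := by
  ext n
  have := (X_pow_dvd_iff.1 (h (n + 1))) n (Nat.lt_succ_self n)
  rwa [map_sub, sub_eq_zero] at this

theorem exists_fixed_point {R : Type*} [CommRing R] (Φ : R⟦X⟧ → R⟦X⟧)
    (hΦ : ∀ f g n, (X : R⟦X⟧) ^ n ∣ f - g → (X : R⟦X⟧) ^ (n + 1) ∣ Φ f - Φ g) :
    ∃ f, Φ f = f := by
  set u : ℕ → R⟦X⟧ := fun n => Φ^[n] 0 with hu
  have hs : ∀ n, u (n + 1) = Φ (u n) := fun n => Function.iterate_succ_apply' Φ n 0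
  have h1 : ∀ n, (X : R⟦X⟧) ^ n ∣ u (n + 1) - u n := by
    intro n
    induction n with
    | zero => simp
    | succ n ih => rw [hs (n + 1)]; nth_rewrite 2 [hs n]; exact hΦ _ _ _ ih
  have h2 : ∀ n m, (X : R⟦X⟧) ^ n ∣ u (n + m) - u n := by
    intro n m
    induction m with
    | zero => simp
    | succ m ih =>
      have := dvd_add ((pow_dvd_pow (X : R⟦X⟧) (Nat.le_add_right n m)).trans (h1 (n + m))) ih
      rwa [sub_add_sub_cancel] at this
  set f : R⟦X⟧ := mk fun n => coeff n (u (n + 1)) with hf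
  have h3 : ∀ n, (X : R⟦X⟧) ^ n ∣ f - u n := by
    intro n
    rw [X_pow_dvd_iff]
    intro m hm
    have := (X_pow_dvd_iff.1 (h2 (m + 1) (n - (m + 1)))) m (Nat.lt_succ_self m)
    rw [Nat.add_sub_cancel' (by omega), map_sub, sub_eq_zero] at this
    rw [map_sub, hf, coeff_mk, this, sub_self]
  refine ⟨f, eq_of_forall_X_pow_dvd_sub fun n => ?_⟩
  have h4 := (pow_dvd_pow (X : R⟦X⟧) (Nat.le_succ n)).trans (hΦ _ _ n (h3 n))
  have h5 := (pow_dvd_pow (X : R⟦X⟧) (Nat.le_succ n)).trans (h3 (n + 1))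
  rw [hs n] at h5
  have := dvd_sub h4 h5
  rwa [sub_sub_sub_cancel_right] at this

theorem derivative_rescale (a : k) (f : k⟦X⟧) :
    d⁄dX k (rescale a f) = C a * rescale a (d⁄dX k f) := by
  ext n
  rw [coeff_derivative, coeff_rescale, coeff_C_mul, coeff_rescale, coeff_derivative]
  ring

end PowerSeries

theorem exists_jacobiSn (t : k) : ∃ S : k⟦X⟧, constantCoeff S = 0 ∧
    constantCoeff (d⁄dX k S) = 1 ∧ d⁄dX k (d⁄dX k S) = - 2 * C t * S + 2 * S ^ 3 := by
  obtain ⟨S, hS⟩ := exists_fixed_point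
    (fun S : k⟦X⟧ => antideriv (1 + antideriv (- 2 * C t * S + 2 * S ^ 3))) (by
      intro f g n h
      apply X_pow_succ_dvd_of_derivative
      · simp [constantCoeff_antideriv]
      · rw [map_sub, derivative_antideriv, derivative_antideriv]
        refine (pow_dvd_pow _ (Nat.le_succ n)).trans (X_pow_succ_dvd_of_derivative ?_ ?_)
        · simp [constantCoeff_antideriv]
        · rw [map_sub, map_add, map_add, derivative_antideriv, derivative_antideriv,
            add_sub_add_left_eq_sub]
          convert h.mul_right (- 2 * C t + 2 * (f ^ 2 + f * g + g ^ 2)) using 1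
          ring)
  have h1 : d⁄dX k S = 1 + antideriv (- 2 * C t * S + 2 * S ^ 3) := by
    nth_rewrite 1 [← hS]; rw [derivative_antideriv]
  refine ⟨S, ?_, ?_, ?_⟩
  · rw [← hS, constantCoeff_antideriv]
  · rw [h1]; simp [constantCoeff_antideriv]
  · rw [h1, map_add, derivative_antideriv, derivative_one, zero_add]

/-- The formal solution of `(S')² = 1 - 2 t S² + S⁴` with `S(0) = 0`, `S'(0) = 1`. -/
noncomputable def jacobiSn (t : k) : k⟦X⟧ := (exists_jacobiSn t).choose

/-- The derivative of `jacobiSn`. -/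
noncomputable def jacobiCd (t : k) : k⟦X⟧ := d⁄dX k (jacobiSn t)

/-- `jacobiSn` at the argument `μ u`. -/
noncomputable def snMul (t μ : k) : k⟦X⟧ := rescale μ (jacobiSn t)

/-- `jacobiCd` at the argument `μ u`. -/
noncomputable def cdMul (t μ : k) : k⟦X⟧ := rescale μ (jacobiCd t)

theorem constantCoeff_rescale (a : k) (f : k⟦X⟧) :
    constantCoeff (rescale a f) = constantCoeff f := by
  rw [← coeff_zero_eq_constantCoeff_apply, coeff_rescale]; simp

variable (t μ : k)

@[simp] theorem constantCoeff_snMul : constantCoeff (snMul t μ) = 0 := by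
  rw [snMul, constantCoeff_rescale]; exact (exists_jacobiSn t).choose_spec.1

@[simp] theorem constantCoeff_cdMul : constantCoeff (cdMul t μ) = 1 := by
  rw [cdMul, constantCoeff_rescale]; exact (exists_jacobiSn t).choose_spec.2.1

theorem derivative_snMul : d⁄dX k (snMul t μ) = C μ * cdMul t μ := by
  rw [snMul, derivative_rescale]; rfl

theorem derivative_cdMul :
    d⁄dX k (cdMul t μ) = C μ * (- 2 * C t * snMul t μ + 2 * snMul t μ ^ 3) := by
  have h2 : d⁄dX k (d⁄dX k (jacobiSn t)) = - 2 * C t * jacobiSn t + 2 * jacobiSn t ^ 3 :=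
    (exists_jacobiSn t).choose_spec.2.2
  rw [cdMul, derivative_rescale, jacobiCd, h2]
  have h : rescale μ (C t : k⟦X⟧) = C t := by
    ext n; rw [coeff_rescale, coeff_C]; split_ifs with h <;> simp [h]
  simp only [map_add, map_mul, map_neg, map_ofNat, map_pow, h]
  rfl

theorem derivative_two : d⁄dX k (2 : k⟦X⟧) = 0 := by
  rw [show (2 : k⟦X⟧) = C 2 from (map_ofNat C 2).symm, derivative_C]

theorem cdMul_sq : cdMul t μ ^ 2 = 1 - 2 * C t * snMul t μ ^ 2 + snMul t μ ^ 4 := by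
  apply derivative.ext
  · simp only [Derivation.leibniz, Derivation.leibniz_pow, map_add, map_sub, derivative_one,
      derivative_C, derivative_snMul, derivative_cdMul, derivative_two, smul_eq_mul,
      nsmul_eq_mul]
    push_cast
    ring
  · simp

theorem snMul_unique {T V : k⟦X⟧} (hT0 : constantCoeff T = 0) (hV0 : constantCoeff V = 1)
    (hT : d⁄dX k T = C μ * V) (hV : V ^ 2 = 1 - 2 * C t * T ^ 2 + T ^ 4) :
    T = snMul t μ ∧ V = cdMul t μ := by
  have hV' : d⁄dX k V = C μ * (- 2 * C t * T + 2 * T ^ 3) := by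
    have hV1 : (2 * V : k⟦X⟧) ≠ 0 := by
      intro h
      have := congrArg constantCoeff h
      rw [map_mul, map_ofNat, hV0, map_zero] at this
      norm_num at this
    apply mul_left_cancel₀ hV1
    have := congrArg (d⁄dX k) hV
    simp only [Derivation.leibniz, Derivation.leibniz_pow, map_add, map_sub, derivative_one,
      derivative_C, derivative_two, smul_eq_mul, nsmul_eq_mul, hT] at this
    push_cast at this
    linear_combination this
  have key : ∀ n, (X : k⟦X⟧) ^ n ∣ T - snMul t μ ∧ (X : k⟦X⟧) ^ n ∣ V - cdMul t μ := by
    intro n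
    induction n with
    | zero => simp
    | succ n ih =>
      constructor
      · apply X_pow_succ_dvd_of_derivative
        · simp [hT0]
        · rw [map_sub, hT, derivative_snMul, ← mul_sub]
          exact ih.2.mul_left _
      · apply X_pow_succ_dvd_of_derivative
        · simp [hV0]
        · rw [map_sub, hV', derivative_cdMul]
          convert ih.1.mul_right (C μ * (- 2 * C t + 2 * (T ^ 2 + T * snMul t μ + snMul t μ ^ 2)))
            using 1
          ring
  exact ⟨eq_of_forall_X_pow_dvd_sub fun n => (key n).1,
    eq_of_forall_X_pow_dvd_sub fun n => (key n).2⟩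

end

section
open PowerSeries
variable {k : Type*} [Field k] [CharZero k] (t : k)

theorem sn_addition (a b : k) :
    snMul t (a + b) * (1 - snMul t a ^ 2 * snMul t b ^ 2) =
      snMul t a * cdMul t b + snMul t b * cdMul t a ∧
    cdMul t (a + b) * (1 - snMul t a ^ 2 * snMul t b ^ 2) ^ 2 =
      (1 + snMul t a ^ 2 * snMul t b ^ 2) *
        (cdMul t a * cdMul t b - 2 * C t * snMul t a * snMul t b) +
        2 * snMul t a * snMul t b * (snMul t a ^ 2 + snMul t b ^ 2) := by
  have hw := cdMul_sq t a
  have hv := cdMul_sq t b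
  have ds := derivative_snMul t a
  have du := derivative_snMul t b
  have dw := derivative_cdMul t a
  have dv := derivative_cdMul t b
  have cs := constantCoeff_snMul t a
  have cu := constantCoeff_snMul t b
  have cw := constantCoeff_cdMul t a
  have cv := constantCoeff_cdMul t b
  generalize snMul t a = s at *
  generalize snMul t b = u at *
  generalize cdMul t a = w at *
  generalize cdMul t b = v at *
  obtain ⟨D, hD⟩ : ∃ D, D = 1 - s ^ 2 * u ^ 2 := ⟨_, rfl⟩
  obtain ⟨N, hN⟩ : ∃ N, N = (1 + s ^ 2 * u ^ 2) * (w * v - 2 * C t * s * u) +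
    2 * s * u * (s ^ 2 + u ^ 2) := ⟨_, rfl⟩
  have hD0 : constantCoeff D = 1 := by simp [hD, cs]
  have hDE : D * D⁻¹ = 1 := PowerSeries.mul_inv_cancel _ (by simp [hD0])
  have dE : d⁄dX k D⁻¹ = -D⁻¹ ^ 2 * d⁄dX k D := derivative_inv' D
  have dD : d⁄dX k D = -2 * s * u * (s * (C b * v) + u * (C a * w)) := by
    rw [hD]
    simp only [Derivation.leibniz, Derivation.leibniz_pow, map_sub, derivative_one, smul_eq_mul,
      nsmul_eq_mul, ds, du]
    push_cast
    ring
  have key := snMul_unique t (a + b) (T := (s * v + u * w) * D⁻¹) (V := N * D⁻¹ ^ 2)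
    (by simp [cs, cu]) (by simp [hN, cs, cw, cv, hD0])
    (by
      simp only [Derivation.leibniz, map_add, smul_eq_mul, ds, du, dw, dv, dE, dD]
      generalize D⁻¹ = E at *
      linear_combination (E * (s * (C b * (-2 * C t * u + 2 * u ^ 3)) + v * (C a * w) +
        u * (C a * (-2 * C t * s + 2 * s ^ 3)) + w * (C b * v))) * (-hDE + E * hD)
        + E ^ 2 * ((2 * C a * s * u ^ 3) * hw + (2 * C b * s ^ 3 * u) * hv)
        - E ^ 2 * (C a + C b) * hN)
    (by
      have h : N ^ 2 = D ^ 4 - 2 * C t * (s * v + u * w) ^ 2 * D ^ 2 + (s * v + u * w) ^ 4 := by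
        rw [hN, hD]
        generalize C t = t at *
        linear_combination (v ^ 2 - u ^ 4 - u ^ 4 * w ^ 2 - 4 * s * u ^ 3 * w * v
          - 4 * s ^ 2 * u ^ 2 * v ^ 2 - s ^ 4 * u ^ 4 + s ^ 4 * u ^ 4 * v ^ 2 + 2 * t * u ^ 2
          - 2 * t * s ^ 2 * u ^ 4 + 2 * t * s ^ 4 * u ^ 6) * hw +
          (1 - 4 * s ^ 2 * u ^ 2 - 4 * s ^ 3 * u * w * v - s ^ 4 * v ^ 2 - 4 * s ^ 6 * u ^ 2
          + s ^ 8 * u ^ 4 + 6 * t * s ^ 4 * u ^ 2) * hv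
      generalize D⁻¹ = E at *
      have h2 : D ^ 2 * E ^ 2 = 1 := by rw [← mul_pow, hDE, one_pow]
      linear_combination E ^ 4 * h + (1 + D ^ 2 * E ^ 2
        - 2 * C t * (s * v + u * w) ^ 2 * E ^ 2) * h2)
  rw [← key.1, ← key.2, ← hD, ← hN]
  generalize D⁻¹ = E at *
  constructor
  · linear_combination (s * v + u * w) * hDE
  · linear_combination N * (D * E + 1) * hDE

theorem sn_neg (a : k) : snMul t (-a) = -snMul t a ∧ cdMul t (-a) = cdMul t a := by
  have := snMul_unique t (-a) (T := -snMul t a) (V := cdMul t a) (by simp) (by simp)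
    (by rw [map_neg, derivative_snMul, map_neg, neg_mul]) (by rw [cdMul_sq]; ring)
  exact ⟨this.1.symm, this.2.symm⟩

theorem sn_zero : snMul t 0 = 0 ∧ cdMul t 0 = 1 := by
  have := snMul_unique t 0 (T := 0) (V := 1) (by simp) (by simp) (by simp) (by simp)
  exact ⟨this.1.symm, this.2.symm⟩

theorem sn_add_mul_sn_sub (a b : k) :
    snMul t (a + b) * snMul t (a - b) * (1 - snMul t a ^ 2 * snMul t b ^ 2) =
      snMul t a ^ 2 - snMul t b ^ 2 := by
  have h1 := (sn_addition t a b).1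
  have h2 := (sn_addition t a (-b)).1
  rw [(sn_neg t b).1, (sn_neg t b).2, ← sub_eq_add_neg] at h2
  have hw := cdMul_sq t a
  have hv := cdMul_sq t b
  have hD : (1 - snMul t a ^ 2 * snMul t b ^ 2 : k⟦X⟧) ≠ 0 := fun h => by
    simpa using congrArg constantCoeff h
  generalize snMul t a = s at *
  generalize snMul t b = u at *
  generalize cdMul t a = w at *
  generalize cdMul t b = v at *
  apply mul_right_cancel₀ hD
  linear_combination snMul t (a - b) * (1 - s ^ 2 * u ^ 2) * h1 + (s * v + u * w) * h2
    + s ^ 2 * hv - u ^ 2 * hw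

theorem sn_sq_add_add_sn_sq_sub (a b : k) :
    (snMul t (a + b) ^ 2 + snMul t (a - b) ^ 2) * (1 - snMul t a ^ 2 * snMul t b ^ 2) ^ 2 =
      2 * (snMul t a ^ 2 * (1 - 2 * C t * snMul t b ^ 2 + (snMul t b ^ 2) ^ 2) +
        snMul t b ^ 2 * (1 - 2 * C t * snMul t a ^ 2 + (snMul t a ^ 2) ^ 2)) := by
  have h1 := (sn_addition t a b).1
  have h2 := (sn_addition t a (-b)).1
  rw [(sn_neg t b).1, (sn_neg t b).2, ← sub_eq_add_neg] at h2
  have hw := cdMul_sq t a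
  have hv := cdMul_sq t b
  generalize snMul t a = s at *
  generalize snMul t b = u at *
  generalize cdMul t a = w at *
  generalize cdMul t b = v at *
  linear_combination (snMul t (a + b) * (1 - s ^ 2 * u ^ 2) + (s * v + u * w)) * h1 +
    (snMul t (a - b) * (1 - s ^ 2 * u ^ 2) + (s * v - u * w)) * h2
    + 2 * s ^ 2 * hv + 2 * u ^ 2 * hw

end

section
open Polynomial
variable {k : Type*} [Field k]

theorem not_common_zero_of_addition {K : Type*} [Field K] {p₁ q₁ p₂ q₂ t : K} (h2 : (2 : K) ≠ 0)
    (ht : t ^ 2 ≠ 1) (hc₁ : ¬(p₁ = 0 ∧ q₁ = 0)) (hc₂ : ¬(p₂ = 0 ∧ q₂ = 0))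
    (hA : q₁ * q₂ - p₁ * p₂ = 0) (hE : p₁ * q₂ - p₂ * q₁ = 0) :
    2 * (p₁ * q₁ * (q₂ ^ 2 - 2 * t * p₂ * q₂ + p₂ ^ 2) +
      p₂ * q₂ * (q₁ ^ 2 - 2 * t * p₁ * q₁ + p₁ ^ 2)) ≠ 0 := by
  have hq₁ : q₁ ≠ 0 := by
    rintro rfl
    have hp : p₁ ≠ 0 := fun h => hc₁ ⟨h, rfl⟩
    refine hc₂ ⟨?_, ?_⟩
    · apply mul_left_cancel₀ hp; linear_combination -hA
    · apply mul_left_cancel₀ hp; linear_combination hE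
  have hq₂ : q₂ ≠ 0 := by
    rintro rfl
    have hp : p₂ ≠ 0 := fun h => hc₂ ⟨h, rfl⟩
    refine hc₁ ⟨?_, ?_⟩
    · apply mul_left_cancel₀ hp; linear_combination -hA
    · apply mul_left_cancel₀ hp; linear_combination -hE
  have hp : (p₁ - q₁) * (p₁ + q₁) = 0 := by
    apply mul_left_cancel₀ hq₂
    linear_combination p₁ * hE - q₁ * hA
  intro hH
  rcases mul_eq_zero.1 hp with h | h
  · have e₁ : p₁ = q₁ := sub_eq_zero.1 h
    subst e₁
    have e₂ : p₂ = q₂ := by apply mul_left_cancel₀ hq₁; linear_combination -hE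
    subst e₂
    have : (2 * p₁ * p₂) ^ 2 * 2 * (1 - t) = 0 := by linear_combination hH
    have h1 : (1 - t) ≠ 0 := fun h => ht (by linear_combination -(1 + t) * h)
    simp [h2, hq₁, hq₂, h1] at this
  · have e₁ : p₁ = -q₁ := eq_neg_of_add_eq_zero_left h
    subst e₁
    have e₂ : p₂ = -q₂ := by apply mul_left_cancel₀ hq₁; linear_combination -hE
    subst e₂
    have : (2 * q₁ * q₂) ^ 2 * 2 * (1 + t) = 0 := by linear_combination -hH
    have h1 : (1 + t) ≠ 0 := fun h => ht (by linear_combination (t - 1) * h)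
    simp [h2, hq₁, hq₂, h1] at this

theorem isCoprime_of_addition [CharZero k] {P₁ Q₁ P₂ Q₂ P Q P' Q' : k[X]} {t : k} (ht : t ^ 2 ≠ 1)
    (hc₁ : IsCoprime P₁ Q₁) (hc₂ : IsCoprime P₂ Q₂)
    (hQ : Q * Q' = (Q₁ * Q₂ - P₁ * P₂) ^ 2) (hP : P * P' = (P₁ * Q₂ - P₂ * Q₁) ^ 2)
    (hH : Q' * P + P' * Q = 2 * (P₁ * Q₁ * (Q₂ ^ 2 - 2 * C t * P₂ * Q₂ + P₂ ^ 2) +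
      P₂ * Q₂ * (Q₁ ^ 2 - 2 * C t * P₁ * Q₁ + P₁ ^ 2))) : IsCoprime P Q := by
  rw [← Ideal.isCoprime_span_singleton_iff, Ideal.isCoprime_iff_sup_eq]
  by_contra hne
  obtain ⟨m, hm, hle⟩ := Ideal.exists_le_maximal _ hne
  let _ := Ideal.Quotient.field m
  have hP0 : Ideal.Quotient.mk m P = 0 := Ideal.Quotient.eq_zero_iff_mem.2
    (hle (Ideal.mem_sup_left (Ideal.mem_span_singleton_self P)))
  have hQ0 : Ideal.Quotient.mk m Q = 0 := Ideal.Quotient.eq_zero_iff_mem.2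
    (hle (Ideal.mem_sup_right (Ideal.mem_span_singleton_self Q)))
  generalize Ideal.Quotient.mk m = f at *
  have hcop : ∀ {A B : k[X]}, IsCoprime A B → ¬(f A = 0 ∧ f B = 0) := by
    rintro A B ⟨a, b, h⟩ ⟨hA, hB⟩
    have := congrArg f h
    simp [hA, hB] at this
  have hC : ∀ a : k, a ≠ 0 → f (C a) ≠ 0 := fun a ha h => by
    have := congrArg f (show C a * C a⁻¹ = 1 by rw [← C_mul, mul_inv_cancel₀ ha, C_1])
    simp [h] at this
  have h2 : (2 : k[X] ⧸ m) ≠ 0 := by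
    have := hC 2 two_ne_zero
    rwa [map_ofNat, map_ofNat] at this
  have ht' : f (C t) ^ 2 ≠ 1 := fun h => by
    apply hC (t ^ 2 - 1) (sub_ne_zero.2 ht)
    rw [C_sub, C_pow, C_1, map_sub, map_pow, h, map_one, sub_self]
  refine not_common_zero_of_addition h2 ht' (hcop hc₁) (hcop hc₂) ?_ ?_ ?_
  · have := congrArg f hQ
    rw [map_mul, hQ0, zero_mul, map_pow] at this
    simpa using this.symm
  · have := congrArg f hP
    rw [map_mul, hP0, zero_mul, map_pow] at this
    simpa using this.symm
  · have := congrArg f hH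
    simp only [map_add, map_mul, hP0, hQ0, mul_zero, add_zero, map_sub, map_pow, map_ofNat] at this
    exact this.symm

theorem exists_fraction_add {R : Type*} [CommRing R] [IsDomain R] {φ : k[X] →+* R}
    (hφ : Function.Injective φ) {P₁ Q₁ P₂ Q₂ P Q : k[X]} {Z₁ Z₂ Z Z' : R} {t : k}
    (h₁ : φ Q₁ * Z₁ = φ P₁) (h₂ : φ Q₂ * Z₂ = φ P₂) (h : φ Q * Z = φ P)
    (hc : IsCoprime P Q)
    (hmul : Z' * Z * (1 - Z₁ * Z₂) ^ 2 = (Z₁ - Z₂) ^ 2)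
    (hadd : (Z' + Z) * (1 - Z₁ * Z₂) ^ 2 = 2 * (Z₁ * (1 - 2 * φ (C t) * Z₂ + Z₂ ^ 2) +
      Z₂ * (1 - 2 * φ (C t) * Z₁ + Z₁ ^ 2))) :
    ∃ P' Q', φ Q' * Z' = φ P' ∧ Q' * Q = (Q₁ * Q₂ - P₁ * P₂) ^ 2 ∧
      P' * P = (P₁ * Q₂ - P₂ * Q₁) ^ 2 ∧
      Q * P' + P * Q' = 2 * (P₁ * Q₁ * (Q₂ ^ 2 - 2 * C t * P₂ * Q₂ + P₂ ^ 2) +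
      P₂ * Q₂ * (Q₁ ^ 2 - 2 * C t * P₁ * Q₁ + P₁ ^ 2)) := by
  have hQ0 : Q ≠ 0 := by
    rintro rfl
    rw [map_zero, zero_mul, eq_comm, map_eq_zero_iff φ hφ] at h
    subst h
    exact not_isCoprime_zero_zero hc
  obtain ⟨H, hH⟩ : ∃ H, H = 2 * (P₁ * Q₁ * (Q₂ ^ 2 - 2 * C t * P₂ * Q₂ + P₂ ^ 2) +
      P₂ * Q₂ * (Q₁ ^ 2 - 2 * C t * P₁ * Q₁ + P₁ ^ 2)) := ⟨_, rfl⟩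
  obtain ⟨A, hA⟩ : ∃ A, A = Q₁ * Q₂ - P₁ * P₂ := ⟨_, rfl⟩
  obtain ⟨E, hE⟩ : ∃ E, E = P₁ * Q₂ - P₂ * Q₁ := ⟨_, rfl⟩
  have fA : φ A = φ Q₁ * φ Q₂ * (1 - Z₁ * Z₂) := by
    rw [hA, map_sub, map_mul, map_mul, ← h₁, ← h₂]; ring
  have fE : φ E = φ Q₁ * φ Q₂ * (Z₁ - Z₂) := by
    rw [hE, map_sub, map_mul, map_mul, ← h₁, ← h₂]; ring
  have fH : φ H = (Z' + Z) * φ A ^ 2 := by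
    rw [hH, fA]
    simp only [map_mul, map_add, map_sub, map_pow, map_ofNat]
    rw [← h₁, ← h₂]
    linear_combination -(φ Q₁ * φ Q₂) ^ 2 * hadd
  have fE2 : Z' * Z * φ A ^ 2 = φ E ^ 2 := by
    rw [fA, fE]; linear_combination (φ Q₁ * φ Q₂) ^ 2 * hmul
  have key : P * (H * Q - P * A ^ 2) = E ^ 2 * Q ^ 2 := by
    apply hφ
    simp only [map_mul, map_sub, map_pow]
    rw [fH, ← fE2, ← h]; ring
  obtain ⟨Q', hQ'⟩ : Q ∣ A ^ 2 := by
    refine (hc.symm.pow_right (n := 2)).dvd_of_dvd_mul_left ⟨P * H - E ^ 2 * Q, ?_⟩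
    linear_combination -key
  have key2 : P * (H - P * Q') = E ^ 2 * Q := by
    apply mul_left_cancel₀ hQ0
    linear_combination key + P ^ 2 * hQ'
  obtain ⟨P', hP'⟩ : Q ∣ H - P * Q' :=
    hc.symm.dvd_of_dvd_mul_left ⟨E ^ 2, by linear_combination key2⟩
  refine ⟨P', Q', ?_, ?_, ?_, ?_⟩
  · have h0 : φ Q ≠ 0 := fun h => hQ0 ((map_eq_zero_iff φ hφ).1 h)
    apply mul_left_cancel₀ h0
    have e1 := congrArg φ hQ'
    have e2 := congrArg φ hP'
    simp only [map_mul, map_sub, map_pow] at e1 e2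
    rw [← h, fH] at e2
    linear_combination e2 - (Z' + Z) * e1
  · rw [← hA, hQ']; ring
  · rw [← hE]
    apply mul_left_cancel₀ hQ0
    linear_combination key2 - P * hP'
  · rw [← hH]; linear_combination -hP'

end

section
open Polynomial
variable {k : Type*} [Field k]

/-- The reciprocal `X ^ m * P(1 / X)` as a Laurent polynomial. -/
noncomputable def laurentReciprocal (m : ℤ) (P : k[X]) : LaurentPolynomial k :=
  LaurentPolynomial.T m * LaurentPolynomial.invert (toLaurent P)

namespace laurentReciprocal

variable (m n : ℤ) (P Q : k[X])

theorem mul : laurentReciprocal (m + n) (P * Q) =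
    laurentReciprocal m P * laurentReciprocal n Q := by
  simp only [laurentReciprocal, map_mul, LaurentPolynomial.T_add]; ring

theorem sub : laurentReciprocal m (P - Q) = laurentReciprocal m P - laurentReciprocal m Q := by
  simp only [laurentReciprocal, map_sub, mul_sub]

theorem add : laurentReciprocal m (P + Q) = laurentReciprocal m P + laurentReciprocal m Q := by
  simp only [laurentReciprocal, map_add, mul_add]

theorem const_mul (a : k) :
    laurentReciprocal m (C a * P) = toLaurent (C a) * laurentReciprocal m P := by
  simp only [laurentReciprocal, map_mul, toLaurent_C, LaurentPolynomial.invert_C]; ring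

theorem sq : laurentReciprocal (2 * m) (P ^ 2) = laurentReciprocal m P ^ 2 := by
  rw [two_mul, pow_two, mul, pow_two]

variable {m n P Q}

theorem swap (h : laurentReciprocal m Q = toLaurent P) : laurentReciprocal m P = toLaurent Q := by
  rw [laurentReciprocal, ← h, laurentReciprocal, map_mul, LaurentPolynomial.invert_T, ← mul_assoc,
    ← LaurentPolynomial.T_add, add_neg_cancel, LaurentPolynomial.T_zero, one_mul]
  exact LaurentPolynomial.involutive_invert _

end laurentReciprocal

theorem laurentReciprocal_addition {m₁ m₂ : ℤ} {P₁ Q₁ P₂ Q₂ : k[X]} (t : k)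
    {A₁ B₁ A₂ B₂ : LaurentPolynomial k}
    (hQ₁ : laurentReciprocal m₁ Q₁ = A₁) (hP₁ : laurentReciprocal m₁ P₁ = B₁)
    (hQ₂ : laurentReciprocal m₂ Q₂ = A₂) (hP₂ : laurentReciprocal m₂ P₂ = B₂) :
    laurentReciprocal (2 * (m₁ + m₂)) (2 * (P₁ * Q₁ * (Q₂ ^ 2 - 2 * C t * P₂ * Q₂ + P₂ ^ 2) +
      P₂ * Q₂ * (Q₁ ^ 2 - 2 * C t * P₁ * Q₁ + P₁ ^ 2))) =
    2 * (B₁ * A₁ * (A₂ ^ 2 - 2 * toLaurent (C t) * B₂ * A₂ + B₂ ^ 2) +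
      B₂ * A₂ * (A₁ ^ 2 - 2 * toLaurent (C t) * B₁ * A₁ + B₁ ^ 2)) := by
  subst hQ₁ hP₁ hQ₂ hP₂
  have hT₁ : (LaurentPolynomial.T (2 * (m₁ + m₂)) : LaurentPolynomial k) =
    LaurentPolynomial.T m₁ ^ 2 * LaurentPolynomial.T m₂ ^ 2 := by
    simp only [two_mul, LaurentPolynomial.T_add]; ring
  simp only [laurentReciprocal, map_mul, map_add, map_sub, map_pow, map_ofNat, hT₁, toLaurent_C,
    LaurentPolynomial.invert_C]
  ring

variable {P₁ Q₁ P₂ Q₂ P Q P' Q' : k[X]} {t : k} {m₁ m₂ m m' : ℤ}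

theorem laurentReciprocal_eq_of_odd_of_odd (hm : m' + m = 2 * (m₁ + m₂))
    (hQ0 : Q ≠ 0) (h₁ : laurentReciprocal m₁ Q₁ = toLaurent P₁)
    (h₂ : laurentReciprocal m₂ Q₂ = toLaurent P₂)
    (hrQ : laurentReciprocal m Q = toLaurent Q) (hrP : laurentReciprocal m P = toLaurent P)
    (hQ : Q' * Q = (Q₁ * Q₂ - P₁ * P₂) ^ 2)
    (hH : Q * P' + P * Q' = 2 * (P₁ * Q₁ * (Q₂ ^ 2 - 2 * C t * P₂ * Q₂ + P₂ ^ 2) +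
      P₂ * Q₂ * (Q₁ ^ 2 - 2 * C t * P₁ * Q₁ + P₁ ^ 2))) :
    laurentReciprocal m' Q' = toLaurent Q' ∧ laurentReciprocal m' P' = toLaurent P' := by
  have hQ0' : (toLaurent Q : LaurentPolynomial k) ≠ 0 := by
    simpa using hQ0
  have hP₁ := laurentReciprocal.swap h₁
  have hP₂ := laurentReciprocal.swap h₂
  have e1 : laurentReciprocal m' Q' = toLaurent Q' := by
    have := congrArg (laurentReciprocal (m' + m)) hQ
    apply mul_right_cancel₀ hQ0'
    rw [laurentReciprocal.mul, hrQ] at this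
    rw [this, hm, laurentReciprocal.sq, laurentReciprocal.sub, laurentReciprocal.mul,
      laurentReciprocal.mul, h₁, h₂, hP₁, hP₂, ← map_mul toLaurent Q' Q, hQ]
    simp only [map_mul, map_sub, map_pow]
    ring
  refine ⟨e1, ?_⟩
  have h3 := congrArg (laurentReciprocal (m + m')) hH
  rw [laurentReciprocal.add, laurentReciprocal.mul, laurentReciprocal.mul, hrQ, hrP, e1,
    add_comm m m', hm, laurentReciprocal_addition t h₁ hP₁ h₂ hP₂] at h3
  have h4 := congrArg toLaurent hH
  simp only [map_mul, map_add, map_sub, map_pow, map_ofNat] at h4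
  apply mul_left_cancel₀ hQ0'
  linear_combination h3 - h4

theorem laurentReciprocal_eq_of_even_of_odd (hm : m' + m = 2 * (m₁ + m₂))
    (hQ0 : Q ≠ 0) (h₁ : laurentReciprocal m₁ Q₁ = toLaurent Q₁)
    (h₁' : laurentReciprocal m₁ P₁ = toLaurent P₁)
    (h₂ : laurentReciprocal m₂ Q₂ = toLaurent P₂)
    (hrQ : laurentReciprocal m Q = toLaurent P)
    (hQ : Q' * Q = (Q₁ * Q₂ - P₁ * P₂) ^ 2) (hP : P' * P = (P₁ * Q₂ - P₂ * Q₁) ^ 2) :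
    laurentReciprocal m' Q' = toLaurent P' := by
  have hP0' : (toLaurent P : LaurentPolynomial k) ≠ 0 := by
    intro h
    have := laurentReciprocal.swap hrQ
    rw [laurentReciprocal, h, map_zero, mul_zero, eq_comm] at this
    exact hQ0 (by simpa using this)
  have hP₂ := laurentReciprocal.swap h₂
  have := congrArg (laurentReciprocal (m' + m)) hQ
  apply mul_right_cancel₀ hP0'
  rw [laurentReciprocal.mul, hrQ] at this
  rw [this, hm, laurentReciprocal.sq, laurentReciprocal.sub, laurentReciprocal.mul,
    laurentReciprocal.mul, h₁, h₂, h₁', hP₂, ← map_mul toLaurent P' P, hP]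
  simp only [map_mul, map_sub, map_pow]
  ring

end

section
open Polynomial
variable {k : Type*} [Field k] [CharZero k]

/-- Evaluation of polynomials at the power series `snMul t 1 ^ 2`. -/
noncomputable def evalSnSq (t : k) : k[X] →+* PowerSeries k :=
  eval₂RingHom PowerSeries.C (snMul t 1 ^ 2)

@[simp] theorem evalSnSq_C (t a : k) : evalSnSq t (C a) = PowerSeries.C a := by
  simp [evalSnSq]

@[simp] theorem evalSnSq_X (t : k) : evalSnSq t X = snMul t 1 ^ 2 := by
  simp [evalSnSq]

theorem constantCoeff_evalSnSq (t : k) (P : k[X]) :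
    PowerSeries.constantCoeff (evalSnSq t P) = P.coeff 0 := by
  rw [evalSnSq, coe_eval₂RingHom, hom_eval₂]
  have : (PowerSeries.constantCoeff).comp PowerSeries.C = RingHom.id k := by ext; simp
  simp [this, coeff_zero_eq_eval_zero]

theorem snMul_one_ne_zero (t : k) : snMul t 1 ≠ 0 := by
  intro h
  have := derivative_snMul t (1 : k)
  rw [h, map_zero, map_one, one_mul] at this
  simpa using congrArg PowerSeries.constantCoeff this

theorem evalSnSq_injective (t : k) : Function.Injective (evalSnSq t) := by
  rw [injective_iff_map_eq_zero]
  intro P h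
  by_contra hP
  obtain ⟨Q, hPQ, hQ⟩ := exists_eq_pow_rootMultiplicity_mul_and_not_dvd P hP 0
  rw [C_0, sub_zero, X_dvd_iff] at *
  rw [hPQ, map_mul, map_pow, evalSnSq_X] at h
  rcases mul_eq_zero.1 h with h | h
  · exact pow_ne_zero _ (pow_ne_zero _ (snMul_one_ne_zero t)) h
  · apply hQ
    rw [← constantCoeff_evalSnSq t, h, map_zero]

theorem derivative_evalSnSq (t : k) (P : k[X]) :
    PowerSeries.derivative k (evalSnSq t P) =
      evalSnSq t (derivative P) * (2 * snMul t 1 * cdMul t 1) := by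
  induction P using Polynomial.induction_on' with
  | add P Q hP hQ => rw [map_add, map_add, hP, hQ, map_add, map_add, add_mul]
  | monomial n a =>
    rw [← C_mul_X_pow_eq_monomial]
    simp only [map_mul, map_pow, evalSnSq_C, evalSnSq_X, Derivation.leibniz, Derivation.leibniz_pow,
      PowerSeries.derivative_C, derivative_C_mul, derivative_X_pow, derivative_snMul, smul_eq_mul,
      nsmul_eq_mul, map_natCast, map_one]
    push_cast
    ring

/-- `snMul (3 δ) (x + y δ) ^ 2` is the reduced fraction `P / Q` in `snMul (3 δ) 1 ^ 2`, and `P`, `Q`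
are exchanged or fixed by reciprocation with respect to the norm of `x + y δ`. -/
structure IsSnFraction (δ : k) (x y : ℤ) (P Q : k[X]) : Prop where
  coprime : IsCoprime P Q
  eval : evalSnSq (3 * δ) Q * snMul (3 * δ) (x + y * δ) ^ 2 = evalSnSq (3 * δ) P
  odd : Odd (x + y) → laurentReciprocal (x ^ 2 + 7 * y ^ 2) Q = toLaurent P
  even : Even (x + y) → laurentReciprocal (x ^ 2 + 7 * y ^ 2) Q = toLaurent Q ∧
    laurentReciprocal (x ^ 2 + 7 * y ^ 2) P = toLaurent P

namespace IsSnFraction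
variable {δ : k} {x y x₁ y₁ x₂ y₂ : ℤ} {P Q P₁ Q₁ P₂ Q₂ : k[X]}

theorem neg (h : IsSnFraction δ x y P Q) : IsSnFraction δ (-x) (-y) P Q where
  coprime := h.coprime
  eval := by
    have := (sn_neg (3 * δ) (x + y * δ)).1
    rw [show ((-x : ℤ) : k) + ((-y : ℤ) : k) * δ = -(x + y * δ) by push_cast; ring, this, neg_sq]
    exact h.eval
  odd := fun ho => by
    rw [neg_sq, neg_sq]; exact h.odd (by rwa [← neg_add, odd_neg] at ho)
  even := fun ho => by
    rw [neg_sq, neg_sq]; exact h.even (by rwa [← neg_add, even_neg] at ho)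

theorem ne_zero (h : IsSnFraction δ x y P Q) : Q ≠ 0 := by
  rintro rfl
  have := h.eval
  rw [map_zero, zero_mul, eq_comm, map_eq_zero_iff _ (evalSnSq_injective _)] at this
  subst this
  exact not_isCoprime_zero_zero h.coprime

theorem exists_add (hδ : δ ^ 2 = -7) (h₁ : IsSnFraction δ x₁ y₁ P₁ Q₁)
    (h₂ : IsSnFraction δ x₂ y₂ P₂ Q₂) (ho : Odd (x₂ + y₂))
    (h : IsSnFraction δ (x₁ - x₂) (y₁ - y₂) P Q) :
    ∃ P' Q', IsSnFraction δ (x₁ + x₂) (y₁ + y₂) P' Q' ∧ Q' * Q = (Q₁ * Q₂ - P₁ * P₂) ^ 2 ∧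
      P' * P = (P₁ * Q₂ - P₂ * Q₁) ^ 2 := by
  have hmul := sn_add_mul_sn_sub (3 * δ) (x₁ + y₁ * δ) (x₂ + y₂ * δ)
  have hadd := sn_sq_add_add_sn_sq_sub (3 * δ) (x₁ + y₁ * δ) (x₂ + y₂ * δ)
  have e1 : (x₁ + y₁ * δ) + (x₂ + y₂ * δ) = ((x₁ + x₂ : ℤ) : k) + ((y₁ + y₂ : ℤ) : k) * δ := by
    push_cast; ring
  have e2 : (x₁ + y₁ * δ) - (x₂ + y₂ * δ) = ((x₁ - x₂ : ℤ) : k) + ((y₁ - y₂ : ℤ) : k) * δ := by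
    push_cast; ring
  rw [e1, e2] at hmul hadd
  rw [← evalSnSq_C (3 * δ) (3 * δ)] at hadd
  obtain ⟨P', Q', f1, f2, f3, f4⟩ := exists_fraction_add (evalSnSq_injective (3 * δ)) h₁.eval h₂.eval
    h.eval h.coprime (by rw [← mul_pow, ← hmul]; ring) hadd
  have ht : (3 * δ) ^ 2 ≠ 1 := by
    rw [mul_pow, hδ]; norm_num
  have hm : ((x₁ + x₂) ^ 2 + 7 * (y₁ + y₂) ^ 2) + ((x₁ - x₂) ^ 2 + 7 * (y₁ - y₂) ^ 2) =
      2 * ((x₁ ^ 2 + 7 * y₁ ^ 2) + (x₂ ^ 2 + 7 * y₂ ^ 2)) := by ring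
  refine ⟨P', Q', ⟨isCoprime_of_addition ht h₁.coprime h₂.coprime f2 f3 f4, f1, ?_, ?_⟩, f2, f3⟩
  · intro ho'
    have he₁ : Even (x₁ + y₁) := by grind
    have ho'' : Odd ((x₁ - x₂) + (y₁ - y₂)) := by grind
    exact laurentReciprocal_eq_of_even_of_odd hm h.ne_zero (h₁.even he₁).1 (h₁.even he₁).2
      (h₂.odd ho) (h.odd ho'') f2 f3
  · intro he'
    have ho₁ : Odd (x₁ + y₁) := by grind
    have he'' : Even ((x₁ - x₂) + (y₁ - y₂)) := by grind
    exact laurentReciprocal_eq_of_odd_of_odd hm h.ne_zero (h₁.odd ho₁) (h₂.odd ho)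
      (h.even he'').1 (h.even he'').2 f2 f4

theorem zero : IsSnFraction δ 0 0 0 1 where
  coprime := isCoprime_one_right
  eval := by simp [(sn_zero (3 * δ)).1]
  odd := fun h => by simp at h
  even := fun _ => by simp [laurentReciprocal]

theorem one : IsSnFraction δ 1 0 X 1 where
  coprime := isCoprime_one_right
  eval := by simp
  odd := fun _ => by simp [laurentReciprocal]
  even := fun h => by simp at h

end IsSnFraction

theorem laurentReciprocal_cubic (a b c d : k) :
    laurentReciprocal 3 (C a + C b * X + C c * X ^ 2 + C d * X ^ 3) =
      toLaurent (C d + C c * X + C b * X ^ 2 + C a * X ^ 3) := by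
  have h3 : (LaurentPolynomial.T 3 : LaurentPolynomial k) = LaurentPolynomial.T 1 ^ 3 := by
    rw [LaurentPolynomial.T_pow]; rfl
  have h1 : (LaurentPolynomial.T 1 * LaurentPolynomial.T (-1) : LaurentPolynomial k) = 1 := by
    rw [← LaurentPolynomial.T_add]; simp
  simp only [laurentReciprocal, map_add, map_mul, map_pow, toLaurent_C, toLaurent_X,
    LaurentPolynomial.invert_C, LaurentPolynomial.invert_T, h3]
  generalize (LaurentPolynomial.T 1 : LaurentPolynomial k) = y at *
  generalize (LaurentPolynomial.T (-1) : LaurentPolynomial k) = z at *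
  linear_combination (LaurentPolynomial.C b * y ^ 2 + LaurentPolynomial.C c * y * (y * z + 1) +
    LaurentPolynomial.C d * ((y * z) ^ 2 + y * z + 1)) * h1

theorem isCoprime_of_eq_C {A B U V : k[X]} {c : k} (hc : c ≠ 0) (h : U * A + V * B = C c) :
    IsCoprime A B := by
  refine ⟨C c⁻¹ * U, C c⁻¹ * V, ?_⟩
  rw [mul_assoc, mul_assoc, ← mul_add, h, ← C_mul, inv_mul_cancel₀ hc, C_1]

end

section
open Polynomial
variable {k : Type*} [Field k]

theorem laurentReciprocal_X : laurentReciprocal 2 (X : k[X]) = toLaurent X := by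
  simp only [laurentReciprocal, toLaurent_X, LaurentPolynomial.invert_T]
  rw [← LaurentPolynomial.T_add]; rfl

theorem laurentReciprocal_quadratic (a b c : k) :
    laurentReciprocal 2 (C a + C b * X + C c * X ^ 2) = toLaurent (C c + C b * X + C a * X ^ 2) := by
  have h3 : (LaurentPolynomial.T 2 : LaurentPolynomial k) = LaurentPolynomial.T 1 ^ 2 := by
    rw [LaurentPolynomial.T_pow]; rfl
  have h1 : (LaurentPolynomial.T 1 * LaurentPolynomial.T (-1) : LaurentPolynomial k) = 1 := by
    rw [← LaurentPolynomial.T_add]; simp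
  simp only [laurentReciprocal, map_add, map_mul, map_pow, toLaurent_C, toLaurent_X,
    LaurentPolynomial.invert_C, LaurentPolynomial.invert_T, h3]
  generalize (LaurentPolynomial.T 1 : LaurentPolynomial k) = y at *
  generalize (LaurentPolynomial.T (-1) : LaurentPolynomial k) = z at *
  linear_combination (LaurentPolynomial.C b * y + LaurentPolynomial.C c * (y * z + 1)) * h1

/-- The numerator `N` in `snMul (3 δ) δ = S * N(S²) / D(S²)`, where `S = snMul (3 δ) 1`. -/
noncomputable def deltaNum (δ : k) : k[X] :=
  C δ + C (-21) * X + C (-5 * δ) * X ^ 2 + C 1 * X ^ 3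

/-- The denominator `D` in `snMul (3 δ) δ = S * N(S²) / D(S²)`, where `S = snMul (3 δ) 1`. -/
noncomputable def deltaDen (δ : k) : k[X] :=
  C 1 + C (-5 * δ) * X + C (-21) * X ^ 2 + C δ * X ^ 3

variable [CharZero k] {δ : k}

theorem derivative_deltaNum :
    derivative (deltaNum δ) = C (-21) + C (-10 * δ) * X + C 3 * X ^ 2 := by
  rw [deltaNum]
  simp only [derivative_add, derivative_C, derivative_C_mul, derivative_X, derivative_X_pow]
  simp only [C_neg, C_mul, C_1, map_natCast, map_ofNat]
  push_cast
  ring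

theorem derivative_deltaDen :
    derivative (deltaDen δ) = C (-5 * δ) + C (-42) * X + C (3 * δ) * X ^ 2 := by
  rw [deltaDen]
  simp only [derivative_add, derivative_C, derivative_C_mul, derivative_X, derivative_X_pow]
  simp only [C_neg, C_mul, map_natCast, map_ofNat]
  push_cast
  ring

theorem isCoprime_deltaNum_deltaDen (hδ : δ ^ 2 = -7) : IsCoprime (deltaNum δ) (deltaDen δ) := by
  have hd : (C δ : k[X]) ^ 2 = -7 := by rw [← C_pow, hδ, C_neg]; rfl
  refine isCoprime_of_eq_C (c := 2048) (U := -193 * C δ - 742 * X + 35 * C δ * X ^ 2)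
    (V := 697 + 174 * C δ * X - 35 * X ^ 2) (by norm_num) ?_
  rw [deltaNum, deltaDen]
  simp only [C_neg, C_mul, C_1, map_ofNat]
  linear_combination (-193 + 130 * X ^ 2 - X ^ 4) * hd

theorem sn_delta (hδ : δ ^ 2 = -7) :
    snMul (3 * δ) δ * evalSnSq (3 * δ) (deltaDen δ) =
      snMul (3 * δ) 1 * evalSnSq (3 * δ) (deltaNum δ) ∧
    PowerSeries.C δ * cdMul (3 * δ) δ * evalSnSq (3 * δ) (deltaDen δ) ^ 2 =
      cdMul (3 * δ) 1 * evalSnSq (3 * δ) (deltaNum δ * deltaDen δ +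
        2 * X * (derivative (deltaNum δ) * deltaDen δ - deltaNum δ * derivative (deltaDen δ))) := by
  have hδ0 : δ ≠ 0 := by rintro rfl; norm_num at hδ
  have hd : (PowerSeries.C δ : PowerSeries k) ^ 2 = -7 := by
    rw [← map_pow, hδ, map_neg]; rfl
  have hdi : (PowerSeries.C δ * PowerSeries.C δ⁻¹ : PowerSeries k) = 1 := by
    rw [← map_mul, mul_inv_cancel₀ hδ0, map_one]
  have hdN := derivative_evalSnSq (3 * δ) (deltaNum δ)
  have hdD := derivative_evalSnSq (3 * δ) (deltaDen δ)
  have hN : evalSnSq (3 * δ) (deltaNum δ) = PowerSeries.C δ - 21 * snMul (3 * δ) 1 ^ 2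
      - 5 * PowerSeries.C δ * (snMul (3 * δ) 1 ^ 2) ^ 2 + (snMul (3 * δ) 1 ^ 2) ^ 3 := by
    simp [deltaNum, map_ofNat]; ring
  have hD : evalSnSq (3 * δ) (deltaDen δ) = 1 - 5 * PowerSeries.C δ * snMul (3 * δ) 1 ^ 2
      - 21 * (snMul (3 * δ) 1 ^ 2) ^ 2 + PowerSeries.C δ * (snMul (3 * δ) 1 ^ 2) ^ 3 := by
    simp [deltaDen, map_ofNat]; ring
  have hN' : evalSnSq (3 * δ) (derivative (deltaNum δ)) = -21 -
      10 * PowerSeries.C δ * snMul (3 * δ) 1 ^ 2 + 3 * (snMul (3 * δ) 1 ^ 2) ^ 2 := by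
    simp [derivative_deltaNum, map_ofNat]; ring
  have hD' : evalSnSq (3 * δ) (derivative (deltaDen δ)) = -5 * PowerSeries.C δ -
      42 * snMul (3 * δ) 1 ^ 2 + 3 * PowerSeries.C δ * (snMul (3 * δ) 1 ^ 2) ^ 2 := by
    simp [derivative_deltaDen, map_ofNat]; ring
  have hM := (rfl : evalSnSq (3 * δ) (deltaNum δ * deltaDen δ +
    2 * X * (derivative (deltaNum δ) * deltaDen δ - deltaNum δ * derivative (deltaDen δ))) = _)
  conv_rhs at hM =>
    simp only [map_add, map_mul, map_sub, map_ofNat, evalSnSq_X, hN', hD']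
  have cN : PowerSeries.constantCoeff (evalSnSq (3 * δ) (deltaNum δ)) = δ := by simp [hN]
  have cD : PowerSeries.constantCoeff (evalSnSq (3 * δ) (deltaDen δ)) = 1 := by simp [hD]
  rw [hN'] at hdN
  rw [hD'] at hdD
  generalize evalSnSq (3 * δ) (deltaNum δ * deltaDen δ +
    2 * X * (derivative (deltaNum δ) * deltaDen δ - deltaNum δ * derivative (deltaDen δ))) = M at *
  generalize evalSnSq (3 * δ) (deltaNum δ) = N at *
  generalize evalSnSq (3 * δ) (deltaDen δ) = D at *
  have hDE : D * D⁻¹ = 1 := PowerSeries.mul_inv_cancel _ (by simp [cD])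
  have dE : PowerSeries.derivative k D⁻¹ = -D⁻¹ ^ 2 * PowerSeries.derivative k D :=
    PowerSeries.derivative_inv' D
  have hid := shiftedLegendrePoly.delta_multiplication_identity hd hN hD (hM.trans (by ring))
  have hw := cdMul_sq (3 * δ) 1
  rw [map_mul, map_ofNat] at hw
  have ds := derivative_snMul (3 * δ) 1
  rw [map_one, one_mul] at ds
  have cs := constantCoeff_snMul (3 * δ) 1
  have cw := constantCoeff_cdMul (3 * δ) 1
  generalize snMul (3 * δ) 1 = s at *
  generalize cdMul (3 * δ) 1 = w at *
  have cM : PowerSeries.constantCoeff M = δ := by simp [hM, cN, cD, cs]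
  have key := snMul_unique (3 * δ) δ (T := s * N * D⁻¹) (V := PowerSeries.C δ⁻¹ * M * w * D⁻¹ ^ 2)
    (by simp [cs]) (by simp [cM, cw, cD, hδ0])
    (by
      simp only [Derivation.leibniz, smul_eq_mul, ds, dE, hdN, hdD]
      generalize D⁻¹ = E at *
      linear_combination (-E * (s * (-21 - 10 * PowerSeries.C δ * s ^ 2 + 3 * (s ^ 2) ^ 2) *
        (2 * s * w) + w * N)) * hDE - w * E ^ 2 * hM - M * w * E ^ 2 * hdi)
    (by
      rw [map_mul, map_ofNat]
      generalize D⁻¹ = E at *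
      generalize PowerSeries.C δ⁻¹ = e at *
      generalize PowerSeries.C δ = d at *
      have h2 : D ^ 2 * E ^ 2 = 1 := by rw [← mul_pow, hDE, one_pow]
      have h3 : d ^ 2 * e ^ 2 = 1 := by rw [← mul_pow, hdi, one_pow]
      linear_combination e ^ 2 * M ^ 2 * E ^ 4 * hw + e ^ 2 * E ^ 4 * hid
        + (D ^ 4 - 6 * d * s ^ 2 * N ^ 2 * D ^ 2 + s ^ 4 * N ^ 4) * E ^ 4 * h3
        + (1 + D ^ 2 * E ^ 2 - 6 * d * s ^ 2 * N ^ 2 * E ^ 2) * h2)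
  rw [← key.1, ← key.2]
  generalize D⁻¹ = E at *
  constructor
  · linear_combination s * N * hDE
  · linear_combination M * w * (D ^ 2 * E ^ 2 * hdi + (D * E + 1) * hDE)

theorem isSnFraction_delta (hδ : δ ^ 2 = -7) :
    IsSnFraction δ 0 1 (X * deltaNum δ ^ 2) (deltaDen δ ^ 2) where
  coprime := by
    refine (IsCoprime.mul_left ?_ (isCoprime_deltaNum_deltaDen hδ).pow_left).pow_right
    refine isCoprime_of_eq_C (c := 1) (U := -(C (-5 * δ) + C (-21) * X + C δ * X ^ 2)) (V := 1)
      one_ne_zero ?_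
    rw [deltaDen]; ring
  eval := by
    have := (sn_delta hδ).1
    simp only [map_mul, map_pow, evalSnSq_X, Int.cast_zero, Int.cast_one, zero_add, one_mul]
    linear_combination (snMul (3 * δ) δ * evalSnSq (3 * δ) (deltaDen δ) +
      snMul (3 * δ) 1 * evalSnSq (3 * δ) (deltaNum δ)) * this
  odd := fun _ => by
    rw [show (0 ^ 2 + 7 * 1 ^ 2 : ℤ) = 1 + 2 * 3 by norm_num, ← one_mul (deltaDen δ ^ 2),
      laurentReciprocal.mul, laurentReciprocal.sq, deltaDen, laurentReciprocal_cubic, deltaNum,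
      map_mul toLaurent X, map_pow]
    congr 1
    simp [laurentReciprocal]
  even := fun h => by simp at h

/-- The cubic factor of the numerator of `snMul (3 δ) (1 + δ) ^ 2`. -/
noncomputable def oneAddDeltaNum (δ : k) : k[X] :=
  C (1 + δ) + C (-5 + 11 * δ) * X + C (-5 + 11 * δ) * X ^ 2 + C (1 + δ) * X ^ 3

/-- The cubic factor of the denominator of `snMul (3 δ) (1 + δ) ^ 2`. -/
noncomputable def oneAddDeltaDen (δ : k) : k[X] :=
  C 1 + C (-5 - 2 * δ) * X + C (5 + 2 * δ) * X ^ 2 + C (-1) * X ^ 3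

/-- The quadratic factor of the denominator of `snMul (3 δ) (1 + δ) ^ 2`. -/
noncomputable def deltaQuadratic (δ : k) : k[X] := C 1 + C (-6 * δ) * X + C 1 * X ^ 2

theorem isSnFraction_one_add_delta (hδ : δ ^ 2 = -7) :
    IsSnFraction δ 1 1 (X * oneAddDeltaNum δ ^ 2) (deltaQuadratic δ * oneAddDeltaDen δ ^ 2) where
  coprime := by
    have hd : (C δ : k[X]) ^ 2 = -7 := by rw [← C_pow, hδ, C_neg]; rfl
    have h1 : IsCoprime (oneAddDeltaNum δ) (oneAddDeltaDen δ) := by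
      refine isCoprime_of_eq_C (c := 2048)
        (U := 159 - 96 * C δ + (-151 + 99 * C δ) * X + (-12 - 15 * C δ) * X ^ 2)
        (V := 1217 - 63 * C δ + (1214 - 58 * C δ) * X + (93 - 27 * C δ) * X ^ 2) (by norm_num) ?_
      rw [oneAddDeltaNum, oneAddDeltaDen]
      simp only [C_neg, C_mul, C_1, C_add, C_sub, map_ofNat]
      linear_combination (-96 - 831 * X + 8 * X ^ 2 + 766 * X ^ 3 - 120 * X ^ 4 - 15 * X ^ 5) * hd
    have h2 : IsCoprime (oneAddDeltaNum δ) (deltaQuadratic δ) := by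
      refine isCoprime_of_eq_C (c := 4096) (U := 717 - 271 * C δ + (45 + 17 * C δ) * X)
        (V := 1482 - 446 * C δ + (1524 - 412 * C δ) * X + (74 - 62 * C δ) * X ^ 2) (by norm_num) ?_
      rw [oneAddDeltaNum, deltaQuadratic]
      simp only [C_neg, C_mul, C_1, C_add, map_ofNat]
      linear_combination (-271 - 288 * X - 322 * X ^ 2 + 288 * X ^ 3 + 17 * X ^ 4) * hd
    have h3 : IsCoprime (X : k[X]) (deltaQuadratic δ) := by
      refine isCoprime_of_eq_C (c := 1) (U := -(C (-6 * δ) + C 1 * X)) (V := 1) one_ne_zero ?_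
      rw [deltaQuadratic]; ring
    have h4 : IsCoprime (X : k[X]) (oneAddDeltaDen δ) := by
      refine isCoprime_of_eq_C (c := 1)
        (U := -(C (-5 - 2 * δ) + C (5 + 2 * δ) * X + C (-1) * X ^ 2)) (V := 1) one_ne_zero ?_
      rw [oneAddDeltaDen]; ring
    exact IsCoprime.mul_left (h3.mul_right h4.pow_right) (h2.mul_right h1.pow_right).pow_left
  eval := by
    have hδ0 : δ ≠ 0 := by rintro rfl; norm_num at hδ
    have hd0 : (PowerSeries.C δ : PowerSeries k) ≠ 0 := by simpa using hδ0
    have hd : (PowerSeries.C δ : PowerSeries k) ^ 2 = -7 := by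
      rw [← map_pow, hδ, map_neg]; rfl
    obtain ⟨hT, hV⟩ := sn_delta hδ
    have hadd := (sn_addition (3 * δ) 1 δ).1
    have hw := cdMul_sq (3 * δ) 1
    rw [map_mul, map_ofNat] at hw
    have cs := constantCoeff_snMul (3 * δ) 1
    rw [derivative_deltaNum, derivative_deltaDen] at hV
    simp only [deltaDen, deltaNum, oneAddDeltaNum, oneAddDeltaDen, deltaQuadratic, map_add, map_mul,
      map_pow, map_neg, map_sub, evalSnSq_X, evalSnSq_C, map_one, map_ofNat,
      Int.cast_one, one_mul] at hT hV ⊢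
    generalize PowerSeries.C δ = d at *
    generalize snMul (3 * δ) 1 = s at *
    generalize cdMul (3 * δ) 1 = w at *
    generalize snMul (3 * δ) (1 + δ) = S at *
    generalize snMul (3 * δ) δ = T at *
    generalize cdMul (3 * δ) δ = V at *
    obtain ⟨N, hN⟩ : ∃ N, N = d + -21 * s ^ 2 + -5 * d * (s ^ 2) ^ 2 + (s ^ 2) ^ 3 := ⟨_, rfl⟩
    obtain ⟨D, hD⟩ : ∃ D, D = 1 + -5 * d * s ^ 2 + -21 * (s ^ 2) ^ 2 + d * (s ^ 2) ^ 3 := ⟨_, rfl⟩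
    obtain ⟨u, hu⟩ : ∃ u, u = 1 + (-5 - 2 * d) * s ^ 2 + (5 + 2 * d) * (s ^ 2) ^ 2
      + -1 * (s ^ 2) ^ 3 := ⟨_, rfl⟩
    obtain ⟨v, hv⟩ : ∃ v, v = (1 + d) + (-5 + 11 * d) * s ^ 2 + (-5 + 11 * d) * (s ^ 2) ^ 2
      + (1 + d) * (s ^ 2) ^ 3 := ⟨_, rfl⟩
    obtain ⟨F, hF⟩ : ∃ F, F = 1 + -6 * d * s ^ 2 + (s ^ 2) ^ 2 := ⟨_, rfl⟩
    obtain ⟨G, hG⟩ : ∃ G, G = 1 + (5 - 2 * d) * s ^ 2 + (5 - 2 * d) * (s ^ 2) ^ 2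
      + (s ^ 2) ^ 3 := ⟨_, rfl⟩
    have hG0 : G ≠ 0 := by
      rintro rfl
      simpa [cs] using congrArg PowerSeries.constantCoeff hG
    have hF0 : F ≠ 0 := by
      rintro rfl
      simpa [cs] using congrArg PowerSeries.constantCoeff hF
    rw [← hN, ← hD] at hT
    have hM : d * V * D ^ 2 + d * N * D * w = d * v * G * w := by
      rw [hD, hV, hN, hv, hG]
      linear_combination w * ((-9 - 3 * d) * s ^ 2 + 24 * d * s ^ 4 + (-62 + 70 * d) * s ^ 6
        + 24 * d * s ^ 8 + (-9 - 3 * d) * s ^ 10) * hd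
    have hFuG : D ^ 2 - (s ^ 2) ^ 2 * N ^ 2 = F * u * G := by
      rw [hD, hN, hF, hu, hG]
      linear_combination (-4 * s ^ 4 + 24 * d * s ^ 6 - 24 * d * s ^ 10 + 4 * s ^ 12) * hd
    have hw' : w ^ 2 = F := by rw [hw, hF]; ring
    have h1 : S * (F * u) = s * w * v := by
      apply mul_left_cancel₀ (mul_ne_zero hd0 hG0)
      linear_combination d * D ^ 2 * hadd + d * S * s ^ 2 * (T * D + s * N) * hT - d * S * hFuG
        + s * hM + d * w * D * hT
    have h2 : F * u ^ 2 * S ^ 2 = s ^ 2 * v ^ 2 := by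
      apply mul_left_cancel₀ hF0
      linear_combination (S * (F * u) + s * w * v) * h1 + s ^ 2 * v ^ 2 * hw'
    rw [hF, hu, hv] at h2
    linear_combination h2
  odd := fun h => by simp at h; exact absurd h (by decide)
  even := fun _ => by
    rw [show (1 ^ 2 + 7 * 1 ^ 2 : ℤ) = 2 + 2 * 3 by norm_num, laurentReciprocal.mul,
      laurentReciprocal.mul, laurentReciprocal.sq, laurentReciprocal.sq, laurentReciprocal_X,
      oneAddDeltaNum, oneAddDeltaDen, deltaQuadratic, laurentReciprocal_cubic,
      laurentReciprocal_cubic, laurentReciprocal_quadratic]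
    constructor
    · simp only [map_ofNat, map_mul, map_pow, map_add, map_sub, map_neg, map_one]
      ring
    · simp only [map_mul, map_pow]

end

section
open Polynomial
variable {k : Type*} [Field k]

theorem coeff_toLaurent_natCast (f : k[X]) (n : ℕ) : (toLaurent f).coeff (n : ℤ) = f.coeff n := by
  rw [LaurentPolynomial.coeff_toLaurent, ← Nat.castEmbedding_apply, Finsupp.mapDomain_apply Nat.castEmbedding.injective]; rfl

theorem coeff_toLaurent_of_neg (f : k[X]) {n : ℤ} (hn : n < 0) : (toLaurent f).coeff n = 0 := by
  rw [LaurentPolynomial.coeff_toLaurent, Finsupp.mapDomain_of_notMem_range]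
  rintro ⟨m, hm⟩
  rw [Nat.castEmbedding_apply] at hm
  omega

theorem coeff_laurentReciprocal (m n : ℤ) (f : k[X]) :
    (laurentReciprocal m f).coeff n = (toLaurent f).coeff (m - n) := by
  rw [laurentReciprocal, show (LaurentPolynomial.T m : LaurentPolynomial k) =
    AddMonoidAlgebra.single m 1 from rfl, AddMonoidAlgebra.coeff_single_mul_apply, one_mul,
    LaurentPolynomial.invert_apply]
  congr 1
  ring

theorem coeff_of_laurentReciprocal_eq {h : ℕ} {n d : k[X]}
    (H : laurentReciprocal h d = toLaurent n) :
    (∀ j ≤ h, n.coeff j = d.coeff (h - j)) ∧ ∀ j, h < j → n.coeff j = 0 ∧ d.coeff j = 0 := by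
  refine ⟨fun j hj => ?_, fun j hj => ⟨?_, ?_⟩⟩
  · rw [← coeff_toLaurent_natCast, ← H, coeff_laurentReciprocal, ← Nat.cast_sub hj,
      coeff_toLaurent_natCast]
  · rw [← coeff_toLaurent_natCast, ← H, coeff_laurentReciprocal, coeff_toLaurent_of_neg]
    omega
  · rw [← coeff_toLaurent_natCast, ← coeff_toLaurent_of_neg n (n := h - j) (by omega), ← H,
      coeff_laurentReciprocal]
    congr 1
    ring

variable [CharZero k] {δ : k}

theorem IsSnFraction.exists_line (hδ : δ ^ 2 = -7) {x₀ y₀ u v : ℤ} (ho : Odd (u + v))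
    (hν : ∃ P Q, IsSnFraction δ u v P Q) (h₀ : ∃ P Q, IsSnFraction δ x₀ y₀ P Q)
    (h₁ : ∃ P Q, IsSnFraction δ (x₀ + u) (y₀ + v) P Q) (n : ℤ) :
    ∃ P Q, IsSnFraction δ (x₀ + n * u) (y₀ + n * v) P Q := by
  obtain ⟨Pν, Qν, hν⟩ := hν
  suffices H : (∃ P Q, IsSnFraction δ (x₀ + n * u) (y₀ + n * v) P Q) ∧
    ∃ P Q, IsSnFraction δ (x₀ + (n + 1) * u) (y₀ + (n + 1) * v) P Q from H.1
  induction n using Int.induction_on with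
  | zero => simpa using ⟨h₀, h₁⟩
  | succ n ih =>
    obtain ⟨⟨P, Q, h⟩, P₁, Q₁, h₁⟩ := ih
    obtain ⟨P', Q', h', -⟩ := h₁.exists_add hδ (P := P) (Q := Q) hν ho (by convert h using 1 <;> ring)
    refine ⟨⟨P₁, Q₁, h₁⟩, P', Q', ?_⟩
    convert h' using 1 <;> ring
  | pred n ih =>
    obtain ⟨⟨P₁, Q₁, h₁⟩, P, Q, h⟩ := ih
    obtain ⟨P', Q', h', -⟩ := h₁.exists_add hδ (P := P) (Q := Q) hν.neg
      (by rwa [← neg_add, odd_neg]) (by convert h using 1 <;> ring)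
    refine ⟨⟨P', Q', ?_⟩, P₁, Q₁, ?_⟩
    · convert h' using 1 <;> ring
    · convert h₁ using 1 <;> ring

theorem exists_isSnFraction (hδ : δ ^ 2 = -7) (x y : ℤ) : ∃ P Q, IsSnFraction δ x y P Q := by
  have h0 : ∃ P Q, IsSnFraction δ x 0 P Q := by
    have := IsSnFraction.exists_line hδ (x₀ := 0) (y₀ := 0) (u := 1) (v := 0) (by decide)
      ⟨_, _, .one⟩ ⟨_, _, .zero⟩ ⟨_, _, .one⟩ x
    simpa using this
  have h1 : ∃ P Q, IsSnFraction δ x 1 P Q := by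
    have := IsSnFraction.exists_line hδ (x₀ := 0) (y₀ := 1) (u := 1) (v := 0) (by decide)
      ⟨_, _, .one⟩ ⟨_, _, isSnFraction_delta hδ⟩ ⟨_, _, isSnFraction_one_add_delta hδ⟩ x
    simpa using this
  have := IsSnFraction.exists_line hδ (x₀ := x) (y₀ := 0) (u := 0) (v := 1) (by decide)
      ⟨_, _, isSnFraction_delta hδ⟩ h0 (by simpa using h1) y
  simpa using this

theorem exists_eq_sq_of_odd (hδ : δ ^ 2 = -7) {x y : ℤ} (ho : Odd (x + y)) :
    ∃ n d : k[X], IsSnFraction δ x y (X * n ^ 2) (d ^ 2) := by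
  have hstep : ∀ {x₁ y₁ x₂ y₂ : ℤ} {N D : k[X]}, N ≠ 0 → Odd (x₂ + y₂) →
      IsSnFraction δ (x₁ - x₂) (y₁ - y₂) (X * N ^ 2) (D ^ 2) →
      ∃ n d : k[X], IsSnFraction δ (x₁ + x₂) (y₁ + y₂) (X * n ^ 2) (d ^ 2) := by
    intro x₁ y₁ x₂ y₂ N D hN ho h
    obtain ⟨P₁, Q₁, h₁⟩ := exists_isSnFraction hδ x₁ y₁
    obtain ⟨P₂, Q₂, h₂⟩ := exists_isSnFraction hδ x₂ y₂
    obtain ⟨P', Q', h', hQ, hP⟩ := h₁.exists_add hδ h₂ ho h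
    have hD : D ≠ 0 := fun hD => h.ne_zero (by rw [hD]; ring)
    obtain ⟨d, hd⟩ : D ∣ Q₁ * Q₂ - P₁ * P₂ :=
      (IsIntegrallyClosed.pow_dvd_pow_iff two_ne_zero).1 ⟨Q', by rw [← hQ]; ring⟩
    obtain ⟨e, he⟩ : N ∣ P₁ * Q₂ - P₂ * Q₁ :=
      (IsIntegrallyClosed.pow_dvd_pow_iff two_ne_zero).1 ⟨P' * X, by rw [← hP]; ring⟩
    have hQ' : Q' = d ^ 2 := by
      apply mul_right_cancel₀ (pow_ne_zero 2 hD)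
      rw [hQ, hd]; ring
    have hP' : P' * X = e ^ 2 := by
      apply mul_right_cancel₀ (pow_ne_zero 2 hN)
      rw [mul_assoc, hP, he]; ring
    obtain ⟨n, hn⟩ : X ∣ e := prime_X.dvd_of_dvd_pow (hP' ▸ dvd_mul_left X P')
    refine ⟨n, d, ?_⟩
    have hP'' : P' = X * n ^ 2 := by
      apply mul_right_cancel₀ (X_ne_zero (R := k))
      rw [hP', hn]; ring
    rw [← hQ', ← hP'']
    exact h'
  rcases Int.even_or_odd y with hy | hy
  · have hx : Odd x := by grind
    obtain ⟨a, rfl⟩ := hx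
    obtain ⟨b, rfl⟩ := hy
    have h1 : IsSnFraction δ 1 0 (X * 1 ^ 2) (1 ^ 2) := by simpa using IsSnFraction.one
    rcases Int.even_or_odd (a + b) with hab | hab
    · have := hstep (x₁ := a) (y₁ := b) (x₂ := a + 1) (y₂ := b) (N := 1) (D := 1) one_ne_zero (by grind)
        (by simpa using h1.neg)
      convert this using 5; ring
    · have := hstep (x₁ := a + 1) (y₁ := b) (x₂ := a) (y₂ := b) (N := 1) (D := 1) one_ne_zero hab
        (by simpa using h1)
      convert this using 5; ring
  · have hx : Even x := by grind
    obtain ⟨a, rfl⟩ := hx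
    obtain ⟨b, rfl⟩ := hy
    have h1 := isSnFraction_delta hδ
    have hN : deltaNum δ ≠ 0 := by
      intro h
      have := congrArg (fun f => coeff f 3) h
      simp only [deltaNum, coeff_add, coeff_C_mul, coeff_X, coeff_X_pow, coeff_C, coeff_zero] at this
      norm_num at this
    rcases Int.even_or_odd (a + b) with hab | hab
    · have := hstep (x₁ := a) (y₁ := b) (x₂ := a) (y₂ := b + 1) hN (by grind)
        (by simpa using h1.neg)
      convert this using 5; ring
    · have := hstep (x₁ := a) (y₁ := b + 1) (x₂ := a) (y₂ := b) hN hab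
        (by simpa using h1)
      convert this using 5; ring

/-- Multiplication by `x + y δ` of odd norm `2 h + 1`. -/
theorem exists_odd_multiplication (hδ : δ ^ 2 = -7) {x y : ℤ} {h : ℕ}
    (hm : x ^ 2 + 7 * y ^ 2 = 2 * h + 1) :
    ∃ (n d : k[X]) (ε : k), (ε = 1 ∨ ε = -1) ∧ d ≠ 0 ∧
      (∀ j ≤ h, n.coeff j = ε * d.coeff (h - j)) ∧
      (∀ j, h < j → n.coeff j = 0 ∧ d.coeff j = 0) ∧
      (n * d + 2 * X * (derivative n * d - n * derivative d)) ^ 2 *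
        (1 - C (6 * δ) * X + X ^ 2) =
      C (x + y * δ) ^ 2 * (d ^ 4 - C (6 * δ) * X * n ^ 2 * d ^ 2 + X ^ 2 * n ^ 4) := by
  have ho : Odd (x + y) := by
    have h1 : Odd (x ^ 2 + 7 * y ^ 2) := ⟨h, hm⟩
    have : x + y = (x ^ 2 + 7 * y ^ 2) - (x * (x - 1) + (y * (y - 1) + 6 * y ^ 2)) := by ring
    rw [this]
    exact h1.sub_even ((Int.even_mul_pred_self x).add ((Int.even_mul_pred_self y).add
      ⟨3 * y ^ 2, by ring⟩))
  obtain ⟨n, d, hf⟩ := exists_eq_sq_of_odd hδ ho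
  have hd0 : d ≠ 0 := fun hd => hf.ne_zero (by rw [hd]; ring)
  obtain ⟨n', hn', hS⟩ : ∃ n' : k[X], (n' = n ∨ n' = -n) ∧
      snMul (3 * δ) (x + y * δ) * evalSnSq (3 * δ) d = snMul (3 * δ) 1 * evalSnSq (3 * δ) n' := by
    have h1 := hf.eval
    rw [map_pow, map_mul, map_pow, evalSnSq_X, ← mul_pow, ← mul_pow] at h1
    rcases sq_eq_sq_iff_eq_or_eq_neg.1 h1 with h2 | h2
    · exact ⟨n, Or.inl rfl, by rw [← h2]; ring⟩
    · refine ⟨-n, Or.inr rfl, ?_⟩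
      rw [map_neg]
      linear_combination h2
  have hf' : IsSnFraction δ x y (X * n' ^ 2) (d ^ 2) := by
    rcases hn' with rfl | rfl
    · exact hf
    · rwa [neg_sq]
  obtain ⟨ε, hε, hr⟩ : ∃ ε : k, (ε = 1 ∨ ε = -1) ∧
      laurentReciprocal h (C ε * d) = toLaurent n' := by
    have h1 := hf'.odd ho
    rw [hm, ← mul_one (d ^ 2), laurentReciprocal.mul, laurentReciprocal.sq, map_mul, map_pow,
      mul_comm] at h1
    have h2 : laurentReciprocal 1 (1 : k[X]) = toLaurent X := by simp [laurentReciprocal]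
    rw [h2] at h1
    have h3 := mul_left_cancel₀ (toLaurent_ne_zero.2 X_ne_zero) h1
    rcases sq_eq_sq_iff_eq_or_eq_neg.1 h3 with h4 | h4
    · exact ⟨1, Or.inl rfl, by simpa using h4⟩
    · refine ⟨-1, Or.inr rfl, ?_⟩
      rw [laurentReciprocal.const_mul, h4]
      simp
  obtain ⟨c1, c2⟩ := coeff_of_laurentReciprocal_eq hr
  have hε0 : ε ≠ 0 := by rcases hε with rfl | rfl <;> simp
  refine ⟨n', d, ε, hε, hd0, fun j hj => by rw [c1 j hj, coeff_C_mul], fun j hj => ?_, ?_⟩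
  · have := c2 j hj
    rw [coeff_C_mul] at this
    exact ⟨this.1, (mul_eq_zero.1 this.2).resolve_left hε0⟩
  · apply evalSnSq_injective (3 * δ)
    have hdS := congrArg (PowerSeries.derivative k) hS
    have hw := cdMul_sq (3 * δ) 1
    have hW := cdMul_sq (3 * δ) (x + y * δ)
    simp only [Derivation.leibniz, smul_eq_mul, derivative_snMul, derivative_evalSnSq, map_one,
      one_mul] at hdS
    simp only [map_mul, map_add, map_sub, map_pow, map_ofNat, map_one, evalSnSq_X,
      evalSnSq_C] at hdS hw hW ⊢
    generalize PowerSeries.C δ = D at *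
    generalize (PowerSeries.C (x : k) + PowerSeries.C (y : k) * D) = p at *
    generalize snMul (3 * δ) 1 = s at *
    generalize cdMul (3 * δ) 1 = w at *
    generalize snMul (3 * δ) (x + y * δ) = S at *
    generalize cdMul (3 * δ) (x + y * δ) = W at *
    generalize evalSnSq (3 * δ) d = d₀ at *
    generalize evalSnSq (3 * δ) n' = n₀ at *
    generalize evalSnSq (3 * δ) (derivative d) = d₁ at *
    generalize evalSnSq (3 * δ) (derivative n') = n₁ at *
    have key : p * W * d₀ ^ 2 = w * (n₀ * d₀ + 2 * s ^ 2 * (n₁ * d₀ - n₀ * d₁)) := by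
      linear_combination d₀ * hdS - 2 * s * w * d₁ * hS
    obtain ⟨M, hM⟩ : ∃ M, M = n₀ * d₀ + 2 * s ^ 2 * (n₁ * d₀ - n₀ * d₁) := ⟨_, rfl⟩
    rw [← hM] at key ⊢
    linear_combination (-M ^ 2) * hw - (p * W * d₀ ^ 2 + w * M) * key + p ^ 2 * d₀ ^ 4 * hW
      + p ^ 2 * (S ^ 2 * d₀ ^ 2 + s ^ 2 * n₀ ^ 2 - 6 * D * d₀ ^ 2) * (S * d₀ + s * n₀) * hS

end

section
open Polynomial

/-- A nonzero solution of `n * d + 2 X (n' d - n d') = 0` over a domain of characteristic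
`2 h + 1`, with `n` and `d` of degree at most `h`, has constant `d`. -/
theorem natDegree_eq_zero_of_wronskian {F : Type*} [CommRing F] [IsDomain F] {p h : ℕ} [CharP F p]
    (hh : p = 2 * h + 1) {n d : F[X]} (hn0 : n ≠ 0) (hd0 : d ≠ 0) (hn : n.natDegree ≤ h)
    (hd : d.natDegree ≤ h) (H : n * d + 2 * X * (derivative n * d - n * derivative d) = 0) :
    d.natDegree = 0 := by
  have hX : ∀ f : F[X], ∀ j, (X * derivative f).coeff j = j * f.coeff j := by
    intro f j
    rcases j with _ | j
    · simp
    · rw [coeff_X_mul, coeff_derivative]; push_cast; ring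
  have hdeg : ∀ f : F[X], (X * derivative f).natDegree ≤ f.natDegree := by
    intro f
    rw [natDegree_le_iff_coeff_eq_zero]
    intro N hN
    rw [hX, coeff_eq_zero_of_natDegree_lt hN, mul_zero]
  have h1 : n * d + C 2 * (X * derivative n * d) - C 2 * (n * (X * derivative d)) = 0 := by
    rw [← H, show (C 2 : F[X]) = 2 from map_ofNat C 2]
    ring
  have h2 := congrArg (fun f => coeff f (n.natDegree + d.natDegree)) h1
  simp only [coeff_sub, coeff_add, coeff_C_mul, coeff_zero] at h2
  rw [coeff_mul_add_eq_of_natDegree_le le_rfl le_rfl, coeff_mul_add_eq_of_natDegree_le (hdeg n) le_rfl,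
    coeff_mul_add_eq_of_natDegree_le le_rfl (hdeg d), hX, hX] at h2
  have h3 : n.leadingCoeff * d.leadingCoeff * ((1 + 2 * n.natDegree - 2 * d.natDegree : ℤ) : F)
      = 0 := by
    rw [← h2]
    simp only [leadingCoeff]
    push_cast
    ring
  have h4 := (mul_eq_zero.1 h3).resolve_left
    (mul_ne_zero (leadingCoeff_ne_zero.2 hn0) (leadingCoeff_ne_zero.2 hd0))
  rw [CharP.intCast_eq_zero_iff F p] at h4
  obtain ⟨c, hc⟩ := h4
  by_contra hne
  have hlt : c < 1 := by
    by_contra hcon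
    have : (p : ℤ) * 1 ≤ p * c := mul_le_mul_of_nonneg_left (by omega) (by omega)
    omega
  have hgt : -1 < c := by
    by_contra hcon
    have : (p : ℤ) * c ≤ p * (-1) := mul_le_mul_of_nonneg_left (by omega) (by omega)
    omega
  obtain rfl : c = 0 := by omega
  omega

end

section
open PowerSeries

theorem sq_dvd_coeff_sub_of_multiplication {R : Type*} [CommRing R] [IsDomain R] {q : R} {h : ℕ}
    (hq : q = 2 * h + 1) (hq0 : q ≠ 0) (h2 : IsUnit (2 : R)) {δ v u ε d₀ : R} (hvu : v * u = 1)
    (hε : ε ^ 2 = 1) (hd₀ : IsUnit d₀) {n₁ d₁ n d G : R⟦X⟧} (hn₁ : coeff h n₁ = 0)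
    (hn : n = C q * n₁ + C (ε * d₀) * X ^ h) (hd : d = C d₀ + C q * X * d₁)
    (H : (n * d + 2 * X * (d⁄dX R n * d - n * d⁄dX R d)) ^ 2 * (1 - C (6 * δ) * X + X ^ 2) =
      C (q * v) ^ 2 * (d ^ 4 - C (6 * δ) * X * n ^ 2 * d ^ 2 + X ^ 2 * n ^ 4))
    (hG : G ^ 2 * (1 - C (6 * δ) * X + X ^ 2) = 1) (hG0 : constantCoeff G = 1) :
    q ^ 2 ∣ coeff h G ^ 2 - u ^ 2 := by
  have hdu : IsUnit d := by
    rw [PowerSeries.isUnit_iff_constantCoeff, hd]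
    simpa using hd₀
  obtain ⟨e, he⟩ := hdu.exists_right_inv
  obtain ⟨ρ, hρ⟩ : ∃ ρ, ρ = n * e := ⟨_, rfl⟩
  obtain ⟨ρ₁, hρ₁⟩ : ∃ ρ, ρ = n₁ * e := ⟨_, rfl⟩
  obtain ⟨ρ₂, hρ₂⟩ : ∃ ρ, ρ = C (ε * d₀) * e := ⟨_, rfl⟩
  have hρ12 : ρ = C q * ρ₁ + X ^ h * ρ₂ := by rw [hρ, hρ₁, hρ₂, hn]; ring
  have he' : d⁄dX R e = - (e ^ 2 * d⁄dX R d) := by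
    have := congrArg (d⁄dX R) he
    simp only [Derivation.leibniz, smul_eq_mul, derivative_one] at this
    linear_combination e * this - d⁄dX R e * he
  have hρ' : d⁄dX R ρ = d⁄dX R n * e - n * e ^ 2 * d⁄dX R d := by
    rw [hρ]
    simp only [Derivation.leibniz, smul_eq_mul, he']
    ring
  obtain ⟨f, hf⟩ : ∃ f, f = 1 - C (6 * δ) * X + X ^ 2 := ⟨_, rfl⟩
  rw [← hf] at hG H
  have key : (ρ + 2 * X * d⁄dX R ρ) ^ 2 * f
      = C (q * v) ^ 2 * (1 - C (6 * δ) * X * ρ ^ 2 + X ^ 2 * ρ ^ 4) := by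
    have h1 : ρ + 2 * X * d⁄dX R ρ = e ^ 2 * (n * d + 2 * X * (d⁄dX R n * d - n * d⁄dX R d)) := by
      rw [hρ', hρ]
      linear_combination (-n * e - 2 * X * d⁄dX R n * e) * he
    have h4 : d ^ 4 * e ^ 4 = 1 := by rw [← mul_pow, he, one_pow]
    have h5 : d ^ 2 * e ^ 2 = 1 := by rw [← mul_pow, he, one_pow]
    rw [h1, hρ]
    linear_combination e ^ 4 * H + C (q * v) ^ 2 * h4
      - C (q * v) ^ 2 * C (6 * δ) * X * n ^ 2 * e ^ 2 * h5
  obtain ⟨Ψ, hΨ⟩ : ∃ Ψ, Ψ = ρ₁ + 2 * X * d⁄dX R ρ₁ + X ^ h * ρ₂ := ⟨_, rfl⟩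
  have hΨρ : ρ + 2 * X * d⁄dX R ρ = C q * Ψ + X ^ (h + 1) * (2 * d⁄dX R ρ₂) := by
    have hXh : X * d⁄dX R (X ^ h : R⟦X⟧) = (h : R⟦X⟧) * X ^ h := by
      rw [derivative_pow, derivative_X]
      rcases h with _ | h
      · simp
      · simp only [Nat.add_sub_cancel]; ring
    have hCq : (C q : R⟦X⟧) = 2 * h + 1 := by
      rw [hq]; simp only [map_add, map_mul, map_ofNat, map_natCast, map_one]
    rw [hρ12, hΨ]
    simp only [map_add, Derivation.leibniz, smul_eq_mul, derivative_C]
    linear_combination 2 * ρ₂ * hXh - X ^ h * ρ₂ * hCq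
  obtain ⟨V, hV⟩ : ∃ V, X ^ (h + 1) * V = C (q ^ 2) *
      (Ψ ^ 2 * f - C v ^ 2 - C (q ^ 2) * (C v ^ 2 * (- C (6 * δ) * X * ρ₁ ^ 2
        + C q ^ 2 * X ^ 2 * ρ₁ ^ 4))) := by
    rw [hΨρ, hρ12] at key
    simp only [map_mul, map_pow] at key ⊢
    refine ⟨C q ^ 2 * C v ^ 2 * (-(C 6 * C δ) * (2 * C q * ρ₁ * ρ₂ + X ^ h * ρ₂ ^ 2) + 
      X * ρ₂ * (2 * C q * ρ₁ + X ^ h * ρ₂) * (2 * C q ^ 2 * ρ₁ ^ 2 + X ^ h * ρ₂ * 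
        (2 * C q * ρ₁ + X ^ h * ρ₂)))
      - (2 * C q * Ψ + X ^ (h + 1) * (2 * d⁄dX R ρ₂)) * (2 * d⁄dX R ρ₂) * f, ?_⟩
    rw [pow_succ] at *
    linear_combination (-1 : R⟦X⟧) * key
  obtain ⟨V', hV'⟩ : X ^ (h + 1) ∣ Ψ ^ 2 * f - C v ^ 2 - C (q ^ 2) * (C v ^ 2 *
      (- C (6 * δ) * X * ρ₁ ^ 2 + C q ^ 2 * X ^ 2 * ρ₁ ^ 4)) := by
    rw [X_pow_dvd_iff]
    intro m hm
    have := X_pow_dvd_iff.1 ⟨V, hV.symm⟩ m hm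
    rw [coeff_C_mul] at this
    exact (mul_eq_zero.1 this).resolve_left (pow_ne_zero 2 hq0)
  have hΨ0 : constantCoeff Ψ ^ 2 = v ^ 2 := by
    have := congrArg constantCoeff key
    rw [hΨρ, hf] at this
    simp [pow_succ (X : R⟦X⟧) h] at this
    apply mul_left_cancel₀ (pow_ne_zero 2 hq0)
    linear_combination this
  obtain ⟨s, hs, hsv⟩ : ∃ s : R, s ^ 2 = 1 ∧ constantCoeff Ψ = s * v := by
    rcases sq_eq_sq_iff_eq_or_eq_neg.1 hΨ0 with h1 | h1
    · exact ⟨1, by ring, by rw [h1]; ring⟩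
    · exact ⟨-1, by ring, by rw [h1]; ring⟩
  have hunit : IsUnit (Ψ + C (s * v) * G) := by
    rw [PowerSeries.isUnit_iff_constantCoeff]
    have : constantCoeff (Ψ + C (s * v) * G) = 2 * (s * v) := by
      rw [map_add, map_mul, hsv, hG0, constantCoeff_C]; ring
    rw [this]
    exact h2.mul ((IsUnit.of_mul_eq_one s (by rw [← sq, hs])).mul (IsUnit.of_mul_eq_one u hvu))
  obtain ⟨i, hi⟩ := hunit.exists_right_inv
  have hdiff : Ψ - C (s * v) * G = C (q ^ 2) * ((C v ^ 2 * (- C (6 * δ) * X * ρ₁ ^ 2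
      + C q ^ 2 * X ^ 2 * ρ₁ ^ 4)) * G ^ 2 * i) + X ^ (h + 1) * (V' * G ^ 2 * i) := by
    have hCs : (C s : R⟦X⟧) ^ 2 = 1 := by rw [← map_pow, hs, map_one]
    rw [map_mul C s v] at *
    linear_combination (-(Ψ - C s * C v * G)) * hi + i * G ^ 2 * hV' - i * Ψ ^ 2 * hG
      - i * C v ^ 2 * G ^ 2 * hCs
  obtain ⟨a, ha⟩ : q ^ 2 ∣ coeff h Ψ - s * v * coeff h G := by
    have := congrArg (coeff h) hdiff
    rw [map_sub, coeff_C_mul, map_add, coeff_C_mul, coeff_X_pow_mul', if_neg (by omega),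
      add_zero] at this
    exact ⟨_, this⟩
  have hρ₂0 : constantCoeff ρ₂ = ε := by
    have := congrArg constantCoeff he
    rw [hd] at this
    simp at this
    rw [hρ₂, map_mul, constantCoeff_C]
    linear_combination ε * this
  obtain ⟨b, hb⟩ : q ∣ coeff h ρ₁ := by
    have h1 : C d₀ * ρ₁ = n₁ - C q * (X * d₁ * e * n₁) := by
      rw [hρ₁]
      rw [hd] at he
      linear_combination n₁ * he
    have h3 := congrArg (coeff h) h1
    rw [coeff_C_mul, map_sub, hn₁, coeff_C_mul, zero_sub] at h3
    exact (hd₀.dvd_mul_left).1 ⟨_, by rw [h3, ← mul_neg]⟩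
  have hΨh : coeff h Ψ = q * coeff h ρ₁ + ε := by
    have h1 : coeff h (X ^ h * ρ₂) = ε := by
      rw [coeff_X_pow_mul', if_pos le_rfl, Nat.sub_self, coeff_zero_eq_constantCoeff_apply, hρ₂0]
    have h3 : coeff h (2 * X * d⁄dX R ρ₁) = 2 * h * coeff h ρ₁ := by
      rw [mul_assoc, ← map_ofNat C 2, coeff_C_mul]
      rcases h with _ | h
      · simp
      · rw [coeff_succ_X_mul, coeff_derivative]; push_cast; ring
    rw [hΨ, map_add, map_add, h1, h3, hq]
    ring
  refine ⟨(b - a) * u * (s * coeff h G + ε * u), ?_⟩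
  rw [hΨh, hb] at ha
  linear_combination (s * coeff h G + ε * u) * (-u * ha - s * coeff h G * hvu)
    - coeff h G ^ 2 * hs + u ^ 2 * hε

end

section
open Polynomial
variable {p : ℕ} [Fact p.Prime]

theorem toZMod_eq_zero_iff_dvd (x : ℤ_[p]) : PadicInt.toZMod x = 0 ↔ (p : ℤ_[p]) ∣ x := by
  rw [← RingHom.mem_ker, PadicInt.ker_toZMod, PadicInt.maximalIdeal_eq_span_p,
    Ideal.mem_span_singleton]

theorem exists_primitive_padicInt_multiple {d : ℚ_[p][X]} (hd : d ≠ 0) :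
    ∃ (c : ℚ_[p]) (D : ℤ_[p][X]) (i : ℕ), D.map PadicInt.Coe.ringHom = C c * d ∧
      D.coeff i = 1 := by
  obtain ⟨i, hi, hmax⟩ := d.support.exists_max_image (fun j => ‖d.coeff j‖)
    (nonempty_support_iff.2 hd)
  have hi0 : d.coeff i ≠ 0 := mem_support_iff.1 hi
  have hlift : C (d.coeff i)⁻¹ * d ∈ lifts (PadicInt.Coe.ringHom (p := p)) := by
    rw [lifts_iff_coeff_lifts]
    intro j
    rw [coeff_C_mul]
    have hle : ‖(d.coeff i)⁻¹ * d.coeff j‖ ≤ 1 := by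
      rw [norm_mul, norm_inv, inv_mul_le_one₀ (norm_pos_iff.2 hi0)]
      by_cases hj : d.coeff j = 0
      · rw [hj, norm_zero]; exact norm_nonneg _
      · exact hmax j (mem_support_iff.2 hj)
    exact ⟨⟨_, hle⟩, rfl⟩
  obtain ⟨D, hD⟩ := (mem_lifts _).1 hlift
  refine ⟨_, D, i, hD, ?_⟩
  have := congrArg (fun f => coeff f i) hD
  simp only [coeff_map, coeff_C_mul, inv_mul_cancel₀ hi0] at this
  exact Subtype.coe_injective this

/-- A root of `X ^ 2 - 2 x X + p` divisible by `p`. -/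
theorem exists_dvd_root {x : ℤ} (hp2 : p ≠ 2) (hx : ¬ (p : ℤ) ∣ x) :
    ∃ π : ℤ_[p], π ^ 2 - 2 * x * π + p = 0 ∧ (p : ℤ_[p]) ∣ π := by
  have hp : p.Prime := Fact.out
  have h2x : ‖((-2 * x : ℤ) : ℤ_[p])‖ = 1 := by
    refine (PadicInt.norm_le_one _).antisymm (not_lt.1 ?_)
    rw [PadicInt.norm_int_lt_one_iff_dvd, neg_mul, dvd_neg,
      (Nat.prime_iff_prime_int.1 hp).dvd_mul]
    rintro (h | h)
    · exact hp2 ((Nat.prime_dvd_prime_iff_eq hp Nat.prime_two).1 (by exact_mod_cast h))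
    · exact hx h
  have hder : aeval (0 : ℤ_[p]) (derivative (X ^ 2 - C (2 * x) * X + C (p : ℤ) : ℤ[X])) =
      ((-2 * x : ℤ) : ℤ_[p]) := by
    rw [derivative_add, derivative_sub, derivative_X_pow, derivative_C_mul, derivative_X,
      derivative_C]
    simp only [map_add, map_sub, map_mul, map_pow, map_natCast, map_ofNat, map_zero, map_one,
      aeval_X, aeval_C]
    simp
  obtain ⟨π, h1, h2, -⟩ := hensels_lemma (p := p) (R := ℤ) (F := X ^ 2 - C (2 * x) * X + C (p : ℤ))
    (a := 0) (by
      rw [hder, h2x]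
      simp only [map_add, map_sub, map_mul, map_pow, aeval_X, aeval_C]
      simpa using PadicInt.norm_lt_one_iff_dvd (p : ℤ_[p]) |>.2 dvd_rfl)
  rw [hder, h2x, sub_zero, PadicInt.norm_lt_one_iff_dvd] at h2
  refine ⟨π, ?_, h2⟩
  simp only [map_add, map_sub, map_mul, map_pow, aeval_X, aeval_C, map_ofNat] at h1
  simpa using h1

theorem not_dvd_of_eq_sq_add {x y : ℤ} (h7 : p ≠ 7) (hxy : (p : ℤ) = x ^ 2 + 7 * y ^ 2) :
    ¬ (p : ℤ) ∣ x ∧ ¬ (p : ℤ) ∣ y := by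
  have hp : p.Prime := Fact.out
  have hpi := Nat.prime_iff_prime_int.1 hp
  have h1 : ¬ ((p : ℤ) ∣ x ∧ (p : ℤ) ∣ y) := by
    rintro ⟨⟨a, rfl⟩, b, rfl⟩
    have : (p : ℤ) * (p * (a ^ 2 + 7 * b ^ 2)) = p * 1 := by linear_combination -hxy
    have := mul_left_cancel₀ hpi.ne_zero this
    exact hpi.not_isUnit (IsUnit.of_mul_eq_one _ this)
  constructor
  · intro hx
    refine h1 ⟨hx, ?_⟩
    have : (p : ℤ) ∣ 7 * y ^ 2 := by
      rw [show 7 * y ^ 2 = p - x ^ 2 by linear_combination -hxy]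
      exact dvd_sub dvd_rfl (dvd_pow hx two_ne_zero)
    rcases hpi.dvd_or_dvd this with h | h
    · exact absurd ((Nat.prime_dvd_prime_iff_eq hp (by norm_num)).1 (by exact_mod_cast h)) h7
    · exact hpi.dvd_of_dvd_pow h
  · intro hy
    refine h1 ⟨?_, hy⟩
    apply hpi.dvd_of_dvd_pow (n := 2)
    rw [show x ^ 2 = p - 7 * y ^ 2 by linear_combination -hxy]
    exact dvd_sub dvd_rfl ((dvd_pow hy two_ne_zero).mul_left 7)

theorem exists_padicInt_multiplication {x y : ℤ} {h : ℕ} {δ : ℤ_[p]} (hδ : δ ^ 2 = -7)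
    (hm : x ^ 2 + 7 * y ^ 2 = 2 * h + 1) :
    ∃ (n d : ℤ_[p][X]) (ε : ℤ_[p]) (i : ℕ), ε ^ 2 = 1 ∧ d.coeff i = 1 ∧
      (∀ j ≤ h, n.coeff j = ε * d.coeff (h - j)) ∧
      (∀ j, h < j → n.coeff j = 0 ∧ d.coeff j = 0) ∧
      (n * d + 2 * X * (derivative n * d - n * derivative d)) ^ 2 *
        (1 - C (6 * δ) * X + X ^ 2) =
      C (x + y * δ) ^ 2 * (d ^ 4 - C (6 * δ) * X * n ^ 2 * d ^ 2 + X ^ 2 * n ^ 4) := by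
  have hinj : Function.Injective (PadicInt.Coe.ringHom (p := p)) := Subtype.coe_injective
  have hφ : PadicInt.Coe.ringHom δ ^ 2 = -7 := by
    rw [← map_pow, hδ, map_neg, map_ofNat]
  obtain ⟨n, d, ε, hε, hd, hnd, hz, H⟩ := exists_odd_multiplication hφ hm
  obtain ⟨c, D, i, hD, hi⟩ := exists_primitive_padicInt_multiple hd
  obtain ⟨ε', hε', hε''⟩ : ∃ ε' : ℤ_[p], ε' ^ 2 = 1 ∧ PadicInt.Coe.ringHom ε' = ε := by
    rcases hε with rfl | rfl
    · exact ⟨1, by ring, by simp⟩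
    · exact ⟨-1, by ring, by simp⟩
  have hDc : ∀ j, PadicInt.Coe.ringHom (D.coeff j) = c * d.coeff j := fun j => by
    rw [← coeff_map, hD, coeff_C_mul]
  obtain ⟨N, hN⟩ : ∃ N : ℤ_[p][X], N.map PadicInt.Coe.ringHom = C c * n := by
    rw [← mem_lifts, lifts_iff_coeff_lifts]
    intro j
    rw [coeff_C_mul]
    rcases le_or_gt j h with hj | hj
    · refine ⟨ε' * D.coeff (h - j), ?_⟩
      rw [map_mul, hDc, hε'', hnd j hj]; ring
    · exact ⟨0, by rw [(hz j hj).1, map_zero, mul_zero]⟩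
  have hNc : ∀ j, PadicInt.Coe.ringHom (N.coeff j) = c * n.coeff j := fun j => by
    rw [← coeff_map, hN, coeff_C_mul]
  refine ⟨N, D, ε', i, hε', hi, fun j hj => hinj ?_, fun j hj => ⟨hinj ?_, hinj ?_⟩,
    map_injective _ hinj ?_⟩
  · rw [map_mul, hNc, hDc, hε'', hnd j hj]; ring
  · rw [hNc, (hz j hj).1, map_zero, mul_zero]
  · rw [hDc, (hz j hj).2, map_zero, mul_zero]
  · simp only [Polynomial.map_mul, Polynomial.map_add, Polynomial.map_sub, Polynomial.map_pow,
      Polynomial.map_one, Polynomial.map_ofNat, map_X, map_C, ← derivative_map, hN, hD,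
      derivative_C_mul, map_add, map_mul, map_ofNat, map_intCast, Polynomial.map_intCast] at H ⊢
    linear_combination C c ^ 4 * H

theorem sq_dvd_of_split {h : ℕ} (hh : p = 2 * h + 1) (h7 : p ≠ 7) {x y : ℤ}
    (hxy : (p : ℤ) = x ^ 2 + 7 * y ^ 2) :
    (p : ℤ) ^ 2 ∣ ∑ k ∈ range (h + 1), shiftedLegendrePoly.clausenCoeff h k * (-16) ^ k - (4 * x ^ 2 - 2 * p) := by
  have hp : p.Prime := Fact.out
  have hp2 : p ≠ 2 := by omega
  have hprime : Prime (p : ℤ_[p]) := PadicInt.prime_p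
  have hunit : ∀ z : ℤ_[p], ¬ (p : ℤ_[p]) ∣ z → IsUnit z := fun z hz => by
    rw [← PadicInt.norm_lt_one_iff_dvd, ← PadicInt.not_isUnit_iff, not_not] at hz
    exact hz
  have h2u : IsUnit (2 : ℤ_[p]) := by
    apply hunit
    have := PadicInt.pow_p_dvd_int_iff (p := p) 1 2
    simp only [pow_one, Int.cast_ofNat] at this
    rw [this]
    intro h
    exact hp2 ((Nat.prime_dvd_prime_iff_eq hp Nat.prime_two).1 (by exact_mod_cast h))
  obtain ⟨hx, hy⟩ := not_dvd_of_eq_sq_add h7 hxy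
  have hyu : IsUnit (y : ℤ_[p]) := by
    apply hunit
    have := PadicInt.pow_p_dvd_int_iff (p := p) 1 y
    simp only [pow_one] at this
    rwa [this]
  obtain ⟨π, hπ, v, hv⟩ := exists_dvd_root hp2 hx
  obtain ⟨y', hy'⟩ := hyu.exists_right_inv
  obtain ⟨half, hhalf⟩ := h2u.exists_right_inv
  have hxyp : (p : ℤ_[p]) = x ^ 2 + 7 * y ^ 2 := by exact_mod_cast congrArg (Int.cast : ℤ → ℤ_[p]) hxy
  obtain ⟨δ, hδ⟩ : ∃ δ, δ = (π - x) * y' := ⟨_, rfl⟩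
  have hπδ : (x : ℤ_[p]) + y * δ = π := by rw [hδ]; linear_combination (π - x) * hy'
  have hδ2 : δ ^ 2 = -7 := by
    rw [hδ]
    linear_combination y' ^ 2 * hπ - y' ^ 2 * hxyp - 7 * (y * y' + 1) * hy'
  have hvu : v * (2 * x - π) = 1 := by
    apply mul_left_cancel₀ hprime.ne_zero
    rw [← mul_assoc, ← hv]
    linear_combination -hπ
  obtain ⟨n, d, ε, i, hε, hi, hnd, hz, H⟩ := exists_padicInt_multiplication hδ2
    (x := x) (y := y) (h := h) (by rw [← hxy, hh]; push_cast; ring)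
  rw [hπδ, hv] at H
  have hεu : IsUnit ε := IsUnit.of_mul_eq_one ε (by rw [← sq, hε])
  have hd1 : (d.map PadicInt.toZMod).natDegree = 0 := by
    have hd0 : d.map (PadicInt.toZMod (p := p)) ≠ 0 := by
      intro h0
      have := congrArg (fun f => coeff f i) h0
      simp [hi] at this
    have hih : i ≤ h := by
      by_contra hcon
      have := (hz i (by omega)).2
      rw [hi] at this
      exact one_ne_zero this
    have hn0 : n.map (PadicInt.toZMod (p := p)) ≠ 0 := by
      intro h0
      have := congrArg (fun f => coeff f (h - i)) h0
      simp only [coeff_map, coeff_zero, hnd (h - i) (Nat.sub_le _ _), Nat.sub_sub_self hih, hi,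
        mul_one] at this
      exact (hεu.map PadicInt.toZMod).ne_zero this
    refine natDegree_eq_zero_of_wronskian hh hn0 hd0 ?_ ?_ ?_
    · rw [natDegree_le_iff_coeff_eq_zero]
      intro N hN
      rw [coeff_map, (hz N hN).1, map_zero]
    · rw [natDegree_le_iff_coeff_eq_zero]
      intro N hN
      rw [coeff_map, (hz N hN).2, map_zero]
    · have hf0 : (1 - C (6 * PadicInt.toZMod δ) * X + X ^ 2 : (ZMod p)[X]) ≠ 0 := by
        intro h0
        have := congrArg (fun f => coeff f 0) h0
        simp at this
      have := congrArg (Polynomial.map (PadicInt.toZMod (p := p))) H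
      simp only [Polynomial.map_mul, Polynomial.map_add, Polynomial.map_sub, Polynomial.map_pow,
        Polynomial.map_one, Polynomial.map_ofNat, map_X, map_C, ← derivative_map, map_mul,
        map_ofNat, map_natCast, Polynomial.map_natCast, CharP.cast_eq_zero, zero_mul] at this
      rw [zero_pow two_ne_zero, zero_mul] at this
      rw [map_mul, map_ofNat] at hf0
      exact pow_eq_zero_iff two_ne_zero |>.1 ((mul_eq_zero.1 this).resolve_right hf0)
  have hdj : ∀ j, j ≠ 0 → (p : ℤ_[p]) ∣ d.coeff j := by
    intro j hj
    rw [← toZMod_eq_zero_iff_dvd, ← coeff_map]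
    exact coeff_eq_zero_of_natDegree_lt (by omega)
  have hd0 : IsUnit (d.coeff 0) := by
    apply hunit
    intro h0
    have : (p : ℤ_[p]) ∣ d.coeff i := by
      rcases eq_or_ne i 0 with rfl | h1
      · exact h0
      · exact hdj i h1
    rw [hi] at this
    exact hprime.not_isUnit (isUnit_of_dvd_one this)
  obtain ⟨d₁, hd₁⟩ : ∃ d₁, d = C (d.coeff 0) + C (p : ℤ_[p]) * X * d₁ := by
    obtain ⟨d₁, hd₁⟩ := (C_dvd_iff_dvd_coeff (p : ℤ_[p]) d.divX).2 fun j => by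
      rw [coeff_divX]; exact hdj _ (by omega)
    refine ⟨d₁, ?_⟩
    conv_lhs => rw [← divX_mul_X_add d, hd₁]
    ring
  obtain ⟨n₁, hn₁⟩ : C (p : ℤ_[p]) ∣ n - C (ε * d.coeff 0) * X ^ h := by
    rw [C_dvd_iff_dvd_coeff]
    intro j
    rw [coeff_sub, coeff_C_mul_X_pow]
    rcases lt_trichotomy j h with hj | rfl | hj
    · rw [if_neg hj.ne, sub_zero, hnd j hj.le]
      exact (hdj _ (by omega)).mul_left ε
    · simp [hnd j le_rfl]
    · rw [if_neg hj.ne', (hz j hj).1, sub_zero]; exact dvd_zero _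
  have hn₁h : n₁.coeff h = 0 := by
    have := congrArg (fun f => coeff f h) hn₁
    rw [coeff_C_mul] at this
    simp only [coeff_sub, coeff_C_mul_X_pow, if_true, hnd h le_rfl, Nat.sub_self, sub_self] at this
    exact (mul_eq_zero.1 this.symm).resolve_left hprime.ne_zero
  have hz3 : 1 + 2 * ((3 * δ - 1) * half) = 3 * δ := by linear_combination (3 * δ - 1) * hhalf
  have hG := shiftedLegendrePoly.generating_function_aeval ((3 * δ - 1) * half)
  rw [hz3] at hG
  have hcoe := congrArg (Polynomial.coeToPowerSeries.ringHom (R := ℤ_[p])) H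
  simp only [map_add, map_sub, map_mul, map_pow, map_one, map_ofNat,
    Polynomial.coeToPowerSeries.ringHom_apply, Polynomial.coe_C, Polynomial.coe_X,
    ← PowerSeries.derivative_coe] at hcoe
  have key := sq_dvd_coeff_sub_of_multiplication (R := ℤ_[p]) (q := p) (h := h) (δ := δ) (v := v)
    (u := 2 * x - π) (ε := ε) (d₀ := d.coeff 0) (n₁ := n₁) (d₁ := d₁) (n := n) (d := d)
    (G := PowerSeries.mk fun j => aeval ((3 * δ - 1) * half) (shiftedLegendrePoly j))
    (by exact_mod_cast congrArg (Nat.cast : ℕ → ℤ_[p]) hh) hprime.ne_zero h2u hvu hε hd0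
    (by rw [Polynomial.coeff_coe, hn₁h])
    (by
      have := congrArg (Polynomial.coeToPowerSeries.ringHom (R := ℤ_[p])) hn₁
      simp only [map_sub, map_mul, map_pow,
        Polynomial.coeToPowerSeries.ringHom_apply, Polynomial.coe_C, Polynomial.coe_X] at this ⊢
      linear_combination this)
    (by
      have := congrArg (Polynomial.coeToPowerSeries.ringHom (R := ℤ_[p])) hd₁
      simp only [map_add, map_mul,
        Polynomial.coeToPowerSeries.ringHom_apply, Polynomial.coe_C, Polynomial.coe_X] at this ⊢
      exact this)
    (by
      simp only [map_mul, map_ofNat] at hcoe ⊢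
      exact hcoe)
    (by
      simp only [map_mul, map_ofNat] at hG ⊢
      linear_combination hG)
    (by simp [shiftedLegendrePoly.zero_eq])
  rw [PowerSeries.coeff_mk, shiftedLegendrePoly.aeval_sq (w := -16)] at key
  · have := PadicInt.pow_p_dvd_int_iff (p := p) 2
      (∑ k ∈ range (h + 1), shiftedLegendrePoly.clausenCoeff h k * (-16) ^ k - (4 * x ^ 2 - 2 * p))
    rw [← this]
    have h1 : (((∑ k ∈ range (h + 1), shiftedLegendrePoly.clausenCoeff h k * (-16) ^ k - (4 * x ^ 2 - 2 * p) : ℤ)) : ℤ_[p])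
        = (((∑ k ∈ range (h + 1), shiftedLegendrePoly.clausenCoeff h k * (-16) ^ k : ℤ) : ℤ_[p]) - (2 * x - π) ^ 2)
          - p ^ 2 * v ^ 2 := by
      rw [Int.cast_sub]
      push_cast
      rw [← mul_pow, ← hv]
      linear_combination 2 * hπ
    rw [h1]
    exact dvd_sub key (dvd_mul_right _ _)
  · push_cast
    linear_combination (9 * half ^ 2) * hδ2 - (3 * δ * half + 31 * half + 16) * hhalf

end

theorem stmt3 (p : ℕ) (hp : p.Prime) (h2 : p ≠ 2) (h3 : p ≠ 3) (h7 : p ≠ 7)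
    (S : ℤ) (hS : S = ∑ k ∈ range ((p - 1) / 2 + 1), (Nat.choose (2 * k) k : ℤ) ^ 3) :
    ((p % 7 = 3 ∨ p % 7 = 5 ∨ p % 7 = 6) → (p : ℤ) ^ 2 ∣ S) ∧
    ((p % 7 = 1 ∨ p % 7 = 2 ∨ p % 7 = 4) →
      ∀ x y : ℤ, (p : ℤ) = x ^ 2 + 7 * y ^ 2 →
        (p : ℤ) ^ 2 ∣ (S - (4 * x ^ 2 - 2 * p))) := by
  have hodd : p % 2 = 1 := hp.eq_two_or_odd.resolve_left h2
  obtain ⟨h, hh⟩ : ∃ h, p = 2 * h + 1 := ⟨p / 2, by omega⟩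
  rw [show (p - 1) / 2 = h by omega] at hS
  have hsum := shiftedLegendrePoly.sq_dvd_sum_clausenCoeff_sub hp hh
  rw [← hS] at hsum
  refine ⟨fun hmod => ?_, fun _ x y hxy => ?_⟩
  · have := dvd_sub (shiftedLegendrePoly.sq_dvd_of_inert hp hh h3 hmod) hsum
    rwa [sub_sub_cancel] at this
  · have : Fact p.Prime := ⟨hp⟩
    have := dvd_sub (sq_dvd_of_split hh h7 hxy) hsum
    rwa [sub_sub_sub_cancel_left] at this
end
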